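/- arXiv:2206.14224 — 2 statements merged into one kernel-verified Lean document; each statement's English description precedes it below -/
import Mathlib

section
/- Let E be a countable Borel equivalence relation on 𝓔_∞. Then there exists a Ramsey conull set 𝓓 ⊆ 𝓔_∞ such that for all B ∈ 𝓓 and all A, A' ∈ 𝓔_∞ with A ≤ B and A' ≤ B, one has A E A' if and only if A = A'. -/
open Classical

/-- The space `𝓔_∞` of equivalence relations on `ℕ` with infinitely many classes
(infinite partitions of `ℕ`). -/
def Einf : Type := {A : Setoid ℕ // Infinite (Quotient A)}

namespace Einf

/-- `Coarsen A B` (written `A ≤ B` in the paper): `A` is a coarsening of `B`,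
i.e. every `A`-class is a union of `B`-classes. -/
def Coarsen (A B : Einf) : Prop := ∀ i j : ℕ, B.1 i j → A.1 i j

/-- `μ_n(A)`: the `(n+1)`-st smallest minimal representative of an `A`-class. -/
noncomputable def mu (A : Einf) (n : ℕ) : ℕ :=
  Nat.nth (fun k => ∀ m, A.1 m k → k ≤ m) n

/-- `𝓔_∞^fin`: equivalence relations on initial segments `{0,…,k−1}` of `ℕ`. -/
def FinApprox : Type := Σ k : ℕ, Setoid (Fin k)

/-- `r_n(A)`: the restriction of `A` to `{0,…,μ_n(A)−1}`. -/
noncomputable def rn (A : Einf) (n : ℕ) : FinApprox :=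
  ⟨A.mu n, Setoid.comap (fun i => (i : ℕ)) A.1⟩

/-- `s ⊑ A`: `s` is an initial approximation of `A`, i.e. `s = r_n(A)` for some `n`. -/
def InitSeg (s : FinApprox) (A : Einf) : Prop := ∃ n, rn A n = s

/-- The Ellentuck cube `[s, A] = {B ∈ 𝓔_∞ : s ⊑ B and B ≤ A}`. -/
def cube (s : FinApprox) (A : Einf) : Set Einf := {B | InitSeg s B ∧ Coarsen B A}

/-- The identification of `𝓔_∞` with `𝓒𝓢 ⊆ 2^{ℕ×ℕ}`: `toCS A n m = 1` iff
`m` is `A`-equivalent to `μ_n(A)` (so the `n`-th row is the `A`-class of `μ_n(A)`). -/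
noncomputable def toCS (A : Einf) : ℕ → ℕ → Bool :=
  fun n m => decide (A.1 m (A.mu n))

/-- The Borel structure of the Polish topology on `𝓔_∞`, pulled back from `2^{ℕ×ℕ}`. -/
noncomputable instance : MeasurableSpace Einf :=
  MeasurableSpace.comap toCS inferInstance

/-- `𝓧 ⊆ 𝓔_∞` is Ramsey null. -/
def RamseyNull (X : Set Einf) : Prop :=
  ∀ s A, (cube s A).Nonempty → ∃ B ∈ cube s A, cube s B ∩ X = ∅

/-- `𝓧 ⊆ 𝓔_∞` is Ramsey conull: its complement is Ramsey null. -/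
def RamseyConull (X : Set Einf) : Prop := RamseyNull Xᶜ

end Einf

open Einf

/-!
By the Lusin-Novikov theorem, the graph of a relation `R` with countable sections is a countable
union of Borel sets `P` on which the first projection is injective. Fix such a `P`, a cube `[s, C]`
and a pair `i, j` below the length of `s`, and look at the pairs `(A, A') ∈ P` with `A ∈ [s, C]`
and `A'` coarser than the current partition. If `s` joins `i` and `j`, take a later class `p` and
join it to both. The set of those `A` whose partner in `P` joins `p` and `i` is the injective Borel
image of a Borel set, hence Borel, hence completely Ramsey: some cube `[s, D]` is contained in it
or disjoint from it. Replace `C` by a partition `C'` which joins `p` to only one of `i` and `j` and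
still satisfies `[s, C'] ⊆ [s, D]`. In the first case `A'` joins `p` and `i`, so choosing `j` for
`C'` forces `A'` to join `i` and `j`. In the second case choosing `i` for `C'` leaves no such pair.
Fusion over all `P`, `s`, `i` and `j` gives a partition below which `R A A'` implies `A' ≤ A`, and
symmetry turns this into `A = A'`.

That Borel sets are completely Ramsey is Ellentuck's theorem for infinite partitions: its pigeonhole
principle is the Carlson-Simpson lemma, which is obtained from an idempotent ultrafilter on variable
words, and combinatorial forcing makes the completely Ramsey sets a σ-algebra.
-/

/-! ### The Lusin-Novikov theorem -/

namespace LusinNovikov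

open MeasureTheory Set Topology Filter TopologicalSpace

section Small

variable {Z X : Type*} {p : Z → X}

/-- Some fibre of `p` meets every member of `t` inside `Y`. -/
def HitByFiber (p : Z → X) (t : Set (Set Z)) (Y : Set Z) : Prop :=
  ∃ x, ∀ V ∈ t, ∃ z ∈ V ∩ Y, p z = x

lemma HitByFiber.mono {t : Set (Set Z)} {Y Y' : Set Z} (h : HitByFiber p t Y) (hY : Y ⊆ Y') :
    HitByFiber p t Y' := by
  obtain ⟨x, hx⟩ := h
  exact ⟨x, fun V hV => (hx V hV).imp fun z hz => ⟨⟨hz.1.1, hY hz.1.2⟩, hz.2⟩⟩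

variable [MeasurableSpace Z]

/-- The σ-ideal generated by the Borel sets on which `p` is injective. -/
def IsSmall (p : Z → X) (S : Set Z) : Prop :=
  ∃ 𝒞 : Set (Set Z), 𝒞.Countable ∧ (∀ P ∈ 𝒞, MeasurableSet P ∧ InjOn p P) ∧ S ⊆ ⋃₀ 𝒞

/-- The family `t` is hit by a fibre of `p` inside every Borel set with small complement. The
solid finite families of basic open sets are the forcing conditions from which a perfect subset
of a fibre is built. -/
def IsSolid (p : Z → X) (t : Set (Set Z)) : Prop :=
  ∀ Y, MeasurableSet Y → IsSmall p Yᶜ → HitByFiber p t Y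

lemma isSmall_of_injOn {P : Set Z} (hP : MeasurableSet P) (hinj : InjOn p P) : IsSmall p P :=
  ⟨{P}, countable_singleton P, by simp [hP, hinj], by simp⟩

lemma isSmall_empty : IsSmall p ∅ := isSmall_of_injOn .empty (injOn_empty p)

lemma IsSmall.iUnion {ι : Sort*} [Countable ι] {S : ι → Set Z} (hS : ∀ i, IsSmall p (S i)) :
    IsSmall p (⋃ i, S i) := by
  choose 𝒞 hcount hinj hcover using hS
  refine ⟨⋃ i, 𝒞 i, countable_iUnion hcount, fun P hP => ?_, iUnion_subset fun i => ?_⟩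
  · obtain ⟨i, hi⟩ := mem_iUnion.1 hP
    exact hinj i P hi
  · exact (hcover i).trans (sUnion_subset_sUnion (subset_iUnion 𝒞 i))

lemma IsSmall.union {S T : Set Z} (hS : IsSmall p S) (hT : IsSmall p T) : IsSmall p (S ∪ T) := by
  rw [union_eq_iUnion]
  exact .iUnion (Bool.forall_bool.2 ⟨hT, hS⟩)

lemma exists_forall_hitByFiber_imp_isSolid (p : Z → X) {b : Set (Set Z)} (hb : b.Countable) :
    ∃ Y, MeasurableSet Y ∧ IsSmall p Yᶜ ∧
      ∀ t ⊆ b, t.Finite → HitByFiber p t Y → IsSolid p t := by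
  let T := {t : Set (Set Z) | t.Finite ∧ t ⊆ b}
  have : Countable T := (countable_ofPred_finite_subset hb).to_subtype
  have decide_one (t : Set (Set Z)) : ∃ Y, MeasurableSet Y ∧ IsSmall p Yᶜ ∧
      (HitByFiber p t Y → IsSolid p t) := by
    by_cases h : IsSolid p t
    · exact ⟨univ, .univ, by simpa using isSmall_empty, fun _ => h⟩
    · simp only [IsSolid, not_forall] at h
      obtain ⟨Y, hY, hsmall, hnot⟩ := h
      exact ⟨Y, hY, hsmall, fun hit => absurd hit hnot⟩
  choose Y hY hsmall hdecide using decide_one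
  refine ⟨⋂ t : T, Y t, .iInter fun t => hY t, ?_, fun t htb ht hit => ?_⟩
  · rw [compl_iInter]
    exact .iUnion fun t => hsmall t
  · exact hdecide t (hit.mono (iInter_subset (fun t : T => Y t) ⟨t, ht, htb⟩))

end Small

section Analytic

lemma analyticSet_inter {Z : Type*} [TopologicalSpace Z] [T2Space Z] {A B : Set Z}
    (hA : AnalyticSet A) (hB : AnalyticSet B) : AnalyticSet (A ∩ B) := by
  rw [inter_eq_iInter]
  exact .iInter (Bool.forall_bool.2 ⟨hB, hA⟩)

variable {Z X : Type*} [TopologicalSpace Z] [PolishSpace Z] [TopologicalSpace X] [T2Space X]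
  {p : Z → X}

lemma analyticSet_setOf_exists_ne_mem_fiber (hp : Continuous p) {A : Set Z} (hA : AnalyticSet A) :
    AnalyticSet {z' | ∃ z ∈ A, p z = p z' ∧ z ≠ z'} := by
  have hfiber : AnalyticSet {q : Z × Z | p q.1 = p q.2} :=
    (isClosed_eq (hp.comp continuous_fst) (hp.comp continuous_snd)).analyticSet
  have hne : AnalyticSet {q : Z × Z | q.1 ≠ q.2} := by
    simpa using (isOpen_ne_fun continuous_fst continuous_snd).analyticSet_image continuous_id
  have himage := (analyticSet_inter (hA.preimage continuous_fst)
    (analyticSet_inter hfiber hne)).image_of_continuous continuous_snd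
  convert! himage
  ext z'
  simp

variable [MeasurableSpace Z] [BorelSpace Z]

lemma exists_measurableSet_superset_injOn (hp : Continuous p) {A : Set Z} (hA : AnalyticSet A)
    (hinj : InjOn p A) : ∃ P, MeasurableSet P ∧ InjOn p P ∧ A ⊆ P := by
  have separate {B : Set Z} (hB : AnalyticSet B)
      (hAB : ∀ z ∈ A, ∀ z' ∈ B, p z' = p z → z' = z) :
      ∃ P, MeasurableSet P ∧ A ⊆ P ∧ ∀ z ∈ P, ∀ z' ∈ B, p z' = p z → z' = z := by
    obtain ⟨P, hAP, hdisj, hP⟩ :=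
      hA.measurablySeparable (analyticSet_setOf_exists_ne_mem_fiber hp hB) <|
        disjoint_left.2 fun z hz ⟨z', hz', hfiber, hne⟩ => hne (hAB z hz z' hz' hfiber)
    exact ⟨P, hP, hAP, fun z hz z' hz' hfiber => by_contra fun hne =>
      disjoint_left.1 hdisj ⟨z', hz', hfiber, hne⟩ hz⟩
  obtain ⟨P, hP, hAP, hPinj⟩ := separate hA fun z hz z' hz' h => hinj hz' hz h
  obtain ⟨Q, hQ, hAQ, hQinj⟩ := separate hP.analyticSet
    fun z hz z' hz' h => (hPinj z' hz' z hz h.symm).symm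
  exact ⟨P ∩ Q, hP.inter hQ, fun z hz z' hz' h => hQinj z' hz'.2 z hz.1 h, subset_inter hAP hAQ⟩

lemma IsSolid.exists_ne_mem_fiber (hp : Continuous p) {t : Set (Set Z)} (ht : t.Countable)
    (hmeas : ∀ V ∈ t, MeasurableSet V) (hsolid : IsSolid p t) {V Y : Set Z} (hV : V ∈ t)
    (hY : MeasurableSet Y) (hsmall : IsSmall p Yᶜ) :
    ∃ z ∈ V ∩ Y, ∃ z' ∈ V ∩ Y, z ≠ z' ∧ p z = p z' ∧ ∀ U ∈ t, ∃ u ∈ U ∩ Y, p u = p z := by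
  let A := V ∩ Y ∩ ⋂ U : t, p ⁻¹' (p '' (U ∩ Y))
  have hA : AnalyticSet A := by
    have : Countable t := ht.to_subtype
    have : Nonempty t := ⟨⟨V, hV⟩⟩
    have hVY := ((hmeas V hV).inter hY).analyticSet
    refine analyticSet_inter hVY (.iInter fun U => ?_)
    exact (((hmeas U U.2).inter hY).analyticSet.image_of_continuous hp).preimage hp
  have hninj : ¬InjOn p A := by
    intro hinj
    obtain ⟨P, hP, hPinj, hAP⟩ := exists_measurableSet_superset_injOn hp hA hinj
    have hsmall' : IsSmall p (Y \ P)ᶜ := by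
      rw [sdiff_eq, compl_inter, compl_compl]
      exact hsmall.union (isSmall_of_injOn hP hPinj)
    obtain ⟨x, hx⟩ := hsolid (Y \ P) (hY.diff hP) hsmall'
    obtain ⟨z, ⟨hzV, hzY, hzP⟩, rfl⟩ := hx V hV
    refine hzP (hAP ⟨⟨hzV, hzY⟩, mem_iInter.2 fun U => ?_⟩)
    obtain ⟨u, hu, hpu⟩ := hx U U.2
    exact ⟨u, ⟨hu.1, hu.2.1⟩, hpu⟩
  simp only [InjOn, not_forall] at hninj
  obtain ⟨z, hz, z', hz', hfiber, hne⟩ := hninj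
  exact ⟨z, hz.1, z', hz'.1, hne, hfiber, fun U hU => mem_iInter.1 hz.2 ⟨U, hU⟩⟩

end Analytic

section PerfectFiber

/-- A scheme of open sets of vanishing diameter in which level `n` consists of the sets `V n i`
with `i ≤ n`. Passing to level `n + 1` shrinks each of them and splits the one with index
`(Nat.unpair n).1`, so that every index is split infinitely often. -/
structure IsSplittingScheme {Z X : Type*} [PseudoMetricSpace Z] (p : Z → X)
    (V : ℕ → ℕ → Set Z) : Prop where
  hitByFiber (n : ℕ) : HitByFiber p (V n '' Iic n) univ
  dist_le {n i : ℕ} (hi : i ≤ n) {a b : Z} (ha : a ∈ V n i) (hb : b ∈ V n i) :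
    dist a b ≤ (1 / 2) ^ n
  closure_subset {n i : ℕ} (hi : i ≤ n) : closure (V (n + 1) i) ⊆ V n i
  new_subset (n : ℕ) : V (n + 1) (n + 1) ⊆ V n n.unpair.1
  disjoint (n : ℕ) : Disjoint (V (n + 1) n.unpair.1) (V (n + 1) (n + 1))

lemma IsSplittingScheme.antitone {Z X : Type*} [PseudoMetricSpace Z] {p : Z → X}
    {V : ℕ → ℕ → Set Z} (hV : IsSplittingScheme p V) {i n m : ℕ} (hi : i ≤ n) (hnm : n ≤ m) :
    V m i ⊆ V n i := by
  induction m, hnm using Nat.le_induction with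
  | base => exact subset_rfl
  | succ m hm ih => exact (subset_closure.trans (hV.closure_subset (hi.trans hm))).trans ih

lemma IsSplittingScheme.preperfect_range {Z X : Type*} [PseudoMetricSpace Z] {p : Z → X}
    {V : ℕ → ℕ → Set Z} {z : ℕ → Z} (hV : IsSplittingScheme p V)
    (hz : ∀ {i n}, i ≤ n → z i ∈ V n i) : Preperfect (range z) := by
  rw [preperfect_iff_nhds]
  rintro _ ⟨i, rfl⟩ U hU
  obtain ⟨ε, hε, hball⟩ := Metric.mem_nhds_iff.1 hU
  obtain ⟨N, hN⟩ := exists_pow_lt_of_lt_one hε (one_half_lt_one (α := ℝ))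
  set n := Nat.pair i (N + i)
  have hNn : N + i ≤ n := Nat.right_le_pair _ _
  have hni : n.unpair.1 = i := by simp [n]
  have hnew : z (n + 1) ∈ V n i := hni ▸ hV.new_subset n (hz le_rfl)
  refine ⟨z (n + 1), ⟨hball ?_, mem_range_self _⟩, fun heq => ?_⟩
  · calc dist (z (n + 1)) (z i) ≤ (1 / 2) ^ n := hV.dist_le (by omega) hnew (hz (by omega))
      _ ≤ (1 / 2) ^ N := pow_le_pow_of_le_one (by norm_num) (by norm_num) (by omega)
      _ < ε := hN
  · refine disjoint_left.1 (hV.disjoint n) ?_ (hz (le_refl (n + 1)))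
    rw [hni, heq]
    exact hz (by omega)

lemma exists_mem_countableBasis_closure_subset {Z : Type*} [PseudoMetricSpace Z]
    [SecondCountableTopology Z] {z : Z} {O : Set Z} (hO : IsOpen O) (hz : z ∈ O) {δ : ℝ}
    (hδ : 0 < δ) :
    ∃ V ∈ countableBasis Z, z ∈ V ∧ closure V ⊆ O ∧ V ⊆ Metric.ball z δ := by
  obtain ⟨C, ⟨hC, hCclosed⟩, hCsub⟩ := (closed_nhds_basis z).mem_iff.1
    (inter_mem (hO.mem_nhds hz) (Metric.ball_mem_nhds z hδ))
  obtain ⟨V, hV, hzV, hVC⟩ := (isBasis_countableBasis Z).mem_nhds_iff.1 hC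
  exact ⟨V, hV, hzV, (closure_minimal hVC hCclosed).trans (hCsub.trans inter_subset_left),
    hVC.trans (hCsub.trans inter_subset_right)⟩

variable {Z X : Type*} [MetricSpace Z] [CompleteSpace Z] [SecondCountableTopology Z]
  [MeasurableSpace Z] [BorelSpace Z] [TopologicalSpace X] [T2Space X] {p : Z → X}

lemma IsSolid.exists_split (hp : Continuous p) {n r : ℕ} (hr : r ≤ n) {F : ℕ → Set Z}
    (hF : ∀ i ≤ n, IsOpen (F i)) (hsolid : IsSolid p (F '' Iic n)) {ε : ℝ} (hε : 0 < ε) :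
    ∃ G : ℕ → Set Z, IsSolid p (G '' Iic (n + 1)) ∧
      (∀ i ≤ n + 1, IsOpen (G i) ∧ closure (G i) ⊆ F (if i ≤ n then i else r) ∧
        ∀ a ∈ G i, ∀ b ∈ G i, dist a b ≤ ε) ∧
      Disjoint (G r) (G (n + 1)) := by
  obtain ⟨Y, hY, hsmall, hdecide⟩ :=
    exists_forall_hitByFiber_imp_isSolid p (countable_countableBasis Z)
  obtain ⟨z, hz, z', hz', hne, hfiber, hfamily⟩ := hsolid.exists_ne_mem_fiber hp
    (((finite_Iic n).image F).countable) (forall_mem_image.2 fun i hi => (hF i hi).measurableSet)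
    (mem_image_of_mem F (mem_Iic.2 hr)) hY hsmall
  have hpoints : ∃ q : ℕ → Z, q r = z ∧ q (n + 1) = z' ∧
      ∀ i ≤ n + 1, q i ∈ F (if i ≤ n then i else r) ∩ Y ∧ p (q i) = p z := by
    have : Nonempty Z := ⟨z⟩
    choose! u huY hu using hfamily
    refine ⟨fun i => if i = r then z else if i ≤ n then u (F i) else z', by simp,
      by simp [show n + 1 ≠ r by omega], fun i _ => ?_⟩
    rcases eq_or_ne i r with rfl | hir
    · simp [hr, hz.1, hz.2]
    by_cases hi : i ≤ n
    · simpa [hir, hi] using ⟨huY _ (mem_image_of_mem F hi), hu _ (mem_image_of_mem F hi)⟩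
    · simp [hir, hi, hz'.1, hz'.2, hfiber]
  obtain ⟨q, hqr, hqn, hq⟩ := hpoints
  set δ := min (ε / 2) (dist z z' / 2)
  have hδ : 0 < δ := lt_min (half_pos hε) (half_pos (dist_pos.2 hne))
  have hshrink (i : ℕ) (hi : i ≤ n + 1) : ∃ V ∈ countableBasis Z, q i ∈ V ∧
      closure V ⊆ F (if i ≤ n then i else r) ∧ V ⊆ Metric.ball (q i) δ :=
    exists_mem_countableBasis_closure_subset (hF _ (by split_ifs <;> assumption)) (hq i hi).1.1 hδ
  choose! G hbasis hqG hclosure hball using hshrink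
  refine ⟨G, ?_, fun i hi => ⟨isOpen_of_mem_countableBasis (hbasis i hi), hclosure i hi, ?_⟩, ?_⟩
  · exact hdecide _ (image_subset_iff.2 hbasis) ((finite_Iic _).image G)
      ⟨p z, forall_mem_image.2 fun i hi => ⟨q i, ⟨hqG i hi, (hq i hi).1.2⟩, (hq i hi).2⟩⟩
  · intro a ha b hb
    have hab := dist_triangle_right a b (q i)
    have hδε : δ ≤ ε / 2 := min_le_left _ _
    linarith [Metric.mem_ball.1 (hball i hi ha), Metric.mem_ball.1 (hball i hi hb)]
  · have hδz : δ ≤ dist z z' / 2 := min_le_right _ _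
    exact (Metric.ball_disjoint_ball (by rw [hqr, hqn]; linarith)).mono
      (hball r (by omega)) (hball (n + 1) le_rfl)

lemma exists_isSplittingScheme (hp : Continuous p) (hlarge : ¬IsSmall p (univ : Set Z)) :
    ∃ V, IsSplittingScheme p V := by
  let State (n : ℕ) := {F : ℕ → Set Z // IsSolid p (F '' Iic n) ∧
    ∀ i ≤ n, IsOpen (F i) ∧ ∀ a ∈ F i, ∀ b ∈ F i, dist a b ≤ (1 / 2) ^ n}
  have hstart : Nonempty (State 0) := by
    obtain ⟨Y, hY, hsmall, hdecide⟩ :=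
      exists_forall_hitByFiber_imp_isSolid p (countable_countableBasis Z)
    obtain ⟨z, hz⟩ : Y.Nonempty := by
      rw [nonempty_iff_ne_empty]
      rintro rfl
      exact hlarge (by simpa using hsmall)
    obtain ⟨V, hV, hzV, -, hball⟩ :=
      exists_mem_countableBasis_closure_subset isOpen_univ (mem_univ z) one_half_pos
    refine ⟨fun _ => V, ?_, fun i _ => ⟨isOpen_of_mem_countableBasis hV, fun a ha b hb => ?_⟩⟩
    · have himage : (fun _ => V) '' Iic 0 = {V} := nonempty_Iic.image_const V
      rw [himage]
      exact hdecide _ (singleton_subset_iff.2 hV) (finite_singleton V)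
        ⟨p z, by rintro _ rfl; exact ⟨z, ⟨hzV, hz⟩, rfl⟩⟩
    · have hab := dist_triangle_right a b z
      linarith [Metric.mem_ball.1 (hball ha), Metric.mem_ball.1 (hball hb)]
  have hstep (n : ℕ) (F : State n) : ∃ G : State (n + 1),
      (∀ i ≤ n + 1, closure (G.1 i) ⊆ F.1 (if i ≤ n then i else n.unpair.1)) ∧
      Disjoint (G.1 n.unpair.1) (G.1 (n + 1)) := by
    obtain ⟨G, hsolid, hG, hdisj⟩ := F.2.1.exists_split hp n.unpair_left_le
      (fun i hi => (F.2.2 i hi).1) (ε := (1 / 2) ^ (n + 1)) (by positivity)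
    exact ⟨⟨G, hsolid, fun i hi => ⟨(hG i hi).1, (hG i hi).2.2⟩⟩, fun i hi => (hG i hi).2.1, hdisj⟩
  choose next hclosure hdisj using hstep
  let S (n : ℕ) : State n := Nat.rec hstart.some next n
  refine ⟨fun n => (S n).1, fun n => (S n).2.1 univ .univ (by simpa using isSmall_empty),
    fun hi _ _ ha hb => ((S _).2.2 _ hi).2 _ ha _ hb, fun {n i} hi => ?_, fun n => ?_,
    fun n => hdisj n (S n)⟩
  · simpa [hi] using hclosure n (S n) i (by omega)
  · simpa using subset_closure.trans (hclosure n (S n) (n + 1) le_rfl)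

namespace IsSplittingScheme

variable {Z X : Type*} [MetricSpace Z] [CompleteSpace Z] [TopologicalSpace X] [T2Space X]
  {p : Z → X} {V : ℕ → ℕ → Set Z}

lemma exists_limits (hp : Continuous p) (hV : IsSplittingScheme p V) :
    ∃ z : ℕ → Z, (∀ {i n}, i ≤ n → z i ∈ V n i) ∧ ∀ i, p (z i) = p (z 0) := by
  choose x hx using hV.hitByFiber
  have : Nonempty Z := (hx 0 _ (mem_image_of_mem _ (mem_Iic.2 le_rfl))).nonempty
  choose! w hw hwx using fun n i (hi : i ≤ n) => hx n (V n i) (mem_image_of_mem _ hi)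
  have htail {i n : ℕ} (m : ℕ) (hi : i ≤ n) : w (m + n) i ∈ V n i :=
    hV.antitone hi (Nat.le_add_left n m) (hw _ _ (hi.trans (Nat.le_add_left n m))).1
  have hlim (i : ℕ) : ∃ z, Tendsto (fun n => w (n + i) i) atTop (𝓝 z) := by
    refine cauchySeq_tendsto_of_complete (cauchySeq_of_le_geometric (1 / 2) ((1 / 2) ^ i)
      (by norm_num) fun n => ?_)
    have hnext : w (n + 1 + i) i ∈ V (n + i) i := by
      rw [show n + 1 + i = 1 + (n + i) by ring]
      exact htail 1 (Nat.le_add_left i n)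
    calc dist (w (n + i) i) (w (n + 1 + i) i) ≤ (1 / 2) ^ (n + i) :=
          hV.dist_le (Nat.le_add_left i n) (hw _ _ (Nat.le_add_left i n)).1 hnext
      _ = (1 / 2) ^ i * (1 / 2) ^ n := by rw [pow_add, mul_comm]
  choose z hshift using hlim
  have hz (i : ℕ) : Tendsto (fun n => w n i) atTop (𝓝 (z i)) :=
    (tendsto_add_atTop_iff_nat i).1 (hshift i)
  have hpz (i : ℕ) : Tendsto x atTop (𝓝 (p (z i))) :=
    ((hp.tendsto _).comp (hz i)).congr' <| by
      filter_upwards [eventually_ge_atTop i] with n hn using hwx n i hn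
  refine ⟨z, fun {i n} hi => hV.closure_subset hi (mem_closure_of_tendsto (hz i) ?_),
    fun i => tendsto_nhds_unique (hpz i) (hpz 0)⟩
  filter_upwards [eventually_ge_atTop (n + 1)] with m hm
  exact hV.antitone (by omega) hm (hw m i (by omega)).1

lemma exists_not_countable_fiber (hp : Continuous p) (hV : IsSplittingScheme p V) :
    ∃ x, ¬(p ⁻¹' {x}).Countable := by
  obtain ⟨z, hz, hpz⟩ := hV.exists_limits hp
  refine ⟨p (z 0), fun hcount => ?_⟩
  have hfiber : closure (range z) ⊆ p ⁻¹' {p (z 0)} :=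
    closure_minimal (range_subset_iff.2 hpz) (isClosed_singleton.preimage hp)
  obtain ⟨f, hf, -, hinj⟩ := (hV.preperfect_range hz).perfect_closure.exists_nat_bool_injection
    ⟨z 0, subset_closure (mem_range_self _)⟩
  have : Countable (p ⁻¹' {p (z 0)}) := hcount.to_subtype
  have : Uncountable (ℕ → Bool) :=
    Cardinal.aleph0_lt_mk_iff.1 (by simp [Cardinal.aleph0_lt_continuum])
  exact not_countable (hinj.codRestrict fun a => hf.trans hfiber (mem_range_self a)).countable

end IsSplittingScheme

theorem isSmall_univ_of_continuous {Z X : Type*} [TopologicalSpace Z] [PolishSpace Z]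
    [MeasurableSpace Z] [BorelSpace Z] [TopologicalSpace X] [T2Space X] {p : Z → X}
    (hp : Continuous p) (hcount : ∀ x, (p ⁻¹' {x}).Countable) : IsSmall p (univ : Set Z) := by
  let _ := upgradeIsCompletelyMetrizable Z
  by_contra hlarge
  obtain ⟨V, hV⟩ := exists_isSplittingScheme hp hlarge
  obtain ⟨x, hx⟩ := hV.exists_not_countable_fiber hp
  exact hx (hcount x)

theorem isSmall_univ {Z X : Type*} [MeasurableSpace Z] [StandardBorelSpace Z] [MeasurableSpace X]
    [MeasurableSpace.CountablySeparated X] {p : Z → X} (hp : Measurable p)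
    (hcount : ∀ x, (p ⁻¹' {x}).Countable) : IsSmall p (univ : Set Z) := by
  obtain ⟨code, hcode, hcode_inj⟩ :=
    MeasurableSpace.measurable_injection_nat_bool_of_countablySeparated X
  let hZ := upgradeStandardBorel Z
  obtain ⟨τ, hτ, hcont, hpolish⟩ := (hcode.comp hp).exists_continuous
  have hborel : @BorelSpace Z τ _ := ⟨by
    rw [eq_borel_upgradeStandardBorel Z]
    exact (borel_eq_borel_of_le hpolish hZ.toPolishSpace hτ).symm⟩
  obtain ⟨𝒞, h𝒞, hinj, hcover⟩ :=
    @isSmall_univ_of_continuous Z (ℕ → Bool) τ hpolish _ hborel _ _ (code ∘ p) hcont fun x => by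
      rw [preimage_comp, ← biUnion_preimage_singleton]
      exact (subsingleton_singleton.preimage hcode_inj).countable.biUnion fun y _ => hcount y
  exact ⟨𝒞, h𝒞, fun P hP => ⟨(hinj P hP).1, fun z hz z' hz' h =>
    (hinj P hP).2 hz hz' (congrArg code h)⟩, hcover⟩

end PerfectFiber

end LusinNovikov

/-! ### The Carlson-Simpson lemma -/

namespace CarlsonSimpson

open Filter Set Topology

section LeftIdeal

variable {M : Type*} [Semigroup M] [TopologicalSpace M]

/-- Nonempty closed left ideals of a semigroup with a topology. -/
def IsClosedLeftIdeal (I : Set M) : Prop :=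
  IsClosed I ∧ I.Nonempty ∧ ∀ p, ∀ q ∈ I, p * q ∈ I

variable [CompactSpace M]

lemma exists_minimal_isClosedLeftIdeal [Nonempty M] :
    ∃ I : Set M, Minimal IsClosedLeftIdeal I := by
  have hlower (c : Set (Set M)) (hideal : c ⊆ {I | IsClosedLeftIdeal I})
      (hchain : IsChain (· ⊆ ·) c) (hne : c.Nonempty) :
      ∃ I ∈ {I | IsClosedLeftIdeal I}, ∀ J ∈ c, I ⊆ J := by
    have : Nonempty c := hne.coe_sort
    have hdir : DirectedOn (· ⊇ ·) c := IsChain.directedOn hchain.symm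
    refine ⟨⋂₀ c, ⟨isClosed_sInter fun I hI => (hideal hI).1, ?_, fun p q hq => ?_⟩,
      fun I hI => sInter_subset_of_mem hI⟩
    · rw [sInter_eq_iInter]
      exact IsCompact.nonempty_iInter_of_directed_nonempty_isCompact_isClosed _
        hdir.directed_val (fun I => (hideal I.2).2.1)
        (fun I => (hideal I.2).1.isCompact) fun I => (hideal I.2).1
    · exact mem_sInter.2 fun I hI => (hideal hI).2.2 p q (mem_sInter.1 hq I hI)
  obtain ⟨I, -, hI⟩ := zorn_superset_nonempty _ hlower univ
    ⟨isClosed_univ, univ_nonempty, fun _ _ _ => mem_univ _⟩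
  exact ⟨I, hI⟩

lemma mul_eq_left_of_minimal [T2Space M] (hcont : ∀ r : M, Continuous (· * r)) {I : Set M}
    (hI : Minimal IsClosedLeftIdeal I) {x y : M} (hx : x ∈ I) (hy : y ∈ I) (hyy : y * y = y) :
    x * y = x := by
  have hideal : IsClosedLeftIdeal (range (· * y)) := by
    refine ⟨(isCompact_range (hcont y)).isClosed, ⟨y * y, y, rfl⟩, ?_⟩
    rintro p _ ⟨r, rfl⟩
    exact ⟨p * r, mul_assoc p r y⟩
  have hrange : range (· * y) = I :=
    hI.eq_of_subset hideal (range_subset_iff.2 fun r => hI.prop.2.2 r y hy)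
  obtain ⟨z, rfl⟩ := hrange.ge hx
  simp only [mul_assoc, hyy]

end LeftIdeal

section Ultrafilter

attribute [local instance] Ultrafilter.mul Ultrafilter.semigroup

lemma ultrafilter_map_mul {M N F : Type*} [Mul M] [Mul N] [FunLike F M N] [MulHomClass F M N]
    (f : F) (U V : Ultrafilter M) : (U * V).map f = U.map f * V.map f := by
  refine Ultrafilter.coe_inj.1 (Filter.ext' fun q => ?_)
  rw [Ultrafilter.eventually_mul]
  simp only [Ultrafilter.coe_map, eventually_map]
  rw [Ultrafilter.eventually_mul]
  simp only [map_mul]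

variable {L : Type*}

/-- Substitution of the letter `a` for the variable `none` in a variable word. -/
def substVar (a : L) : FreeMonoid (Option L) →* FreeMonoid L := FreeMonoid.map (·.getD a)

/-- Words without variable, as variable words. -/
def constWord : FreeMonoid L →* FreeMonoid (Option L) := FreeMonoid.map some

lemma substVar_comp_constWord (a : L) : substVar a ∘ constWord = id := by
  funext w
  exact FreeMonoid.map_map.trans (DFunLike.congr_fun FreeMonoid.map_id w)

lemma exists_ultrafilter_map_substVar_mul (L : Type*) : ∃ e : Ultrafilter (FreeMonoid (Option L)),
    (∀ᶠ u in (e : Filter (FreeMonoid (Option L))), ∃ u', u = .of none * u') ∧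
      ∀ a b : L, e.map (substVar a) * e.map (substVar b) = e.map (substVar a) := by
  -- `e` is an idempotent whose substitution instances all lie in one minimal left ideal, in which
  -- every idempotent is a right identity.
  obtain ⟨I, hI⟩ := exists_minimal_isClosedLeftIdeal (M := Ultrafilter (FreeMonoid L))
  obtain ⟨U, hU⟩ := hI.prop.2.1
  let J : Set (Ultrafilter (FreeMonoid (Option L))) := range (· * U.map constWord)
  let S : Set (FreeMonoid (Option L)) := range (FreeMonoid.of none * ·)
  have hS {p q : Ultrafilter (FreeMonoid (Option L))} (hp : S ∈ p) : S ∈ p * q := by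
    change ∀ᶠ u in p, ∀ᶠ v in q, u * v ∈ S
    filter_upwards [hp]
    rintro _ ⟨u, rfl⟩
    exact .of_forall fun v => ⟨u * v, (mul_assoc _ _ _).symm⟩
  have hJ {q : Ultrafilter (FreeMonoid (Option L))} (hq : q ∈ J) (a : L) :
      q.map (substVar a) ∈ I := by
    obtain ⟨r, rfl⟩ := hq
    simp only [ultrafilter_map_mul, Ultrafilter.map_map, substVar_comp_constWord,
      Ultrafilter.map_id]
    exact hI.prop.2.2 _ U hU
  have hJS : IsCompact (J ∩ {q | S ∈ q}) :=
    (isCompact_range (Ultrafilter.continuous_mul_left _)).inter_right (ultrafilter_isClosed_basic S)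
  have hne : (J ∩ {q | S ∈ q}).Nonempty :=
    ⟨pure (FreeMonoid.of none) * U.map constWord, ⟨_, rfl⟩, hS (mem_pure.2 ⟨1, mul_one _⟩)⟩
  obtain ⟨e, ⟨heJ, heS⟩, hee⟩ := exists_idempotent_in_compact_subsemigroup
    Ultrafilter.continuous_mul_left _ hne hJS (by
      rintro x ⟨-, hx⟩ _ ⟨⟨r, rfl⟩, -⟩
      exact ⟨⟨x * r, mul_assoc x r _⟩, hS hx⟩)
  refine ⟨e, mem_of_superset heS fun u ⟨u', h⟩ => ⟨u', h.symm⟩, fun a b => ?_⟩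
  exact mul_eq_left_of_minimal Ultrafilter.continuous_mul_left hI (hJ heJ a) (hJ heJ b)
    (by rw [← ultrafilter_map_mul, hee])

lemma exists_persistent [Finite L] [Nonempty L] (c : List L → Prop) :
    ∃ (b : Prop) (Y : Set (List L)), Y.Nonempty ∧ (∀ w ∈ Y, (c w ↔ b)) ∧
      ∀ F ⊆ Y, F.Finite →
        ∃ u : List (Option L), ∀ w ∈ F, ∀ a : L, w ++ a :: u.map (·.getD a) ∈ Y := by
  obtain ⟨e, hvar, hee⟩ := exists_ultrafilter_map_substVar_mul L
  let a₀ : L := Classical.arbitrary L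
  obtain ⟨b, hb⟩ : ∃ b : Prop, ∀ᶠ w in e.map (substVar a₀), (c (FreeMonoid.toList w) ↔ b) := by
    rcases (e.map (substVar a₀)).em (fun w => c (FreeMonoid.toList w)) with h | h
    · exact ⟨True, h.mono fun w hw => by simpa using hw⟩
    · exact ⟨False, h.mono fun w hw => by simpa using hw⟩
  let X : Set (FreeMonoid L) := {w | c (FreeMonoid.toList w) ↔ b}
  let Y : Set (FreeMonoid L) := {w | w ∈ X ∧ ∀ a : L, ∀ᶠ u in e.map (substVar a), w * u ∈ X}
  have absorb {Q : FreeMonoid L → Prop} {a : L} (h : ∀ᶠ u in e.map (substVar a), Q u) (a' : L) :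
      ∀ᶠ u in e.map (substVar a), ∀ᶠ v in e.map (substVar a'), Q (u * v) := by
    rwa [← hee a a', Ultrafilter.eventually_mul] at h
  have hY : ∀ᶠ w in e.map (substVar a₀), w ∈ Y := hb.and (eventually_all.2 (absorb hb))
  have hextend (w : FreeMonoid L) (hw : w ∈ Y) (a : L) :
      ∀ᶠ u in e.map (substVar a), w * u ∈ Y :=
    (hw.2 a).and (eventually_all.2 fun a' => by simpa only [mul_assoc] using absorb (hw.2 a) a')
  refine ⟨b, Y, hY.exists, fun w hw => hw.1, fun F hFY hF => ?_⟩
  have hcommon : ∀ᶠ u in e, ∀ w ∈ F, ∀ a : L, FreeMonoid.ofList w * substVar a u ∈ Y :=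
    (eventually_all_finite hF).2 fun w hw => eventually_all.2 fun a => hextend w (hFY hw) a
  obtain ⟨_, hu, u, rfl⟩ := (hcommon.and hvar).exists
  exact ⟨u, hu⟩

end Ultrafilter

section InfiniteWord

variable {L : Type*}

lemma exists_eq_map_range_of_prefix {α : Type*} {G : ℕ → List α}
    (hprefix : ∀ n, G n <+: G (n + 1)) (hlength : ∀ n, n < (G (n + 1)).length) :
    ∃ H : ℕ → α, ∀ n, G n = (List.range (G n).length).map H := by
  have hmono {n m : ℕ} (h : n ≤ m) : G n <+: G m := by
    induction m, h using Nat.le_induction with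
    | base => exact List.prefix_rfl
    | succ m _ ih => exact ih.trans (hprefix m)
  refine ⟨fun k => (G (k + 1))[k]'(hlength k), fun n => List.ext_getElem (by simp) ?_⟩
  intro k hk _
  simp only [List.getElem_map, List.getElem_range]
  rcases le_total n (k + 1) with h | h
  · exact (hmono h).getElem hk
  · exact ((hmono h).getElem (hlength k)).symm

/-- An infinite word in the letters `inl a` and infinitely many variables, in which a variable
is named by the position of its first occurrence. -/
def IsPattern (H : ℕ → L ⊕ ℕ) : Prop :=
  (∀ k m, H k = .inr m → m ≤ k ∧ H m = .inr m) ∧ ∀ n, ∃ m ≥ n, H m = .inr m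

/-- The finite words `G n` are obtained from a word without variables by repeatedly appending a new
variable, named by its position, followed by letters and occurrences of that variable. -/
structure IsPatternChain (G : ℕ → List (L ⊕ ℕ)) : Prop where
  zero (m : ℕ) : .inr m ∉ G 0
  succ (n : ℕ) : ∃ v, G (n + 1) = G n ++ .inr (G n).length :: v ∧
    ∀ m, .inr m ∈ v → m = (G n).length

lemma exists_isPatternChain [Finite L] {Y : Set (List L)} (hne : Y.Nonempty)
    (hY : ∀ F ⊆ Y, F.Finite →
      ∃ u : List (Option L), ∀ w ∈ F, ∀ a : L, w ++ a :: u.map (·.getD a) ∈ Y) :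
    ∃ G : ℕ → List (L ⊕ ℕ), IsPatternChain G ∧ ∀ n φ, (G n).map (Sum.elim id φ) ∈ Y := by
  obtain ⟨w₀, hw₀⟩ := hne
  let State := {G : List (L ⊕ ℕ) // ∀ φ : ℕ → L, G.map (Sum.elim id φ) ∈ Y}
  have hstep (G : State) : ∃ G' : State, ∃ v, G'.1 = G.1 ++ .inr G.1.length :: v ∧
      ∀ m, .inr m ∈ v → m = G.1.length := by
    obtain ⟨u, hu⟩ := hY (range fun φ : ℕ → L => G.1.map (Sum.elim id φ))
      (range_subset_iff.2 G.2)
      ((List.finite_length_eq L G.1.length).subset (range_subset_iff.2 fun φ => by simp))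
    let v : List (L ⊕ ℕ) := u.map (·.elim (.inr G.1.length) .inl)
    have hv (φ : ℕ → L) : v.map (Sum.elim id φ) = u.map (·.getD (φ G.1.length)) := by
      rw [List.map_map]
      exact List.map_congr_left fun o _ => by cases o <;> rfl
    refine ⟨⟨G.1 ++ .inr G.1.length :: v, fun φ => ?_⟩, v, rfl, fun m hm => ?_⟩
    · simpa [hv] using hu _ ⟨φ, rfl⟩ (φ G.1.length)
    · obtain ⟨o, -, ho⟩ := List.mem_map.1 hm
      cases o <;> simp_all
  choose next hnext using hstep
  let G₀ : State := ⟨w₀.map .inl, fun φ => by simpa [List.map_map, Function.comp_def] using hw₀⟩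
  let S (n : ℕ) : State := Nat.rec G₀ (fun _ => next) n
  exact ⟨fun n => (S n).1, ⟨by simp [S, G₀], fun n => hnext (S n)⟩, fun n => (S n).2⟩

namespace IsPatternChain

variable {G : ℕ → List (L ⊕ ℕ)} {H : ℕ → L ⊕ ℕ}

lemma prefix_succ (hG : IsPatternChain G) (n : ℕ) : G n <+: G (n + 1) := by
  obtain ⟨v, hv, -⟩ := hG.succ n
  exact hv ▸ List.prefix_append _ _

lemma le_length (hG : IsPatternChain G) (n : ℕ) : n ≤ (G n).length := by
  induction n with
  | zero => exact Nat.zero_le _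
  | succ n ih =>
    obtain ⟨v, hv, -⟩ := hG.succ n
    simp only [hv, List.length_append, List.length_cons]
    omega

lemma eq_length_of_eq_inr (hG : IsPatternChain G)
    (hH : ∀ n, G n = (List.range (G n).length).map H) {k m : ℕ} (hk : H k = .inr m) :
    m ≤ k ∧ ∃ n, m = (G n).length := by
  suffices ∀ n, k < (G n).length → m ≤ k ∧ ∃ n, m = (G n).length from
    this (k + 1) (hG.le_length (k + 1))
  have hget (n : ℕ) (hkn : k < (G n).length) : (G n)[k] = .inr m := by
    simp only [List.getElem_of_eq (hH n), List.getElem_map, List.getElem_range, hk]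
  intro n hkn
  induction n with
  | zero => exact absurd (hget 0 hkn ▸ List.getElem_mem hkn) (hG.zero m)
  | succ n ih =>
    rcases lt_or_ge k (G n).length with hlt | hge
    · exact ih hlt
    obtain ⟨v, hv, hvar⟩ := hG.succ n
    have hmem : .inr m ∈ Sum.inr (G n).length :: v := by
      rw [← hget (n + 1) hkn, List.getElem_of_eq hv, List.getElem_append_right hge]
      exact List.getElem_mem _
    have hm : m = (G n).length := by
      rcases List.mem_cons.1 hmem with h | h
      · exact Sum.inr.inj h
      · exact hvar m h
    exact ⟨hm ▸ hge, n, hm⟩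

lemma apply_length (hG : IsPatternChain G) (hH : ∀ n, G n = (List.range (G n).length).map H)
    (n : ℕ) : H (G n).length = .inr (G n).length := by
  obtain ⟨v, hv, -⟩ := hG.succ n
  have hlt : (G n).length < (G (n + 1)).length := by simp [hv]
  have hget : (G (n + 1))[(G n).length] = H (G n).length := by
    simp only [List.getElem_of_eq (hH (n + 1)), List.getElem_map, List.getElem_range]
  rw [← hget, List.getElem_of_eq hv]
  simp

end IsPatternChain

theorem exists_isPattern_forall_iff [Finite L] [Nonempty L] (c : List L → Prop) :
    ∃ (b : Prop) (H : ℕ → L ⊕ ℕ), IsPattern H ∧ ∀ (φ : ℕ → L) (N : ℕ), H N = .inr N →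
      (c ((List.range N).map fun k => Sum.elim id φ (H k)) ↔ b) := by
  obtain ⟨b, Y, hne, hYc, hY⟩ := exists_persistent c
  obtain ⟨G, hG, hGY⟩ := exists_isPatternChain hne hY
  obtain ⟨H, hH⟩ := exists_eq_map_range_of_prefix hG.prefix_succ fun n => hG.le_length (n + 1)
  refine ⟨b, H, ⟨fun k m hk => ?_, fun n => ?_⟩, fun φ N hN => ?_⟩
  · obtain ⟨hmk, n, rfl⟩ := hG.eq_length_of_eq_inr hH hk
    exact ⟨hmk, hG.apply_length hH n⟩
  · exact ⟨(G n).length, hG.le_length n, hG.apply_length hH n⟩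
  · obtain ⟨-, n, rfl⟩ := hG.eq_length_of_eq_inr hH hN
    have hword : (G n).map (Sum.elim id φ) =
        (List.range (G n).length).map fun k => Sum.elim id φ (H k) := by
      conv_lhs => rw [hH n, List.map_map]
      rfl
    exact hword ▸ hYc _ (hGY n φ)

end InfiniteWord

end CarlsonSimpson

/-! ### Cubes and fusion -/

lemma standardBorelSpace_of_measurableEmbedding {α β : Type*} [MeasurableSpace α]
    [MeasurableSpace β] [StandardBorelSpace β] {f : α → β} (hf : MeasurableEmbedding f) :
    StandardBorelSpace α := by
  obtain ⟨_, _, _⟩ := hf.measurableSet_range.standardBorel.polish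
  let e := hf.equivRange
  let _ : TopologicalSpace α := .induced e ‹_›
  have : PolishSpace α := e.toEquiv.polishSpace_induced
  have : BorelSpace α := ⟨by
    rw [borel_comap, ← BorelSpace.measurable_eq (α := Set.range f), e.measurableEmbedding.comap_eq]⟩
  infer_instance

namespace Einf

open Set

section Representatives

variable {A B : Einf} {l m x y : ℕ}

/-- The order `A ≤ B` of the paper: `A` is a coarsening of `B`. -/
instance : PartialOrder Einf where
  le := Coarsen
  le_refl _ _ _ h := h
  le_trans _ _ _ hAB hBC i j h := hAB i j (hBC i j h)
  le_antisymm _ _ hAB hBA := Subtype.ext (Setoid.ext fun i j => ⟨hBA i j, hAB i j⟩)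

/-- `l` is the least element of its `A`-class, that is, `l` is one of the `μ_n(A)`. -/
def IsRep (A : Einf) (l : ℕ) : Prop := ∀ m, A.1 m l → l ≤ m

/-- The least element of the `A`-class of `x`. -/
noncomputable def rep (A : Einf) (x : ℕ) : ℕ := sInf {m | A.1 m x}

lemma rep_rel (A : Einf) (x : ℕ) : A.1 (A.rep x) x :=
  Nat.sInf_mem (s := {m | A.1 m x}) ⟨x, A.1.refl x⟩

lemma rep_le_of_rel (h : A.1 m x) : A.rep x ≤ m := Nat.sInf_le h

lemma rep_le (A : Einf) (x : ℕ) : A.rep x ≤ x := rep_le_of_rel (A.1.refl x)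

lemma rep_eq_rep_iff : A.rep x = A.rep y ↔ A.1 x y := by
  refine ⟨fun h => A.1.trans (A.1.symm (A.rep_rel x)) (h ▸ A.rep_rel y), fun h => ?_⟩
  exact le_antisymm (rep_le_of_rel (A.1.trans (A.rep_rel y) (A.1.symm h)))
    (rep_le_of_rel (A.1.trans (A.rep_rel x) h))

lemma isRep_iff_rep_eq : A.IsRep l ↔ A.rep l = l :=
  ⟨fun h => le_antisymm (A.rep_le l) (h _ (A.rep_rel l)), fun h _ hm => h ▸ rep_le_of_rel hm⟩

lemma rep_rep (A : Einf) (x : ℕ) : A.rep (A.rep x) = A.rep x := rep_eq_rep_iff.2 (A.rep_rel x)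

lemma isRep_rep (A : Einf) (x : ℕ) : A.IsRep (A.rep x) := isRep_iff_rep_eq.2 (A.rep_rep x)

lemma IsRep.of_le (h : A ≤ B) (hl : A.IsRep l) : B.IsRep l := fun m hm => hl m (h _ _ hm)

lemma rep_rep_of_le (h : A ≤ B) (x : ℕ) : A.rep (B.rep x) = A.rep x :=
  rep_eq_rep_iff.2 (h _ _ (B.rep_rel x))

lemma infinite_quotient_iff (S : Setoid ℕ) :
    Infinite (Quotient S) ↔ {l | ∀ m, S m l → l ≤ m}.Infinite := by
  rw [← infinite_coe_iff]
  refine (Equiv.ofBijective (fun l : {l | ∀ m, S m l → l ≤ m} => Quotient.mk S l)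
    ⟨fun k l h => ?_, Quotient.ind fun x => ?_⟩).infinite_iff.symm
  · have hkl : S k.1 l.1 := Quotient.exact h
    exact Subtype.ext (le_antisymm (k.2 _ (S.symm hkl)) (l.2 _ hkl))
  · have hx : S (sInf {m | S m x}) x := Nat.sInf_mem (s := {m | S m x}) ⟨x, S.refl x⟩
    exact ⟨⟨_, fun m hm => Nat.sInf_le (S.trans hm hx)⟩, Quotient.sound hx⟩

lemma infinite_isRep (A : Einf) : {l | A.IsRep l}.Infinite := (infinite_quotient_iff A.1).1 A.2

lemma exists_isRep_gt (A : Einf) (n : ℕ) : ∃ l, n < l ∧ A.IsRep l := by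
  obtain ⟨l, hl, hn⟩ := A.infinite_isRep.exists_gt n
  exact ⟨l, hn, hl⟩

/-- `l` and `l'` are consecutive elements of `{μ_n(A) : n ∈ ℕ}`. -/
def IsNextRep (A : Einf) (l l' : ℕ) : Prop :=
  A.IsRep l' ∧ l < l' ∧ ∀ k, A.IsRep k → l < k → l' ≤ k

lemma exists_isNextRep (A : Einf) (l : ℕ) : ∃ l', A.IsNextRep l l' :=
  ⟨Nat.find (A.exists_isRep_gt l), (Nat.find_spec (A.exists_isRep_gt l)).2,
    (Nat.find_spec (A.exists_isRep_gt l)).1, fun _ hk hlk => Nat.find_min' _ ⟨hlk, hk⟩⟩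

end Representatives

section Cubes

variable {A B D : Einf} {l l' : ℕ} {s : FinApprox}

/-- The restriction of `A` to `{0, …, l − 1}`; it is `r_n(A)` when `l = μ_n(A)`. -/
def approx (A : Einf) (l : ℕ) : FinApprox := ⟨l, Setoid.comap (fun i : Fin l => (i : ℕ)) A.1⟩

lemma approx_eq_approx_iff :
    A.approx l = B.approx l ↔ ∀ i < l, ∀ j < l, (A.1 i j ↔ B.1 i j) := by
  refine Sigma.mk.inj_iff.trans ?_
  simp only [heq_eq_eq, true_and, Setoid.ext_iff, Setoid.comap_rel, Fin.forall_iff]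

lemma approx_eq_of_le (h : A.approx l' = B.approx l') (hl : l ≤ l') :
    A.approx l = B.approx l :=
  approx_eq_approx_iff.2 fun i hi j hj =>
    approx_eq_approx_iff.1 h i (hi.trans_le hl) j (hj.trans_le hl)

lemma IsRep.of_approx_eq (hA : A.IsRep l) (h : A.approx l' = B.approx l') (hl : l < l') :
    B.IsRep l := by
  intro m hm
  by_contra! hml
  exact hml.not_ge (hA m ((approx_eq_approx_iff.1 h m (hml.trans hl) l hl).2 hm))

lemma initSeg_iff : InitSeg s B ↔ B.IsRep s.1 ∧ B.approx s.1 = s := by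
  constructor
  · rintro ⟨n, rfl⟩
    exact ⟨Nat.nth_mem_of_infinite B.infinite_isRep n, rfl⟩
  · rintro ⟨hrep, happrox⟩
    refine ⟨Nat.count B.IsRep s.1, ?_⟩
    have hmu : B.mu (Nat.count B.IsRep s.1) = s.1 := Nat.nth_count hrep
    change B.approx (B.mu _) = s
    rw [hmu, happrox]

lemma mem_cube : D ∈ cube s B ↔ D.IsRep s.1 ∧ D.approx s.1 = s ∧ D ≤ B :=
  (and_congr_left' initSeg_iff).trans and_assoc

lemma le_of_mem_cube (hD : D ∈ cube s B) : D ≤ B := hD.2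

lemma cube_mono (s : FinApprox) : Monotone (cube s) :=
  fun _ _ h _ hD => ⟨hD.1, (le_of_mem_cube hD).trans h⟩

lemma self_mem_cube (h : InitSeg s B) : B ∈ cube s B := ⟨h, le_refl B⟩

lemma isRep_of_cube_nonempty (h : (cube s B).Nonempty) : B.IsRep s.1 :=
  (mem_cube.1 h.some_mem).1.of_le (le_of_mem_cube h.some_mem)

/-- The cube `[r_n(B), B]` (usually abbreviated `[n, B]`), indexed by `l = μ_n(B)` instead of
`n`. -/
def cubeAt (B : Einf) (l : ℕ) : Set Einf := cube (B.approx l) B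

lemma mem_cubeAt : D ∈ B.cubeAt l ↔ D.IsRep l ∧ D.approx l = B.approx l ∧ D ≤ B := mem_cube

lemma InitSeg.cubeAt_eq (h : InitSeg s B) : B.cubeAt s.1 = cube s B := by
  rw [cubeAt, (initSeg_iff.1 h).2]

lemma self_mem_cubeAt (h : B.IsRep l) : B ∈ B.cubeAt l := mem_cubeAt.2 ⟨h, rfl, le_rfl⟩

lemma IsRep.of_mem_cubeAt {y : ℕ} (hA : A ∈ B.cubeAt l) (hy : B.IsRep y) (hyl : y ≤ l) :
    A.IsRep y := by
  rcases hyl.eq_or_lt with rfl | hlt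
  · exact (mem_cubeAt.1 hA).1
  · exact hy.of_approx_eq (mem_cubeAt.1 hA).2.1.symm hlt

lemma cubeAt_trans (hll' : l ≤ l') (hD : D ∈ B.cubeAt l) (hA : A ∈ D.cubeAt l') :
    A ∈ B.cubeAt l := by
  have hD' := mem_cubeAt.1 hD
  have hA' := mem_cubeAt.1 hA
  exact mem_cubeAt.2 ⟨hD'.1.of_mem_cubeAt hA hll', (approx_eq_of_le hA'.2.1 hll').trans hD'.2.1,
    hA'.2.2.trans hD'.2.2⟩

lemma cubeAt_subset (hD : D ∈ B.cubeAt l) : D.cubeAt l ⊆ B.cubeAt l :=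
  fun _ hA => cubeAt_trans le_rfl hD hA

end Cubes

section Collapse

variable {A B D : Einf} {l : ℕ} {s : FinApprox}

/-- The coarsening of `B` in which the classes of two representatives `y` and `y'` are joined
whenever `g y = g y'`. -/
noncomputable def collapse (B : Einf) (g : ℕ → ℕ) (hg : ∀ y, B.IsRep y → g y ≤ y)
    (hfix : {y | B.IsRep y ∧ g y = y}.Infinite) : Einf :=
  ⟨Setoid.ker (g ∘ B.rep), (infinite_quotient_iff _).2 <| hfix.mono fun y hy m hm => calc
    y = g (B.rep y) := by rw [isRep_iff_rep_eq.1 hy.1, hy.2]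
    _ = g (B.rep m) := hm.symm
    _ ≤ B.rep m := hg _ (B.isRep_rep m)
    _ ≤ m := B.rep_le m⟩

variable {g : ℕ → ℕ} {hg : ∀ y, B.IsRep y → g y ≤ y} {hfix : {y | B.IsRep y ∧ g y = y}.Infinite}
  {x y : ℕ}

lemma collapse_rel : (B.collapse g hg hfix).1 x y ↔ g (B.rep x) = g (B.rep y) := Iff.rfl

lemma collapse_rel_of_isRep (hx : B.IsRep x) (hy : B.IsRep y) :
    (B.collapse g hg hfix).1 x y ↔ g x = g y := by
  rw [collapse_rel, isRep_iff_rep_eq.1 hx, isRep_iff_rep_eq.1 hy]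

lemma collapse_le : B.collapse g hg hfix ≤ B :=
  fun _ _ h => congrArg g (rep_eq_rep_iff.2 h)

lemma isRep_collapse (hy : B.IsRep y) (hgy : g y = y) : (B.collapse g hg hfix).IsRep y := by
  intro m hm
  rw [collapse_rel, isRep_iff_rep_eq.1 hy, hgy] at hm
  exact hm ▸ (hg _ (B.isRep_rep m)).trans (B.rep_le m)

lemma le_of_forall_isRep (hDB : D ≤ B) (hAB : A ≤ B) (h : ∀ y, B.IsRep y → D.1 y (A.rep y)) :
    D ≤ A := by
  have hrep (x : ℕ) : D.1 x (A.rep x) := by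
    have := h _ (B.isRep_rep x)
    rw [rep_rep_of_le hAB] at this
    exact D.1.trans (hDB _ _ (B.1.symm (B.rep_rel x))) this
  intro i j hij
  refine D.1.trans (hrep i) ?_
  rw [rep_eq_rep_iff.2 hij]
  exact D.1.symm (hrep j)

lemma le_collapse (hDB : D ≤ B) (h : ∀ y, B.IsRep y → D.1 y (g y)) :
    D ≤ B.collapse g hg hfix := by
  have hrep (x : ℕ) : D.1 x (g (B.rep x)) :=
    D.1.trans (hDB _ _ (B.1.symm (B.rep_rel x))) (h _ (B.isRep_rep x))
  intro i j (hij : g (B.rep i) = g (B.rep j))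
  exact D.1.trans (hrep i) (hij ▸ D.1.symm (hrep j))

lemma collapse_mem_cubeAt (hl : B.IsRep l) (h : ∀ y ≤ l, B.IsRep y → g y = y) :
    B.collapse g hg hfix ∈ B.cubeAt l := by
  refine mem_cubeAt.2 ⟨isRep_collapse hl (h l le_rfl hl),
    approx_eq_approx_iff.2 fun i hi j hj => ?_, collapse_le⟩
  rw [collapse_rel, h _ ((B.rep_le i).trans hi.le) (B.isRep_rep i),
    h _ ((B.rep_le j).trans hj.le) (B.isRep_rep j), rep_eq_rep_iff]

lemma exists_mem_cubeAt_cube_subset (hD : D ∈ cube s B) :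
    ∃ B' ∈ B.cubeAt s.1, cube s B' ⊆ cube s D := by
  obtain ⟨hDrep, hDs, hDB⟩ := mem_cube.1 hD
  let g (y : ℕ) : ℕ := if y < s.1 then y else D.rep y
  have hg (y : ℕ) (_ : B.IsRep y) : g y ≤ y := by
    simp only [g]
    split_ifs
    · exact le_rfl
    · exact D.rep_le y
  have hgD {y : ℕ} (hy : D.IsRep y) : g y = y := by simp only [g, isRep_iff_rep_eq.1 hy, ite_self]
  have hfix : {y | B.IsRep y ∧ g y = y}.Infinite :=
    D.infinite_isRep.mono fun y hy => ⟨IsRep.of_le hDB hy, hgD hy⟩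
  refine ⟨B.collapse g hg hfix, collapse_mem_cubeAt (hDrep.of_le hDB) fun y hy _ => ?_,
    fun G hG => ⟨hG.1, ?_⟩⟩
  · rcases hy.eq_or_lt with rfl | hlt
    · exact hgD hDrep
    · exact if_pos hlt
  have hGD : G.approx s.1 = D.approx s.1 := (mem_cube.1 hG).2.1.trans hDs.symm
  refine le_of_forall_isRep ((le_of_mem_cube hG).trans collapse_le) hDB fun y hy => ?_
  rcases lt_or_ge y s.1 with hlt | hge
  · exact (approx_eq_approx_iff.1 hGD y hlt _ ((D.rep_le y).trans_lt hlt)).2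
      (D.1.symm (D.rep_rel y))
  · refine hG.2 _ _ ((collapse_rel_of_isRep hy ((D.isRep_rep y).of_le hDB)).2 ?_)
    rw [hgD (D.isRep_rep y)]
    exact if_neg hge.not_gt

end Collapse

section Fusion

variable {B : Einf} {l l₀ : ℕ}

lemma exists_forall_mem_cubeAt_of_chain {b : ℕ → Einf} {e : ℕ → ℕ} (he : StrictMono e)
    (hb : ∀ n, b (n + 1) ∈ (b n).cubeAt (e n)) : ∃ B, ∀ n, B ∈ (b n).cubeAt (e n) := by
  have hmem {n m : ℕ} (h : n ≤ m) : b m ∈ (b n).cubeAt (e n) := by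
    induction m, h using Nat.le_induction with
    | base => exact self_mem_cubeAt ((mem_cubeAt.1 (hb n)).1.of_le (le_of_mem_cube (hb n)))
    | succ m h ih => exact cubeAt_trans (he.monotone h) ih (hb m)
  have hle {n m : ℕ} (h : n ≤ m) : b m ≤ b n := le_of_mem_cube (hmem h)
  let S : Setoid ℕ := {
    r := fun x y => ∃ n, (b n).1 x y
    iseqv := ⟨fun x => ⟨0, (b 0).1.refl x⟩, fun ⟨n, h⟩ => ⟨n, (b n).1.symm h⟩,
      fun ⟨n, h⟩ ⟨m, h'⟩ => ⟨max n m, (b _).1.trans (hle (le_max_left n m) _ _ h)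
        (hle (le_max_right n m) _ _ h')⟩⟩ }
  have hrep (n m : ℕ) (h : S m (e n)) : e n ≤ m := by
    obtain ⟨k, hk⟩ := h
    exact (mem_cubeAt.1 (hmem (le_max_left n k))).1 m (hle (le_max_right n k) _ _ hk)
  have hinf : {l | ∀ m, S m l → l ≤ m}.Infinite :=
    infinite_of_injective_forall_mem he.injective hrep
  refine ⟨⟨S, (infinite_quotient_iff S).2 hinf⟩, fun n => mem_cubeAt.2
    ⟨hrep n, approx_eq_approx_iff.2 fun i hi j hj => ⟨?_, fun h => ⟨n, h⟩⟩, fun i j h => ⟨n, h⟩⟩⟩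
  rintro ⟨k, hk⟩
  exact (approx_eq_approx_iff.1 (mem_cubeAt.1 (hmem (le_max_left n k))).2.1 i hi j hj).1
    (hle (le_max_right n k) _ _ hk)

lemma exists_fusion_isRep {R : ℕ → Einf → Prop} (hanti : ∀ l, Antitone (R l))
    (hdense : ∀ l (B : Einf), B.IsRep l → ∃ B' ∈ B.cubeAt l, R l B') (hl₀ : B.IsRep l₀) :
    ∃ B' ∈ B.cubeAt l₀, ∀ l, l₀ ≤ l → B'.IsRep l → R l B' := by
  let State := {t : Einf × ℕ // t.1.IsRep t.2}
  have hstep (t : State) : ∃ t' : State, t'.1.1 ∈ t.1.1.cubeAt t.1.2 ∧ R t.1.2 t'.1.1 ∧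
      t'.1.1.IsNextRep t.1.2 t'.1.2 := by
    obtain ⟨B', hB', hR⟩ := hdense t.1.2 t.1.1 t.2
    obtain ⟨l', hl'⟩ := B'.exists_isNextRep t.1.2
    exact ⟨⟨(B', l'), hl'.1⟩, hB', hR, hl'⟩
  choose next hmem hR hnext using hstep
  let S (n : ℕ) : State := Nat.rec ⟨(B, l₀), hl₀⟩ (fun _ => next) n
  let b (n : ℕ) : Einf := (S n).1.1
  let e (n : ℕ) : ℕ := (S n).1.2
  have he : StrictMono e := strictMono_nat_of_lt_succ fun n => (hnext (S n)).2.1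
  obtain ⟨B', hB'⟩ := exists_forall_mem_cubeAt_of_chain (b := b) he fun n => hmem (S n)
  have hle (n : ℕ) : B' ≤ b n := le_of_mem_cube (hB' n)
  refine ⟨B', hB' 0, fun l hl hrep => ?_⟩
  obtain ⟨n, hn, hn'⟩ : ∃ n, e n ≤ l ∧ l < e (n + 1) := by
    obtain ⟨n, hn, hn'⟩ :=
      he.exists_between_of_tendsto_atTop he.tendsto_atTop (Nat.lt_succ_of_le hl)
    exact ⟨n, Nat.le_of_lt_succ hn, hn'⟩
  have hel : e n = l := hn.antisymm <| by
    by_contra! hlt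
    exact hn'.not_ge ((hnext (S n)).2.2 l (hrep.of_le (hle (n + 1))) hlt)
  exact hel ▸ hanti _ (hle (n + 1)) (hR (S n))

lemma exists_mem_cubeAt_forall_finite {κ : Type*} [Finite κ] {R : κ → Einf → Prop}
    (hanti : ∀ k, Antitone (R k)) (hdense : ∀ k (B : Einf), B.IsRep l → ∃ B' ∈ B.cubeAt l, R k B')
    (hl : B.IsRep l) : ∃ B' ∈ B.cubeAt l, ∀ k, R k B' := by
  suffices ∃ B' ∈ B.cubeAt l, ∀ k ∈ univ, R k B' by simpa only [mem_univ, true_imp_iff] using this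
  refine Set.Finite.induction_on (motive := fun t _ => ∃ B' ∈ B.cubeAt l, ∀ k ∈ t, R k B') _
    (Set.toFinite (univ : Set κ)) ⟨B, self_mem_cubeAt hl, fun _ h => h.elim⟩ ?_
  rintro k t - - ⟨B₁, hB₁, ht⟩
  obtain ⟨B₂, hB₂, hk⟩ := hdense k B₁ (mem_cubeAt.1 hB₁).1
  exact ⟨B₂, cubeAt_subset hB₁ hB₂, forall_mem_insert.2
    ⟨hk, fun k' hk' => hanti k' (le_of_mem_cube hB₂) (ht k' hk')⟩⟩

theorem exists_fusion {ι : Type*} [Encodable ι] {T : ι → FinApprox → Einf → Prop}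
    (hanti : ∀ k s, Antitone (T k s))
    (hdense : ∀ k s B, (cube s B).Nonempty → ∃ B' ∈ B.cubeAt s.1, T k s B') (hl₀ : B.IsRep l₀) :
    ∃ B' ∈ B.cubeAt l₀, ∀ k s, Encodable.encode k ≤ s.1 → l₀ ≤ s.1 → (cube s B').Nonempty →
      T k s B' := by
  let R (l : ℕ) (C : Einf) : Prop := ∀ p : {k : ι // Encodable.encode k ≤ l} × Setoid (Fin l),
    (cube ⟨l, p.2⟩ C).Nonempty → T p.1 ⟨l, p.2⟩ C
  have hR (l : ℕ) (p : {k : ι // Encodable.encode k ≤ l} × Setoid (Fin l)) :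
      Antitone fun C => (cube ⟨l, p.2⟩ C).Nonempty → T p.1 ⟨l, p.2⟩ C :=
    fun C C' hle h hne => hanti _ _ hle (h (hne.mono (cube_mono _ hle)))
  have hRdense (l : ℕ) (C : Einf) (hC : C.IsRep l) : ∃ C' ∈ C.cubeAt l, R l C' := by
    have : Finite {k : ι // Encodable.encode k ≤ l} :=
      ((finite_Iic l).preimage Encodable.encode_injective.injOn).to_subtype
    have : Finite (Setoid (Fin l)) :=
      .of_injective (fun σ : Setoid (Fin l) => ⇑σ) fun _ _ => Setoid.eq_iff_rel_eq.2
    refine exists_mem_cubeAt_forall_finite (hR l) (fun p C hC => ?_) hC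
    by_cases hne : (cube ⟨l, p.2⟩ C).Nonempty
    · obtain ⟨C', hC', h⟩ := hdense p.1 _ C hne
      exact ⟨C', hC', fun _ => h⟩
    · exact ⟨C, self_mem_cubeAt hC, fun h => absurd h hne⟩
  obtain ⟨B', hB', hT⟩ :=
    exists_fusion_isRep (fun l C C' hle h p => hR l p hle (h p)) hRdense hl₀
  exact ⟨B', hB', fun k s hk hs hne =>
    hT s.1 hs (isRep_of_cube_nonempty hne) (⟨k, hk⟩, s.2) hne⟩

theorem exists_fusion_cube {ι : Type*} [Encodable ι] {Q : ι → FinApprox → Set Einf → Prop}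
    (hanti : ∀ k s, Antitone (Q k s))
    (hdense : ∀ k s D, InitSeg s D → ∃ D' ∈ cube s D, Q k s (cube s D')) (hl₀ : B.IsRep l₀) :
    ∃ B' ∈ B.cubeAt l₀, ∀ k s, Encodable.encode k ≤ s.1 → l₀ ≤ s.1 → (cube s B').Nonempty →
      Q k s (cube s B') := by
  refine exists_fusion (T := fun k s C => Q k s (cube s C))
    (fun k s C C' hle => hanti k s (cube_mono s hle)) (fun k s C ⟨D, hD⟩ => ?_) hl₀
  obtain ⟨D', hD', hQ⟩ := hdense k s D hD.1
  obtain ⟨C', hC', hsub⟩ := exists_mem_cubeAt_cube_subset (cube_mono s hD.2 hD')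
  exact ⟨C', hC', hanti k s hsub hQ⟩

end Fusion

/-! ### Ellentuck's theorem -/

section Pigeonhole

variable {A B : Einf} {l y : ℕ}

/-- The `k`-th representative of `B` greater than `l`, counted from `k = 0`. -/
noncomputable def repAfter (B : Einf) (l k : ℕ) : ℕ := Nat.nth (fun y => l < y ∧ B.IsRep y) k

lemma infinite_lt_isRep (B : Einf) (l : ℕ) : {y | l < y ∧ B.IsRep y}.Infinite :=
  (B.infinite_isRep.sdiff (finite_Iic l)).mono fun _ hy => ⟨not_le.1 hy.2, hy.1⟩

lemma repAfter_strictMono (B : Einf) (l : ℕ) : StrictMono (B.repAfter l) :=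
  Nat.nth_strictMono (B.infinite_lt_isRep l)

lemma lt_repAfter (B : Einf) (l k : ℕ) : l < B.repAfter l k :=
  (Nat.nth_mem_of_infinite (B.infinite_lt_isRep l) k).1

lemma isRep_repAfter (B : Einf) (l k : ℕ) : B.IsRep (B.repAfter l k) :=
  (Nat.nth_mem_of_infinite (B.infinite_lt_isRep l) k).2

lemma IsRep.exists_repAfter_eq (hy : B.IsRep y) (hly : l < y) : ∃ k, B.repAfter l k = y :=
  ⟨_, Nat.nth_count (p := fun y => l < y ∧ B.IsRep y) ⟨hly, hy⟩⟩

/-- The alphabet for words coding coarsenings of `B` that agree with `B` up to `l`: a letter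
stands for the class of a representative up to `l`. -/
abbrev Letter (B : Einf) (l : ℕ) : Type := {a : ℕ // a ≤ l ∧ B.IsRep a}

instance : Finite (B.Letter l) := ((finite_Iic l).subset fun _ ha => ha.1).to_subtype

/-- The representative denoted by a letter or by a variable; the `k`-th variable denotes
`B.repAfter l k`. -/
noncomputable def symbolVal (B : Einf) (l : ℕ) : B.Letter l ⊕ ℕ → ℕ :=
  Sum.elim (↑) (B.repAfter l)

/-- The substitution that sends the `k`-th representative of `B` greater than `l` to the value of
the symbol `H k`, and fixes the representatives up to `l`. -/
noncomputable def substFun (B : Einf) (l : ℕ) (H : ℕ → B.Letter l ⊕ ℕ) (y : ℕ) : ℕ :=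
  if y ≤ l then y else B.symbolVal l (H (Nat.count (fun y => l < y ∧ B.IsRep y) y))

variable {H : ℕ → B.Letter l ⊕ ℕ}

lemma substFun_of_le (h : y ≤ l) : B.substFun l H y = y := if_pos h

lemma substFun_repAfter (k : ℕ) : B.substFun l H (B.repAfter l k) = B.symbolVal l (H k) := by
  rw [substFun, if_neg (B.lt_repAfter l k).not_ge, repAfter,
    Nat.count_nth_of_infinite (B.infinite_lt_isRep l)]

lemma exists_mem_cubeAt_of_isPattern (hl : B.IsRep l) (hH : CarlsonSimpson.IsPattern H) :
    ∃ D ∈ B.cubeAt l, (∀ k, D.1 (B.repAfter l k) (B.symbolVal l (H k))) ∧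
      ∀ k, D.IsRep (B.repAfter l k) → H k = .inr k := by
  have hg (y : ℕ) (hy : B.IsRep y) : B.substFun l H y ≤ y := by
    rcases le_or_gt y l with h | h
    · exact (substFun_of_le h).le
    obtain ⟨k, rfl⟩ := hy.exists_repAfter_eq h
    rw [substFun_repAfter]
    cases hk : H k with
    | inl a => exact a.2.1.trans (B.lt_repAfter l k).le
    | inr m => exact (B.repAfter_strictMono l).monotone (hH.1 k m hk).1
  have hfixed {m : ℕ} (hm : H m = .inr m) : B.substFun l H (B.repAfter l m) = B.repAfter l m := by
    rw [substFun_repAfter, hm, symbolVal, Sum.elim_inr]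
  have hfix : {y | B.IsRep y ∧ B.substFun l H y = y}.Infinite := by
    have hinf : {m | H m = .inr m}.Infinite :=
      Nat.frequently_atTop_iff_infinite.1 (Filter.frequently_atTop.2 hH.2)
    refine (hinf.image (B.repAfter_strictMono l).injective.injOn).mono ?_
    rintro _ ⟨m, hm, rfl⟩
    exact ⟨B.isRep_repAfter l m, hfixed hm⟩
  have hrel (k : ℕ) :
      (B.collapse _ hg hfix).1 (B.repAfter l k) (B.symbolVal l (H k)) := by
    cases hk : H k with
    | inl a =>
      rw [symbolVal, Sum.elim_inl, collapse_rel_of_isRep (B.isRep_repAfter l k) a.2.2,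
        substFun_repAfter, hk, substFun_of_le a.2.1, symbolVal, Sum.elim_inl]
    | inr m =>
      rw [symbolVal, Sum.elim_inr,
        collapse_rel_of_isRep (B.isRep_repAfter l k) (B.isRep_repAfter l m), hfixed (hH.1 k m hk).2,
        substFun_repAfter, hk, symbolVal, Sum.elim_inr]
  refine ⟨B.collapse _ hg hfix, collapse_mem_cubeAt hl fun y hy _ => substFun_of_le hy, hrel,
    fun k hrep => ?_⟩
  have hle := hrep _ (Setoid.symm' _ (hrel k))
  cases hk : H k with
  | inl a =>
    rw [hk] at hle
    exact absurd (hle.trans a.2.1) (B.lt_repAfter l k).not_ge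
  | inr m =>
    rw [hk] at hle
    exact congrArg _ ((hH.1 k m hk).1.antisymm ((B.repAfter_strictMono l).le_iff_le.1 hle))

/-- The approximation coded by a word `w`: the `k`-th representative of `B` greater than `l` lies
in the class of the letter `w[k]`, and `B.repAfter l w.length` starts the next class. -/
noncomputable def wordApprox (B : Einf) (l : ℕ) (w : List (B.Letter l)) : FinApprox :=
  ⟨B.repAfter l w.length, Setoid.ker fun i : Fin _ =>
    B.substFun l (fun k => w[k]?.elim (.inr k) .inl) (B.rep i)⟩

lemma approx_eq_wordApprox (hA : A ∈ B.cubeAt l) {w : List (B.Letter l)}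
    (hw : ∀ k (hk : k < w.length), A.rep (B.repAfter l k) = w[k]) :
    A.approx (B.repAfter l w.length) = B.wordApprox l w := by
  have hrep (x : ℕ) (hx : x < B.repAfter l w.length) :
      A.rep x = B.substFun l (fun k => w[k]?.elim (.inr k) .inl) (B.rep x) := by
    rw [← rep_rep_of_le (le_of_mem_cube hA)]
    rcases le_or_gt (B.rep x) l with h | h
    · rw [substFun_of_le h, isRep_iff_rep_eq.1 ((B.isRep_rep x).of_mem_cubeAt hA h)]
    obtain ⟨k, hk⟩ := (B.isRep_rep x).exists_repAfter_eq h
    have hkw : k < w.length := (B.repAfter_strictMono l).lt_iff_lt.1 <| calc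
      B.repAfter l k = B.rep x := hk
      _ ≤ x := B.rep_le x
      _ < B.repAfter l w.length := hx
    rw [← hk, substFun_repAfter, hw k hkw, List.getElem?_eq_getElem hkw]
    rfl
  refine congrArg (Sigma.mk (β := fun k => Setoid (Fin k)) _) (Setoid.ext fun i j => ?_)
  rw [Setoid.comap_rel, Setoid.ker_def, ← hrep i i.2, ← hrep j j.2, rep_eq_rep_iff]

theorem exists_mem_cubeAt_forall_approx_iff (hl : B.IsRep l) (c : FinApprox → Prop) :
    ∃ D ∈ B.cubeAt l, ∃ b : Prop, ∀ A ∈ D.cubeAt l, ∀ l', A.IsNextRep l l' →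
      (c (A.approx l') ↔ b) := by
  have : Nonempty (B.Letter l) := ⟨⟨l, le_rfl, hl⟩⟩
  obtain ⟨b, H, hH, hc⟩ := CarlsonSimpson.exists_isPattern_forall_iff fun w => c (B.wordApprox l w)
  obtain ⟨D, hD, hrel, hvar⟩ := exists_mem_cubeAt_of_isPattern hl hH
  refine ⟨D, hD, b, fun A hA l' ⟨hl', hll', hnext⟩ => ?_⟩
  have hAD := le_of_mem_cube hA
  have hAB := cubeAt_subset hD hA
  obtain ⟨N, rfl⟩ := (hl'.of_le (le_of_mem_cube hAB)).exists_repAfter_eq hll'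
  have hletter (m : ℕ) : ∃ a : B.Letter l, m < N → A.rep (B.repAfter l m) = a := by
    by_cases hm : m < N
    · refine ⟨⟨A.rep (B.repAfter l m), ?_, (A.isRep_rep _).of_le (le_of_mem_cube hAB)⟩,
        fun _ => rfl⟩
      by_contra! hlt
      exact ((A.rep_le _).trans_lt (B.repAfter_strictMono l hm)).not_ge
        (hnext _ (A.isRep_rep _) hlt)
    · exact ⟨Classical.arbitrary _, fun h => absurd h hm⟩
  choose φ hφ using hletter
  let w := (List.range N).map fun k => Sum.elim id φ (H k)
  have hlength : w.length = N := by simp [w]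
  have hw (k : ℕ) (hk : k < w.length) : A.rep (B.repAfter l k) = w[k] := by
    have hkN : k < N := hlength ▸ hk
    rw [rep_eq_rep_iff.2 (hAD _ _ (hrel k))]
    simp only [w, List.getElem_map, List.getElem_range]
    cases hHk : H k with
    | inl a => exact isRep_iff_rep_eq.1 (a.2.2.of_mem_cubeAt hAB a.2.1)
    | inr m => exact hφ m ((hH.1 k m hHk).1.trans_lt hkN)
  have happrox := approx_eq_wordApprox hAB hw
  rw [hlength] at happrox
  exact happrox ▸ hc φ N (hvar N (hl'.of_le hAD))

end Pigeonhole

section Ellentuck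

variable {A B : Einf} {l l₀ : ℕ} {X U : Set Einf}

/-- Ramsey sets in the sense of Ellentuck: every nonempty cube `[s, B]` contains a cube `[s, D]`
that is included in `X` or disjoint from `X`. -/
def IsCompletelyRamsey (X : Set Einf) : Prop :=
  ∀ s B, (cube s B).Nonempty → ∃ D ∈ cube s B, cube s D ⊆ X ∨ cube s D ⊆ Xᶜ

lemma isCompletelyRamsey_of_cubeAt
    (h : ∀ (B : Einf) l, B.IsRep l → ∃ D ∈ B.cubeAt l, D.cubeAt l ⊆ X ∨ D.cubeAt l ⊆ Xᶜ) :
    IsCompletelyRamsey X := by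
  rintro s B ⟨A, hA⟩
  obtain ⟨D, hD, hDX⟩ := h A s.1 (mem_cube.1 hA).1
  rw [hA.1.cubeAt_eq] at hD
  rw [hD.1.cubeAt_eq] at hDX
  exact ⟨D, cube_mono s hA.2 hD, hDX⟩

lemma IsCompletelyRamsey.compl (hX : IsCompletelyRamsey X) : IsCompletelyRamsey Xᶜ := by
  intro s B h
  obtain ⟨D, hD, hDX⟩ := hX s B h
  exact ⟨D, hD, hDX.symm.imp_right (compl_compl X).symm.subset.trans'⟩

lemma isCompletelyRamsey_empty : IsCompletelyRamsey ∅ := fun _ _ ⟨D, hD⟩ =>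
  ⟨D, hD, .inr (compl_empty ▸ subset_univ _)⟩

lemma exists_mem_cubeAt_forall_subset (U : Set Einf) (hl₀ : B.IsRep l₀) :
    ∃ B₁ ∈ B.cubeAt l₀, ∀ s, l₀ ≤ s.1 → ∀ D ∈ cube s B₁, cube s D ⊆ U → cube s B₁ ⊆ U := by
  obtain ⟨B₁, hB₁, h⟩ := exists_fusion_cube
    (Q := fun (_ : Unit) s S => (∃ D ∈ S, cube s D ⊆ U) → S ⊆ U)
    (fun _ _ S S' hS h ⟨D, hD, hDU⟩ => hS.trans (h ⟨D, hS hD, hDU⟩))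
    (fun _ s D hD => by
      by_cases h : ∃ D' ∈ cube s D, cube s D' ⊆ U
      · obtain ⟨D', hD', h⟩ := h
        exact ⟨D', hD', fun _ => h⟩
      · exact ⟨D, self_mem_cube hD, fun h' => absurd h' h⟩) hl₀
  exact ⟨B₁, hB₁, fun s hs D hD hDU => h () s (Nat.zero_le _) hs ⟨D, hD⟩ ⟨D, hD, hDU⟩⟩

lemma exists_mem_cubeAt_forall_not_subset (hB : B.IsRep l₀)
    (hU : ∀ s, l₀ ≤ s.1 → ∀ D ∈ cube s B, cube s D ⊆ U → cube s B ⊆ U) :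
    ∃ B' ∈ B.cubeAt l₀, ∀ s, l₀ ≤ s.1 → ¬ cube s B ⊆ U → ∀ A ∈ cube s B', ∀ l',
      A.IsNextRep s.1 l' → ¬ cube (A.approx l') B ⊆ U := by
  let Q (_ : Unit) (s : FinApprox) (S : Set Einf) : Prop :=
    l₀ ≤ s.1 → ¬ cube s B ⊆ U → ∀ A ∈ S, A ≤ B → ∀ l',
      A.IsNextRep s.1 l' → ¬ cube (A.approx l') B ⊆ U
  have hdense (u : Unit) (s : FinApprox) (D : Einf) (hD : InitSeg s D) :
      ∃ D' ∈ cube s D, Q u s (cube s D') := by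
    by_cases hM : ∃ M ∈ cube s D, M ≤ B
    swap
    · exact ⟨D, self_mem_cube hD, fun _ _ A hA hAB => absurd ⟨A, hA, hAB⟩ hM⟩
    obtain ⟨M, hMD, hMB⟩ := hM
    obtain ⟨D', hD', b, hb⟩ :=
      exists_mem_cubeAt_forall_approx_iff (mem_cube.1 hMD).1 fun t => cube t B ⊆ U
    rw [hMD.1.cubeAt_eq] at hD'
    rw [hD'.1.cubeAt_eq] at hb
    have hD'B : D' ≤ B := (le_of_mem_cube hD').trans hMB
    refine ⟨D', cube_mono s hMD.2 hD', fun hs hsU A hA _ l' hl' hAU => hsU ?_⟩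
    have hb' : b := (hb A hA l' hl').1 hAU
    refine hU s hs D' ⟨hD'.1, hD'B⟩ fun G hG => ?_
    obtain ⟨k, hk⟩ := G.exists_isNextRep s.1
    exact (hb G hG k hk).2 hb' (mem_cube.2 ⟨hk.1, rfl, (le_of_mem_cube hG).trans hD'B⟩)
  obtain ⟨B', hB', h⟩ := exists_fusion_cube (Q := Q)
    (fun _ _ _ _ hS h hs hsU A hA => h hs hsU A (hS hA)) hdense hB
  exact ⟨B', hB', fun s hs hsU A hA => h () s (Nat.zero_le _) hs ⟨A, hA⟩ hs hsU A hA
    ((le_of_mem_cube hA).trans (le_of_mem_cube hB'))⟩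

lemma IsRep.exists_isNextRep_of_lt (hl₀ : A.IsRep l₀) (hl : A.IsRep l) (hlt : l₀ < l) :
    ∃ k, l₀ ≤ k ∧ A.IsRep k ∧ A.IsNextRep k l := by
  have hle : l₀ ≤ l - 1 := by omega
  have hlast := Nat.findGreatest_le (P := A.IsRep) (l - 1)
  refine ⟨Nat.findGreatest A.IsRep (l - 1), Nat.le_findGreatest hle hl₀,
    Nat.findGreatest_spec hle hl₀, hl, by omega, fun j hj hkj => ?_⟩
  by_contra! hjl
  exact Nat.findGreatest_is_greatest hkj (by omega) hj

lemma exists_cubeAt_subset_or_forall_not_cubeAt_subset (U : Set Einf) (hl₀ : B.IsRep l₀) :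
    ∃ D ∈ B.cubeAt l₀, D.cubeAt l₀ ⊆ U ∨
      ∀ A ∈ D.cubeAt l₀, ∀ l, l₀ ≤ l → A.IsRep l → ¬ A.cubeAt l ⊆ U := by
  obtain ⟨B₁, hB₁, h₁⟩ := exists_mem_cubeAt_forall_subset U hl₀
  by_cases hB₁U : B₁.cubeAt l₀ ⊆ U
  · exact ⟨B₁, hB₁, .inl hB₁U⟩
  obtain ⟨B₂, hB₂, h₂⟩ := exists_mem_cubeAt_forall_not_subset (mem_cubeAt.1 hB₁).1 h₁
  refine ⟨B₂, cubeAt_subset hB₁ hB₂, .inr fun A hA => ?_⟩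
  have hAB₂ := le_of_mem_cube hA
  have hAB₁ := hAB₂.trans (le_of_mem_cube hB₂)
  have hreject (l : ℕ) (hl : l₀ ≤ l) (hAl : A.IsRep l) : ¬ cube (A.approx l) B₁ ⊆ U := by
    induction l using Nat.strong_induction_on with
    | _ l ih =>
      rcases hl.eq_or_lt with rfl | hlt
      · rwa [(mem_cubeAt.1 hA).2.1, (mem_cubeAt.1 hB₂).2.1]
      · obtain ⟨k, hk, hAk, hkl⟩ := (mem_cubeAt.1 hA).1.exists_isNextRep_of_lt hAl hlt
        exact h₂ (A.approx k) hk (ih k hkl.2.1 hk hAk) A (mem_cube.2 ⟨hAk, rfl, hAB₂⟩) l hkl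
  exact fun l hl hAl hAU =>
    hreject l hl hAl (h₁ (A.approx l) hl A (mem_cube.2 ⟨hAl, rfl, hAB₁⟩) hAU)

theorem isCompletelyRamsey_iUnion {X : ℕ → Set Einf} (hX : ∀ n, IsCompletelyRamsey (X n)) :
    IsCompletelyRamsey (⋃ n, X n) := by
  refine isCompletelyRamsey_of_cubeAt fun B l₀ hl₀ => ?_
  obtain ⟨B₁, hB₁, h₁⟩ := exists_fusion_cube (Q := fun n _ S => S ⊆ X n ∨ S ⊆ (X n)ᶜ)
    (fun _ _ _ _ hS h => h.imp hS.trans hS.trans)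
    (fun n s D hD => hX n s D ⟨D, self_mem_cube hD⟩) hl₀
  obtain ⟨D, hD, hDU | hDU⟩ :=
    exists_cubeAt_subset_or_forall_not_cubeAt_subset (⋃ n, X n) (mem_cubeAt.1 hB₁).1
  · exact ⟨D, cubeAt_subset hB₁ hD, .inl hDU⟩
  refine ⟨D, cubeAt_subset hB₁ hD, .inr fun A hA hAU => ?_⟩
  obtain ⟨n, hn⟩ := mem_iUnion.1 hAU
  obtain ⟨l, hl, hAl⟩ := A.exists_isRep_gt (max n l₀)
  have hnl : n ≤ l := (le_max_left n l₀).trans hl.le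
  have hl₀l : l₀ ≤ l := (le_max_right n l₀).trans hl.le
  have hAB₁ : A ≤ B₁ := (le_of_mem_cube hA).trans (le_of_mem_cube hD)
  have hmem : A ∈ cube (A.approx l) B₁ := mem_cube.2 ⟨hAl, rfl, hAB₁⟩
  rcases h₁ n (A.approx l) hnl hl₀l ⟨A, hmem⟩ with h | h
  · exact hDU A hA l hl₀l hAl
      ((cube_mono _ hAB₁).trans (h.trans (subset_iUnion X n)))
  · exact h hmem hn

lemma exists_mem_cubeAt_forall_isRep_lt (hl : B.IsRep l) (m : ℕ) :
    ∃ D ∈ B.cubeAt l, ∀ y, D.IsRep y → l < y → m < y := by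
  let g (y : ℕ) : ℕ := if l < y ∧ y ≤ m then l else y
  have hg (y : ℕ) (_ : B.IsRep y) : g y ≤ y := by
    simp only [g]
    split_ifs <;> omega
  have hgfix {y : ℕ} (hy : y ≤ l ∨ m < y) : g y = y := if_neg (by omega)
  have hfix : {y | B.IsRep y ∧ g y = y}.Infinite :=
    (B.infinite_isRep.sdiff (finite_Iic m)).mono fun y hy =>
      ⟨hy.1, hgfix (.inr (not_le.1 hy.2))⟩
  refine ⟨B.collapse g hg hfix, collapse_mem_cubeAt hl fun y hy _ => hgfix (.inl hy),
    fun y hy hly => ?_⟩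
  by_contra! hym
  have hrel : (B.collapse g hg hfix).1 l y := by
    rw [collapse_rel_of_isRep hl (hy.of_le collapse_le), hgfix (.inl le_rfl)]
    exact (if_pos ⟨hly, hym⟩).symm
  exact (hy l hrel).not_gt hly

lemma isCompletelyRamsey_rel (i j : ℕ) : IsCompletelyRamsey {A | A.1 i j} := by
  refine isCompletelyRamsey_of_cubeAt fun B l hl => ?_
  obtain ⟨D, hD, hrep⟩ := exists_mem_cubeAt_forall_isRep_lt hl (max i j)
  have hrel {x : ℕ} (hx : x ≤ max i j) {A : Einf} (hA : A ∈ D.cubeAt l) : A.rep x = D.rep x := by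
    have hxl : D.rep x ≤ l := by
      by_contra! h
      exact ((D.rep_le x).trans hx).not_gt (hrep _ (D.isRep_rep x) h)
    rw [← rep_rep_of_le (le_of_mem_cube hA),
      isRep_iff_rep_eq.1 ((D.isRep_rep x).of_mem_cubeAt hA hxl)]
  have hiff {A : Einf} (hA : A ∈ D.cubeAt l) : A.1 i j ↔ D.1 i j := by
    rw [← rep_eq_rep_iff, ← rep_eq_rep_iff, hrel (le_max_left i j) hA, hrel (le_max_right i j) hA]
  by_cases hij : D.1 i j
  · exact ⟨D, hD, .inl fun A hA => (hiff hA).2 hij⟩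
  · exact ⟨D, hD, .inr fun A hA h => hij ((hiff hA).1 h)⟩

end Ellentuck

section Borel

lemma mu_eq_iff {A : Einf} {n k : ℕ} : A.mu n = k ↔ A.IsRep k ∧ Nat.count A.IsRep k = n := by
  constructor
  · rintro rfl
    exact ⟨Nat.nth_mem_of_infinite A.infinite_isRep n,
      Nat.count_nth_of_infinite A.infinite_isRep n⟩
  · rintro ⟨hk, rfl⟩
    exact Nat.nth_count hk

lemma measurable_toCS_of_measurableSet_rel {m : MeasurableSpace Einf}
    (hm : ∀ i j, MeasurableSet {A : Einf | A.1 i j}) : Measurable toCS := by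
  have hrep (k : ℕ) : MeasurableSet {A : Einf | A.IsRep k} :=
    measurableSet_setOfPred.2 <| Measurable.forall fun i =>
      (measurableSet_setOfPred.1 (hm i k)).imp measurable_const
  have hcount (k : ℕ) : Measurable fun A : Einf => Nat.count A.IsRep k := by
    induction k with
    | zero => simpa only [Nat.count_zero] using measurable_const
    | succ k ih =>
      simp only [Nat.count_succ]
      exact ih.add (Measurable.ite (hrep k) measurable_const measurable_const)
  refine measurable_pi_iff.2 fun n => measurable_pi_iff.2 fun i => measurable_to_bool ?_
  have heq : (fun A : Einf => toCS A n i) ⁻¹' {true} =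
      ⋃ k, {A : Einf | A.IsRep k} ∩ (fun A : Einf => Nat.count A.IsRep k) ⁻¹' {n} ∩
        {A : Einf | A.1 i k} := by
    ext A
    simp only [mem_preimage, mem_singleton_iff, toCS, decide_eq_true_eq, mem_iUnion, mem_inter_iff,
      mem_ofPred_eq, ← mu_eq_iff, exists_eq_left']
  rw [heq]
  exact .iUnion fun k => ((hrep k).inter (hcount k (measurableSet_singleton n))).inter (hm i k)

theorem isCompletelyRamsey_of_measurableSet {X : Set Einf} (hX : MeasurableSet X) :
    IsCompletelyRamsey X := by
  let m : MeasurableSpace Einf := {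
    MeasurableSet' := IsCompletelyRamsey
    measurableSet_empty := isCompletelyRamsey_empty
    measurableSet_compl _ := IsCompletelyRamsey.compl
    measurableSet_iUnion _ := isCompletelyRamsey_iUnion }
  exact (measurable_toCS_of_measurableSet_rel (m := m) isCompletelyRamsey_rel).comap_le X hX

lemma measurableSet_rel (i j : ℕ) : MeasurableSet {A : Einf | A.1 i j} := by
  have heq : {A : Einf | A.1 i j} =
      ⋃ n, (fun A => toCS A n i) ⁻¹' {true} ∩ (fun A => toCS A n j) ⁻¹' {true} := by
    ext A
    simp only [mem_ofPred_eq, mem_iUnion, mem_inter_iff, mem_preimage, mem_singleton_iff, toCS,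
      decide_eq_true_eq]
    refine ⟨fun h => ⟨Nat.count A.IsRep (A.rep i), ?_⟩,
      fun ⟨n, hi, hj⟩ => A.1.trans hi (A.1.symm hj)⟩
    rw [mu_eq_iff.2 ⟨A.isRep_rep i, rfl⟩]
    exact ⟨A.1.symm (A.rep_rel i), A.1.symm (A.1.trans (A.rep_rel i) h)⟩
  have hentry (n k : ℕ) : Measurable fun A => toCS A n k :=
    (measurable_pi_apply k).comp ((measurable_pi_apply n).comp (comap_measurable toCS))
  rw [heq]
  exact .iUnion fun n => (hentry n i (measurableSet_singleton _)).inter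
    (hentry n j (measurableSet_singleton _))

/-- The characteristic matrix of the relation `A`. Its Borel range is easier to describe than
that of `toCS`, and it induces the same Borel structure. -/
noncomputable def relMatrix (A : Einf) : ℕ → ℕ → Bool := fun i j => decide (A.1 i j)

lemma range_relMatrix : range relMatrix = {r : ℕ → ℕ → Bool |
    Equivalence (r · ·) ∧ {l | ∀ m, r m l → l ≤ m}.Infinite} := by
  ext r
  constructor
  · rintro ⟨A, rfl⟩
    simpa only [relMatrix, mem_ofPred_eq, decide_eq_true_eq] using ⟨A.1.iseqv, A.infinite_isRep⟩
  · rintro ⟨hequiv, hinf⟩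
    refine ⟨⟨⟨(r · ·), hequiv⟩, (infinite_quotient_iff _).2 hinf⟩, ?_⟩
    funext i j
    exact Bool.decide_eq_true

lemma measurableSet_setOf_entry (i j : ℕ) : MeasurableSet {r : ℕ → ℕ → Bool | r i j} := by
  have h : Measurable fun r : ℕ → ℕ → Bool => r i j :=
    (measurable_pi_apply j).comp (measurable_pi_apply i)
  exact h (measurableSet_singleton true)

lemma measurableSet_range_relMatrix : MeasurableSet (range relMatrix) := by
  have hentry (i j : ℕ) : Measurable fun r : ℕ → ℕ → Bool => (r i j : Prop) :=
    measurableSet_setOfPred.1 (measurableSet_setOf_entry i j)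
  have hrefl : Measurable fun r : ℕ → ℕ → Bool => ∀ i, r i i :=
    .forall fun i => hentry i i
  have hsymm : Measurable fun r : ℕ → ℕ → Bool => ∀ i j, r i j → r j i :=
    .forall fun i => .forall fun j => (hentry i j).imp (hentry j i)
  have htrans : Measurable fun r : ℕ → ℕ → Bool => ∀ i j k, r i j → r j k → r i k :=
    .forall fun i => .forall fun j => .forall fun k =>
      (hentry i j).imp ((hentry j k).imp (hentry i k))
  have hinf : Measurable fun r : ℕ → ℕ → Bool => ∀ n, ∃ l, (∀ m, r m l → l ≤ m) ∧ n < l :=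
    .forall fun n => .exists fun l =>
      (Measurable.forall fun m => (hentry m l).imp measurable_const).and measurable_const
  have heq : range relMatrix = {r : ℕ → ℕ → Bool | ((∀ i, r i i) ∧ (∀ i j, r i j → r j i) ∧
      ∀ i j k, r i j → r j k → r i k) ∧ ∀ n, ∃ l, (∀ m, r m l → l ≤ m) ∧ n < l} := by
    ext r
    rw [range_relMatrix, mem_ofPred_eq, infinite_iff_exists_gt]
    exact and_congr_left' ⟨fun h => ⟨h.1, fun _ _ => h.2, fun _ _ _ => h.3⟩,
      fun h => ⟨h.1, fun {i j} => h.2.1 i j, fun {i j k} => h.2.2 i j k⟩⟩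
  rw [heq]
  exact measurableSet_setOfPred.2 ((hrefl.and (hsymm.and htrans)).and hinf)

lemma measurableEmbedding_relMatrix : MeasurableEmbedding relMatrix := by
  refine MeasurableEmbedding.iff_comap_eq.2 ⟨fun A B h => ?_, ?_, measurableSet_range_relMatrix⟩
  · refine Subtype.ext (Setoid.ext fun i j => ?_)
    exact decide_eq_decide.1 (congrFun (congrFun h i) j)
  · have hpre (i j : ℕ) : relMatrix ⁻¹' {r | r i j} = {A | A.1 i j} := by
      ext A
      exact decide_eq_true_iff
    refine le_antisymm (Measurable.comap_le ?_) ?_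
    · refine measurable_pi_iff.2 fun i => measurable_pi_iff.2 fun j => measurable_to_bool ?_
      exact hpre i j ▸ measurableSet_rel i j
    · exact (measurable_toCS_of_measurableSet_rel (m := .comap relMatrix inferInstance)
        fun i j => ⟨_, measurableSet_setOf_entry i j, hpre i j⟩).comap_le

instance : StandardBorelSpace Einf :=
  standardBorelSpace_of_measurableEmbedding measurableEmbedding_relMatrix

end Borel

/-! ### Canonization -/

section Canonization

variable {B C D : Einf} {i j k l p : ℕ} {s : FinApprox}

lemma exists_mem_cubeAt_rel_forall_le (hl : B.IsRep l) (hp : B.IsRep p) (hlp : l < p)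
    (hil : i < l) : ∃ B' ∈ B.cubeAt l, B'.1 p i ∧ ∀ A ≤ B, A.1 p i → A ≤ B' := by
  let g (y : ℕ) : ℕ := if y = p then B.rep i else y
  have hip : B.rep i < p := (B.rep_le i).trans_lt (hil.trans hlp)
  have hgp : g p = B.rep i := if_pos rfl
  have hgne {y : ℕ} (hy : y ≠ p) : g y = y := if_neg hy
  have hg (y : ℕ) (_ : B.IsRep y) : g y ≤ y := by
    rcases eq_or_ne y p with rfl | hy
    · exact hgp.trans_le hip.le
    · exact (hgne hy).le
  have hfix : {y | B.IsRep y ∧ g y = y}.Infinite :=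
    (B.infinite_isRep.sdiff (finite_singleton p)).mono fun y hy => ⟨hy.1, hgne hy.2⟩
  refine ⟨B.collapse g hg hfix, collapse_mem_cubeAt hl fun y hy _ => hgne (hy.trans_lt hlp).ne,
    ?_, fun A hAB hA => le_collapse hAB fun y _ => ?_⟩
  · rw [collapse_rel, isRep_iff_rep_eq.1 hp, hgp, hgne hip.ne]
  · rcases eq_or_ne y p with rfl | hy
    · exact hgp ▸ A.1.trans hA (hAB _ _ (B.1.symm (B.rep_rel i)))
    · exact (hgne hy).symm ▸ A.1.refl y

lemma exists_mem_cubeAt_rel_cube_subset (hD : D ∈ cube s B) (hp : B.IsRep p) (hsp : s.1 < p)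
    (hk : k < s.1) (hpk : D.1 p k) : ∃ B' ∈ B.cubeAt s.1, B'.1 p k ∧ cube s B' ⊆ cube s D := by
  have hs : B.IsRep s.1 := isRep_of_cube_nonempty ⟨D, hD⟩
  obtain ⟨B₁, hB₁, hrel, hmax⟩ := exists_mem_cubeAt_rel_forall_le hs hp hsp hk
  obtain ⟨B₂, hB₂, hsub⟩ := exists_mem_cubeAt_cube_subset
    (show D ∈ cube s B₁ from ⟨hD.1, hmax D (le_of_mem_cube hD) hpk⟩)
  exact ⟨B₂, cubeAt_subset hB₁ hB₂, le_of_mem_cube hB₂ _ _ hrel, hsub⟩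

variable {Z : Type*} [MeasurableSpace Z] [StandardBorelSpace Z] {f g : Z → Einf}

lemma exists_mem_cubeAt_forall_rel_of_injOn {P : Set Z} (hP : MeasurableSet P) (hf : Measurable f)
    (hinj : InjOn f P) (hg : Measurable g) (hC : (cube s C).Nonempty) (hi : i < s.1)
    (hj : j < s.1) :
    ∃ C' ∈ C.cubeAt s.1, ∀ z ∈ P, f z ∈ cube s C' → g z ≤ C' → (f z).1 i j → (g z).1 i j := by
  obtain ⟨A, hA⟩ := hC
  by_cases hij : A.1 i j
  swap
  · refine ⟨C, self_mem_cubeAt (isRep_of_cube_nonempty ⟨A, hA⟩), fun z _ hz _ h => ?_⟩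
    have happrox : (f z).approx s.1 = A.approx s.1 :=
      (mem_cube.1 hz).2.1.trans (mem_cube.1 hA).2.1.symm
    exact absurd ((approx_eq_approx_iff.1 happrox i hi j hj).1 h) hij
  obtain ⟨p, hsp, hp⟩ := A.exists_isRep_gt s.1
  obtain ⟨M, hM, hMi, -⟩ := exists_mem_cubeAt_rel_forall_le (mem_cube.1 hA).1 hp hsp hi
  rw [hA.1.cubeAt_eq] at hM
  have hMj : M.1 p j := M.1.trans hMi (le_of_mem_cube hM _ _ hij)
  have hY : MeasurableSet (f '' (P ∩ {z | (g z).1 p i})) :=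
    (hP.inter (hg (measurableSet_rel p i))).image_of_measurable_injOn hf
      (hinj.mono inter_subset_left)
  have hCp : C.IsRep p := hp.of_le (le_of_mem_cube hA)
  -- `D` joins `p` to both `i` and `j`. Below `C'` only one of the two is imposed on `g z`, and
  -- the other one is what the answer for `D` decides.
  obtain ⟨D, hD, hDY⟩ := isCompletelyRamsey_of_measurableSet hY s M ⟨M, self_mem_cube hM.1⟩
  have hDM : D ≤ M := le_of_mem_cube hD
  have hDC : D ∈ cube s C := cube_mono s ((le_of_mem_cube hM).trans (le_of_mem_cube hA)) hD
  rcases hDY with hDY | hDY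
  · obtain ⟨C', hC', hpj, hsub⟩ :=
      exists_mem_cubeAt_rel_cube_subset hDC hCp hsp hj (hDM _ _ hMj)
    refine ⟨C', hC', fun z hz hfz hgz _ => ?_⟩
    obtain ⟨z', ⟨hz', hpi⟩, hzz'⟩ := hDY (hsub hfz)
    obtain rfl : z' = z := hinj hz' hz hzz'
    exact (g z').1.trans ((g z').1.symm hpi) (hgz _ _ hpj)
  · obtain ⟨C', hC', hpi, hsub⟩ :=
      exists_mem_cubeAt_rel_cube_subset hDC hCp hsp hi (hDM _ _ hMi)
    exact ⟨C', hC', fun z hz hfz hgz _ =>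
      absurd ⟨z, ⟨hz, hgz _ _ hpi⟩, rfl⟩ (hDY (hsub hfz))⟩

lemma exists_mem_cubeAt_forall_le_of_countable_fibers (hf : Measurable f)
    (hcount : ∀ A, (f ⁻¹' {A}).Countable) (hg : Measurable g) (hl : B.IsRep l) :
    ∃ C ∈ B.cubeAt l, ∀ z, f z ≤ C → g z ≤ C → g z ≤ f z := by
  obtain ⟨𝒞, h𝒞, hpiece, hcover⟩ := LusinNovikov.isSmall_univ hf hcount
  have := h𝒞.to_subtype
  let _ : Encodable (𝒞 × ℕ × ℕ) := .ofCountable _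
  let T (k : 𝒞 × ℕ × ℕ) (s : FinApprox) (C : Einf) : Prop :=
    k.2.1 < s.1 → k.2.2 < s.1 → ∀ z ∈ k.1.1, f z ∈ cube s C → g z ≤ C →
      (f z).1 k.2.1 k.2.2 → (g z).1 k.2.1 k.2.2
  have hanti (k : 𝒞 × ℕ × ℕ) (s : FinApprox) : Antitone (T k s) :=
    fun _ _ hle h hi hj z hz hfz hgz => h hi hj z hz (cube_mono s hle hfz) (hgz.trans hle)
  have hdense (k : 𝒞 × ℕ × ℕ) (s : FinApprox) (C : Einf) (hC : (cube s C).Nonempty) :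
      ∃ C' ∈ C.cubeAt s.1, T k s C' := by
    by_cases hlt : k.2.1 < s.1 ∧ k.2.2 < s.1
    · obtain ⟨hP, hinj⟩ := hpiece _ k.1.2
      obtain ⟨C', hC', h⟩ := exists_mem_cubeAt_forall_rel_of_injOn hP hf hinj hg hC hlt.1 hlt.2
      exact ⟨C', hC', fun _ _ => h⟩
    · exact ⟨C, self_mem_cubeAt (isRep_of_cube_nonempty hC), fun hi hj => absurd ⟨hi, hj⟩ hlt⟩
  obtain ⟨C, hC, hT⟩ := exists_fusion hanti hdense hl
  refine ⟨C, hC, fun z hfz hgz i j hij => ?_⟩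
  obtain ⟨P, hP, hzP⟩ := hcover (mem_univ z)
  let k : 𝒞 × ℕ × ℕ := ⟨⟨P, hP⟩, i, j⟩
  obtain ⟨m, hm, hrep⟩ := (f z).exists_isRep_gt (max (Encodable.encode k) (max l (max i j)))
  have hmem : f z ∈ cube ((f z).approx m) C := mem_cube.2 ⟨hrep, rfl, hfz⟩
  simp only [max_lt_iff] at hm
  exact hT k _ hm.1.le hm.2.1.le ⟨_, hmem⟩ hm.2.2.1 hm.2.2.2 z hzP hmem hgz hij

end Canonization

end Einf

theorem einf_canonizes_CBER_to_equality_general {R : Einf → Einf → Prop}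
    (hBorel : MeasurableSet {p : Einf × Einf | R p.1 p.2})
    (hCount : ∀ A : Einf, {A' : Einf | R A A'}.Countable) :
    ∃ D : Set Einf, RamseyConull D ∧
      ∀ B ∈ D, ∀ A A' : Einf, Coarsen A B → Coarsen A' B → R A A' → Coarsen A' A := by
  let G := {p : Einf × Einf // R p.1 p.2}
  have : StandardBorelSpace G := hBorel.standardBorel
  let f (z : G) : Einf := z.1.1
  let g (z : G) : Einf := z.1.2
  have hcount (A : Einf) : (f ⁻¹' {A}).Countable := by
    refine Set.countable_of_injective_of_countable_image (f := g)
      (fun z hz z' hz' h => Subtype.ext (Prod.ext (hz.trans hz'.symm) h)) ((hCount A).mono ?_)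
    rintro _ ⟨z, rfl, rfl⟩
    exact z.2
  refine ⟨{B | ∀ z, f z ≤ B → g z ≤ B → g z ≤ f z}, fun s B hB => ?_, fun B hB A A' hA hA' h =>
    hB ⟨(A, A'), h⟩ hA hA'⟩
  obtain ⟨A, hA⟩ := hB
  obtain ⟨C, hC, hgf⟩ := exists_mem_cubeAt_forall_le_of_countable_fibers
    (measurable_fst.comp measurable_subtype_coe) hcount
    (measurable_snd.comp measurable_subtype_coe) (initSeg_iff.1 hA.1).1
  rw [hA.1.cubeAt_eq] at hC
  refine ⟨C, cube_mono s (le_of_mem_cube hA) hC, Set.disjoint_iff_inter_eq_empty.1 <|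
    Set.disjoint_compl_right_iff_subset.2 fun C' hC' z hfz hgz => ?_⟩
  exact hgf z (hfz.trans (le_of_mem_cube hC')) (hgz.trans (le_of_mem_cube hC'))

/-- Theorem (Main): every countable Borel equivalence relation on `𝓔_∞` coincides with
equality below every element of some Ramsey conull set. -/
theorem einf_canonizes_CBER_to_equality
    (E : Einf → Einf → Prop) (hEquiv : Equivalence E)
    (hBorel : MeasurableSet {p : Einf × Einf | E p.1 p.2})
    (hCount : ∀ A : Einf, {A' : Einf | E A A'}.Countable) :
    ∃ D : Set Einf, RamseyConull D ∧
      ∀ B ∈ D, ∀ A A' : Einf, Coarsen A B → Coarsen A' B → (E A A' ↔ A = A') := by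
  obtain ⟨D, hD, h⟩ := einf_canonizes_CBER_to_equality_general hBorel hCount
  exact ⟨D, hD, fun B hB A A' hA hA' => ⟨fun hE => le_antisymm
    (h B hB A' A hA' hA (hEquiv.symm hE)) (h B hB A A' hA hA' hE), fun h => h ▸ hEquiv.refl A⟩⟩
end

section
/- Let E be a countable Borel equivalence relation on 𝓔_∞. Then for every s ∈ 𝓔_∞^fin and A ∈ 𝓔_∞ with [s,A] ≠ ∅ there exists B ∈ [s,A] such that for all C, C' ∈ 𝓔_∞ with C ≤ B and C' ≤ B, one has C E C' if and only if C = C'. In particular, the restriction of E to the cube [s,B] is Borel reducible to equality on 2^ℕ. -/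
open Classical

open Einf

open Set Filter Topology MeasureTheory

/-!
Number the classes of an infinite partition of `ℕ` in the order of their least elements. Infinite
partitions become rigid surjections `f : ℕ → ℕ`, and the coarsenings of `f` become the products
`k * f`.

Call a set of rigid surjections large for a condition (a stem together with a base) if it meets the
Ellentuck cube of every thinning of that condition. The Carlson–Simpson theorem shows that a large
set can be made large below every stronger condition by one thinning. Hence any two large analytic
sets meet: refine approximations to a member of each in turn, and pass to the limit.

Let `R` be an analytic binary relation with countable sections. Suppose that one of two stems of
equal length identifies two letters which the other one separates, and that `R` meets the product of
the two cubes after every thinning. Then one builds a single `f` in the first cube together with a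
perfect tree of approximations to points of the second cube that are `R`-related to `f`: at each
node, a new letter may be identified with either of the two letters, which the stem of `f` cannot
tell apart. Largeness of finite intersections keeps the finitely many branches compatible with one
`f`. The uncountably many branches contradict countability. So some thinning makes the product of
the two cubes avoid `R`, and fusion over all pairs of stems makes this happen for all pairs of
distinct coarsenings at once.
-/

theorem exists_seq_of_forall_exists {X : ℕ → Type*} (r : ∀ t, X t → X (t + 1) → Prop) (x₀ : X 0)
    (step : ∀ t x, ∃ y, r t x y) :
    ∃ xs : ∀ t, X t, xs 0 = x₀ ∧ ∀ t, r t (xs t) (xs (t + 1)) := by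
  choose next hnext using step
  exact ⟨Nat.rec x₀ next, rfl, fun t => hnext t _⟩

/-- Two sequences agree on `{0, …, n - 1}`; this is membership in the cylinder `PiNat.cylinder`,
in a symmetric form. -/
def AgreeBelow {α : Type*} (n : ℕ) (f g : ℕ → α) : Prop := ∀ x < n, f x = g x

namespace AgreeBelow

variable {α : Type*} {m n : ℕ} {f g k : ℕ → α}

theorem refl (n : ℕ) (f : ℕ → α) : AgreeBelow n f f := fun _ _ => rfl

theorem symm (h : AgreeBelow n f g) : AgreeBelow n g f := fun x hx => (h x hx).symm

theorem trans (h : AgreeBelow n f g) (h' : AgreeBelow n g k) : AgreeBelow n f k :=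
  fun x hx => (h x hx).trans (h' x hx)

theorem mono (h : AgreeBelow m f g) (hnm : n ≤ m) : AgreeBelow n f g :=
  fun x hx => h x (hx.trans_le hnm)

theorem exists_limit {m : ℕ → ℕ} (hm : Monotone m) (hle : ∀ t, t ≤ m t) {f : ℕ → ℕ → α}
    (hf : ∀ t, AgreeBelow (m t) (f (t + 1)) (f t)) : ∃ F, ∀ t, AgreeBelow (m t) F (f t) := by
  have hadd (t r : ℕ) : AgreeBelow (m t) (f (t + r)) (f t) := by
    induction r with
    | zero => exact refl _ _
    | succ r ih => exact ((hf (t + r)).mono (hm (Nat.le_add_right t r))).trans ih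
  refine ⟨fun x => f (x + 1) x, fun t x hx => ?_⟩
  calc f (x + 1) x = f (x + 1 + t) x := (hadd (x + 1) t x (hle (x + 1))).symm
    _ = f (t + (x + 1)) x := by rw [add_comm]
    _ = f t x := hadd t (x + 1) x hx

theorem tendsto [TopologicalSpace α] {m : ℕ → ℕ} (hle : ∀ t, t ≤ m t) {f : ℕ → ℕ → α}
    {F : ℕ → α} (hf : ∀ t, AgreeBelow (m t) (f t) F) : Tendsto f atTop (𝓝 F) := by
  refine tendsto_pi_nhds.2 fun x => tendsto_const_nhds.congr' ?_
  filter_upwards [eventually_gt_atTop x] with t ht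
  exact (hf t x (ht.trans_le (hle t))).symm

end AgreeBelow

/-! ### Rigid surjections -/

/-- A map `f : ℕ → ℕ` is a rigid surjection if it is onto and takes its values for the first time
in increasing order. Infinite partitions of `ℕ` correspond to rigid surjections by numbering the
classes in the order of their least elements. -/
def IsRigid (f : ℕ → ℕ) : Prop := ∀ y, ∃ x, f x = y ∧ ∀ x' < x, f x' < y

/-- The space of rigid surjections of `ℕ`, with the topology induced from Baire space. -/
abbrev RigidSurj : Type := {f : ℕ → ℕ // IsRigid f}

namespace RigidSurj

instance : CoeFun RigidSurj fun _ => ℕ → ℕ := ⟨Subtype.val⟩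

@[ext]
theorem ext {f g : RigidSurj} (h : ∀ x, f x = g x) : f = g := Subtype.ext (funext h)

/-- The least point `f.first y` at which `f` takes the value `y`. -/
noncomputable def first (f : RigidSurj) (y : ℕ) : ℕ := (f.2 y).choose

section First

variable (f : RigidSurj) {x y n : ℕ}

@[simp]
theorem apply_first (y : ℕ) : f (f.first y) = y := (f.2 y).choose_spec.1

variable {f}

theorem apply_lt_of_lt_first (h : x < f.first y) : f x < y := (f.2 y).choose_spec.2 x h

theorem first_le_of_le_apply (h : y ≤ f x) : f.first y ≤ x :=
  not_lt.1 fun hx => (apply_lt_of_lt_first hx).not_ge h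

theorem eq_first (h : f x = y) (hx : ∀ x' < x, f x' < y) : x = f.first y :=
  (first_le_of_le_apply h.ge).antisymm' (not_lt.1 fun h' => (hx _ h').ne (f.apply_first y))

variable (f)

theorem first_strictMono : StrictMono f.first := fun y z hyz =>
  (first_le_of_le_apply (hyz.le.trans (f.apply_first z).ge)).lt_of_ne fun h =>
    hyz.ne (by rw [← f.apply_first y, h, apply_first])

theorem le_first (y : ℕ) : y ≤ f.first y := f.first_strictMono.le_apply

theorem apply_le (x : ℕ) : f x ≤ x := (f.le_first _).trans (first_le_of_le_apply le_rfl)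

variable {f} in
theorem apply_lt (h : x < n) : f x < n := (f.apply_le x).trans_lt h

end First

theorem isRigid_id : IsRigid id := fun y => ⟨y, rfl, fun _ h => h⟩

theorem isRigid_comp (f g : RigidSurj) : IsRigid (f ∘ g) := fun y =>
  ⟨g.first (f.first y), by simp, fun _ hx => apply_lt_of_lt_first (apply_lt_of_lt_first hx)⟩

theorem isRigid_of_comp {k : ℕ → ℕ} (h : RigidSurj) (hk : IsRigid (k ∘ h)) : IsRigid k := by
  intro y
  obtain ⟨x, hx, hlt⟩ := hk y
  refine ⟨h x, hx, fun u hu => ?_⟩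
  simpa using hlt (h.first u) ((h.first_strictMono hu).trans_le (first_le_of_le_apply le_rfl))

instance : Monoid RigidSurj where
  one := ⟨id, isRigid_id⟩
  mul f g := ⟨f ∘ g, isRigid_comp f g⟩
  mul_assoc _ _ _ := rfl
  one_mul _ := rfl
  mul_one _ := rfl

@[simp]
theorem mul_apply (f g : RigidSurj) (x : ℕ) : (f * g) x = f (g x) := rfl

theorem first_mul (f g : RigidSurj) (y : ℕ) : (f * g).first y = g.first (f.first y) := by
  refine (eq_first (by simp) fun x hx => ?_).symm
  rw [mul_apply]
  exact apply_lt_of_lt_first (apply_lt_of_lt_first hx)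

/-- The rigid surjections restricting to the identity on `{0, …, n - 1}`. -/
def fixing (n : ℕ) : Submonoid RigidSurj where
  carrier := {h | ∀ x < n, h x = x}
  one_mem' _ _ := rfl
  mul_mem' hf hg x hx := by rw [mul_apply, hg x hx, hf x hx]

section Fixing

variable {n : ℕ} {h : RigidSurj}

theorem fixing_antitone : Antitone fixing := fun _ _ hnm _ hh x hx => hh x (hx.trans_le hnm)

theorem agreeBelow_mul (hh : h ∈ fixing n) (k : RigidSurj) : AgreeBelow n (k * h : RigidSurj) k :=
  fun x hx => congrArg k (hh x hx)

theorem first_of_mem_fixing (hh : h ∈ fixing n) {y : ℕ} (hy : y < n) : h.first y = y :=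
  (eq_first (hh y hy) fun x hx => (hh x (hx.trans hy)).trans_lt hx).symm

end Fixing

theorem apply_eq_of_new {f f' : RigidSurj} {P : ℕ} (h : AgreeBelow P f f')
    (hf : ∀ x < P, f x ≠ f P) (hf' : ∀ x < P, f' x ≠ f' P) : f P = f' P := by
  have key : ∀ {f f' : RigidSurj}, AgreeBelow P f f' → (∀ x < P, f' x ≠ f' P) →
      f P ≤ f' P := fun {f f'} h hf' => not_lt.1 fun hlt => by
    have hx : f.first (f' P) < P :=
      lt_of_le_of_ne (first_le_of_le_apply hlt.le) fun he => hlt.ne (by rw [← he, apply_first, he])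
    exact hf' _ hx (by rw [← h _ hx, apply_first])
  exact (key h hf').antisymm (key h.symm hf)

theorem agreeBelow_of_ker_eq {f f' : RigidSurj} {n : ℕ}
    (h : ∀ x < n, ∀ y < n, (f x = f y ↔ f' x = f' y)) : AgreeBelow n f f' := by
  intro x
  induction x using Nat.strong_induction_on with
  | _ x ih =>
    intro hx
    have hagree : AgreeBelow x f f' := fun y hy => ih y hy (hy.trans hx)
    by_cases hnew : ∃ y < x, f y = f x
    · obtain ⟨y, hy, he⟩ := hnew
      rw [← he, hagree y hy]
      exact (h y (hy.trans hx) x hx).1 he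
    · push Not at hnew
      exact apply_eq_of_new hagree hnew fun y hy he =>
        hnew y hy ((h y (hy.trans hx) x hx).2 he)

/-- The values of a rigid surjection on `{0, …, m - 1}`, as an element of a finite type. -/
def restrict (v : RigidSurj) (m : ℕ) (x : Fin m) : Fin m := ⟨v x, apply_lt x.2⟩

theorem restrict_eq_restrict_iff {v v' : RigidSurj} {m : ℕ} :
    v.restrict m = v'.restrict m ↔ AgreeBelow m v v' := by
  simp only [funext_iff, restrict, Fin.mk.injEq, Fin.forall_iff, AgreeBelow]

/-- The rigid surjection identifying the letter `n` with the smaller letter `i`, and nothing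
else. -/
def merge {n : ℕ} (i : Fin n) : RigidSurj :=
  ⟨fun x => if x < n then x else if x = n then i else x - 1, fun y => by
    refine ⟨if y < n then y else y + 1, ?_, fun x hx => ?_⟩
    · dsimp only
      split_ifs <;> omega
    · have := i.2
      dsimp only
      split_ifs at hx ⊢ <;> omega⟩

section Merge

variable {n : ℕ} (i : Fin n)

theorem merge_mem_fixing : merge i ∈ fixing n := fun _ hx => if_pos hx

@[simp]
theorem merge_self : merge i n = i := by simp [merge]

end Merge

/-- On `{0, …, P - 1}` the map `h` takes exactly the values `0, …, m - 1`. -/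
def CoversBelow (h : RigidSurj) (P m : ℕ) : Prop :=
  (∀ x < P, h x < m) ∧ ∀ y < m, h.first y < P

theorem coversBelow_first (h : RigidSurj) (m : ℕ) : CoversBelow h (h.first m) m :=
  ⟨fun _ => apply_lt_of_lt_first, fun _ hy => h.first_strictMono hy⟩

theorem coversBelow_first_succ (h : RigidSurj) (p : ℕ) :
    CoversBelow h (h.first p + 1) (p + 1) :=
  ⟨fun _ hx => (apply_lt_of_lt_first (hx.trans_le (h.first_strictMono p.lt_succ_self))),
    fun _ hy => Nat.lt_succ_iff.2 (h.first_strictMono.monotone (Nat.lt_succ_iff.1 hy))⟩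

section Amalgamation

variable {h h₂ v k : RigidSurj} {P m : ℕ}

/-- The rigid surjection equal to `h` on `{0, …, P - 1}` and increasing by one at every step from
`P` on, where `h` maps `{0, …, P - 1}` onto `{0, …, m - 1}`. -/
noncomputable def shift (h : RigidSurj) {P m : ℕ} (hc : CoversBelow h P m) : RigidSurj :=
  ⟨fun x => if x < P then h x else m + (x - P), fun y => by
    by_cases hy : y < m
    · have hP := hc.2 y hy
      refine ⟨h.first y, by simp [hP], fun x hx => ?_⟩
      exact (if_pos (hx.trans hP)).trans_lt (apply_lt_of_lt_first hx)
    · refine ⟨P + (y - m), by simp; omega, fun x hx => ?_⟩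
      dsimp only
      split_ifs with hxP
      · exact (hc.1 x hxP).trans_le (not_lt.1 hy)
      · omega⟩

theorem agreeBelow_shift (hc : CoversBelow h P m) : AgreeBelow P (shift h hc) h :=
  fun _ hx => if_pos hx

theorem shift_add (hc : CoversBelow h P m) (r : ℕ) : shift h hc (P + r) = m + r := by
  simp [shift]

theorem isRigid_of_shift_comp (hc : CoversBelow h P m) {e : ℕ → ℕ} (hfix : ∀ x < P, e x = x)
    (he : IsRigid (shift h hc ∘ e)) : IsRigid e := by
  intro y
  by_cases hy : y < P
  · exact ⟨y, hfix y hy, fun x hx => (hfix x (hx.trans hy)).trans_lt hx⟩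
  · have hge {z : ℕ} (hz : ¬z < P) : shift h hc z = m + (z - P) := if_neg hz
    obtain ⟨x, hx, hlt⟩ := he (m + (y - P))
    refine ⟨x, ?_, fun x' hx' => ?_⟩
    · rw [Function.comp_apply] at hx
      have hxP : ¬e x < P := fun hxP => by
        have := (agreeBelow_shift hc _ hxP).trans_lt (hc.1 _ hxP)
        omega
      rw [hge hxP] at hx
      omega
    · by_cases hxP : e x' < P
      · omega
      · have := hlt x' hx'
        rw [Function.comp_apply, hge hxP] at this
        omega

theorem exists_shift_mul_eq (hc : CoversBelow h P m) (hh₂ : h₂ ∈ fixing m) :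
    ∃ h₃ ∈ fixing P, shift h hc * h₃ = h₂ * h := by
  let e (x : ℕ) : ℕ := if x < P then x else (shift h hc).first (h₂ (h x))
  have hfix (x : ℕ) (hx : x < P) : e x = x := if_pos hx
  have hcomp : shift h hc ∘ e = (h₂ * h : RigidSurj) := by
    funext x
    change shift h hc (e x) = h₂ (h x)
    by_cases hx : x < P
    · rw [hfix x hx, agreeBelow_shift hc x hx, hh₂ _ (hc.1 x hx)]
    · rw [show e x = _ from if_neg hx, apply_first]
  exact ⟨⟨e, isRigid_of_shift_comp hc hfix (hcomp ▸ (h₂ * h).2)⟩, hfix, Subtype.ext hcomp⟩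

theorem exists_eq_mul_shift (hc : CoversBelow h P m) (hk : AgreeBelow P k (v * h : RigidSurj)) :
    ∃ k' : RigidSurj, AgreeBelow m k' v ∧ k = k' * shift h hc := by
  let e (y : ℕ) : ℕ := if y < m then v y else k (P + (y - m))
  have hcomp : ⇑k = e ∘ shift h hc := by
    funext x
    change k x = e (shift h hc x)
    by_cases hx : x < P
    · rw [agreeBelow_shift hc x hx, show e (h x) = v (h x) from if_pos (hc.1 x hx), hk x hx,
        mul_apply]
    · obtain ⟨r, rfl⟩ := Nat.exists_eq_add_of_le (not_lt.1 hx)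
      rw [shift_add]
      simp [e]
  exact ⟨⟨e, isRigid_of_comp (shift h hc) (hcomp ▸ k.2)⟩, fun y hy => if_pos hy,
    Subtype.ext hcomp⟩

end Amalgamation

end RigidSurj

/-! ### Fusion -/

namespace RigidSurj

/-- The product `h (t + r - 1) * ⋯ * h (t + 1) * h t`. -/
def partialProd (h : ℕ → RigidSurj) (t : ℕ) : ℕ → RigidSurj
  | 0 => 1
  | r + 1 => h (t + r) * partialProd h t r

section InfiniteProduct

variable {h : ℕ → RigidSurj} {m : ℕ → ℕ}

theorem partialProd_succ_left (h : ℕ → RigidSurj) (t r : ℕ) :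
    partialProd h t (r + 1) = partialProd h (t + 1) r * h t := by
  induction r with
  | zero => rfl
  | succ r ih => rw [partialProd, ih, partialProd, mul_assoc, Nat.add_right_comm t 1 r, add_assoc]

theorem exists_infinite_product (hm : StrictMono m) (hh : ∀ t, h t ∈ fixing (m t)) :
    ∃ G : ℕ → RigidSurj, ∀ t, G t ∈ fixing (m t) ∧ G t = G (t + 1) * h t := by
  have hlt {x t : ℕ} (hx : x < t) : x < m t := hx.trans_le hm.le_apply
  have hstep (t r : ℕ) :
      AgreeBelow (m (t + r)) (partialProd h t (r + 1)) (partialProd h t r) :=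
    fun x hx => hh (t + r) _ (apply_lt hx)
  choose F hF using fun t => AgreeBelow.exists_limit (f := fun r => partialProd h t r)
    (fun _ _ hab => hm.monotone (Nat.add_le_add_left hab t))
    (fun r => (Nat.le_add_left r t).trans hm.le_apply) (hstep t)
  have hfix (t : ℕ) : AgreeBelow (m t) (F t) id := hF t 0
  have hsucc (t x : ℕ) : F t x = F (t + 1) (h t x) :=
    calc F t x = partialProd h t (x + 1) x := hF t (x + 1) x (hlt (by omega))
      _ = partialProd h (t + 1) x (h t x) := by rw [partialProd_succ_left, mul_apply]
      _ = F (t + 1) (h t x) := (hF (t + 1) x _ (apply_lt (hlt (by omega)))).symm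
  have hadd (t r x : ℕ) : F t x = F (t + r) (partialProd h t r x) := by
    induction r with
    | zero => rfl
    | succ r ih => rw [ih, hsucc, partialProd, mul_apply, add_assoc]
  have hrigid (t : ℕ) : IsRigid (F t) := fun y => by
    have hval {x z : ℕ} (hz : z ≤ y) (hx : partialProd h t (y + 1) x = z) : F t x = z := by
      rw [hadd t (y + 1), hx]
      exact hfix _ z (hlt (by omega))
    refine ⟨(partialProd h t (y + 1)).first y, hval le_rfl (apply_first _ y), fun x hx => ?_⟩
    have hxy := apply_lt_of_lt_first hx
    exact (hval hxy.le rfl).trans_lt hxy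
  exact ⟨fun t => ⟨F t, hrigid t⟩, fun t => ⟨hfix t, RigidSurj.ext (hsucc t)⟩⟩

end InfiniteProduct

/-- `D` is dense open with respect to thinning by maps that fix `{0, …, n - 1}`. -/
structure IsDenseOpen (n : ℕ) (D : Set RigidSurj) : Prop where
  mul_mem : ∀ g ∈ D, ∀ h ∈ fixing n, h * g ∈ D
  exists_mul_mem : ∀ g, ∃ h ∈ fixing n, h * g ∈ D

theorem IsDenseOpen.inter {n : ℕ} {D D' : Set RigidSurj} (hD : IsDenseOpen n D)
    (hD' : IsDenseOpen n D') : IsDenseOpen n (D ∩ D') where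
  mul_mem g hg h hh := ⟨hD.mul_mem g hg.1 h hh, hD'.mul_mem g hg.2 h hh⟩
  exists_mul_mem g := by
    obtain ⟨h, hh, hmem⟩ := hD.exists_mul_mem g
    obtain ⟨h', hh', hmem'⟩ := hD'.exists_mul_mem (h * g)
    exact ⟨h' * h, Submonoid.mul_mem _ hh' hh, hD.mul_mem _ hmem h' hh', hmem'⟩

theorem IsDenseOpen.iInter {ι : Type*} [Finite ι] {n : ℕ} {D : ι → Set RigidSurj}
    (hD : ∀ i, IsDenseOpen n (D i)) : IsDenseOpen n (⋂ i, D i) := by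
  suffices ∀ s : Set ι, s.Finite → IsDenseOpen n (⋂ i ∈ s, D i) by
    simpa only [mem_univ, iInter_true] using this univ finite_univ
  intro s hs
  induction s, hs using Set.Finite.induction_on with
  | empty => simpa using ⟨fun _ _ _ _ => mem_univ _, fun _ => ⟨1, one_mem _, mem_univ _⟩⟩
  | @insert i s _ _ ih =>
    rw [biInter_insert]
    exact (hD i).inter ih

theorem exists_mul_mem_of_isDenseOpen {n : ℕ} {D : ℕ → Set RigidSurj}
    (hD : ∀ m ≥ n, IsDenseOpen m (D m)) (g : RigidSurj) :
    ∃ h ∈ fixing n, ∀ m ≥ n, h * g ∈ D m := by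
  obtain ⟨gs, rfl, hgs⟩ := exists_seq_of_forall_exists (X := fun _ => RigidSurj)
    (fun t g g' => ∃ h ∈ fixing (n + t), g' = h * g ∧ g' ∈ D (n + t)) g fun t g =>
      let ⟨h, hh, hmem⟩ := (hD (n + t) (Nat.le_add_right n t)).exists_mul_mem g
      ⟨h * g, h, hh, rfl, hmem⟩
  choose h hh hmul hmem using hgs
  obtain ⟨G, hG⟩ := exists_infinite_product (m := (n + ·)) (fun _ _ => (Nat.add_lt_add_left · n)) hh
  have htail (t : ℕ) : G 0 * gs 0 = G t * gs t := by
    induction t with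
    | zero => rfl
    | succ t ih => rw [ih, (hG t).2, hmul, mul_assoc]
  refine ⟨G 0, (hG 0).1, fun m hm => ?_⟩
  obtain ⟨t, rfl⟩ := Nat.exists_eq_add_of_le hm
  rw [htail (t + 1)]
  exact (hD _ hm).mul_mem _ (hmem t) _ (fixing_antitone (by omega) (hG (t + 1)).1)

/-- The members of `B` that stay in `B` after any thinning fixing `{0, …, m - 1}`. -/
def persistent (m : ℕ) (B : Set RigidSurj) : Set RigidSurj := {g | ∀ h ∈ fixing m, h * g ∈ B}

theorem isDenseOpen_compl_union_persistent {m : ℕ} {B : Set RigidSurj}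
    (hB : ∀ g, ∀ h ∈ fixing m, h * g ∈ B → g ∈ B) :
    IsDenseOpen m (Bᶜ ∪ persistent m B) where
  mul_mem g hg h hh := hg.imp (fun hg hmem => hg (hB g h hh hmem))
    fun hg h' hh' => by rw [← mul_assoc]; exact hg _ (mul_mem hh' hh)
  exists_mul_mem g := by
    by_cases hg : g ∈ persistent m B
    · exact ⟨1, one_mem _, Or.inr hg⟩
    · obtain ⟨h, hh, hmem⟩ : ∃ h ∈ fixing m, h * g ∉ B := by simpa [persistent] using hg
      exact ⟨h, hh, Or.inl hmem⟩

theorem exists_mem_persistent {S : ℕ → Type*} [∀ m, Finite (S m)] {B : ∀ m, S m → Set RigidSurj}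
    {n : ℕ} {g : RigidSurj}
    (hB : ∀ m ≥ n, ∀ c g, ∀ h ∈ fixing m, h * g ∈ B m c → g ∈ B m c)
    (hex : ∀ h ∈ fixing n, ∃ m > n, ∃ c, h * g ∈ B m c) :
    ∃ h ∈ fixing n, ∃ m > n, ∃ c, h * g ∈ persistent m (B m c) := by
  obtain ⟨h, hh, hdec⟩ := exists_mul_mem_of_isDenseOpen (n := n)
    (fun m hm => IsDenseOpen.iInter fun c => isDenseOpen_compl_union_persistent (hB m hm c)) g
  obtain ⟨m, hm, c, hmem⟩ := hex h hh
  exact ⟨h, hh, m, hm, c, (mem_iInter.1 (hdec m hm.le) c).resolve_left (not_not_intro hmem)⟩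

end RigidSurj

/-! ### The Carlson–Simpson theorem -/

section Ultrafilter

attribute [local instance] Ultrafilter.semigroup

theorem exists_minimal_left_ideal {M : Type*} [Nonempty M] [Semigroup M] [TopologicalSpace M]
    [CompactSpace M] [T2Space M] (hmul : ∀ r : M, Continuous (· * r)) :
    ∃ N : Set M, IsClosed N ∧ N.Nonempty ∧ (∀ x, ∀ y ∈ N, x * y ∈ N) ∧
      ∀ e ∈ N, ∀ x ∈ N, ∃ y, x = y * e := by
  let S : Set (Set M) := {N | IsClosed N ∧ N.Nonempty ∧ ∀ x, ∀ y ∈ N, x * y ∈ N}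
  have hchain : ∀ c ⊆ S, IsChain (· ⊆ ·) c → c.Nonempty → ∃ lb ∈ S, ∀ s ∈ c, lb ⊆ s := by
    refine fun c hcS hc hne => ⟨⋂₀ c, ⟨isClosed_sInter fun N hN => (hcS hN).1, ?_,
      fun x y hy N hN => (hcS hN).2.2 x y (hy N hN)⟩, fun N => sInter_subset_of_mem⟩
    have := hne.to_subtype
    exact IsCompact.nonempty_sInter_of_directed_nonempty_isCompact_isClosed
      (IsChain.directedOn hc.symm) (fun N hN => (hcS hN).2.1)
      (fun N hN => (hcS hN).1.isCompact) fun N hN => (hcS hN).1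
  obtain ⟨N, -, hN⟩ := zorn_superset_nonempty S hchain univ
    ⟨isClosed_univ, univ_nonempty, fun _ _ _ => mem_univ _⟩
  refine ⟨N, hN.prop.1, hN.prop.2.1, hN.prop.2.2, fun e he x hx => ?_⟩
  have hrange : range (· * e) ∈ S := by
    refine ⟨(isCompact_range (hmul e)).isClosed, range_nonempty _, ?_⟩
    rintro z _ ⟨y, rfl⟩
    exact ⟨z * y, mul_assoc _ _ _⟩
  have hsub : range (· * e) ⊆ N := range_subset_iff.2 fun y => hN.prop.2.2 y e he
  obtain ⟨y, rfl⟩ := hN.le_of_le hrange hsub hx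
  exact ⟨y, rfl⟩

theorem continuous_ultrafilter_map {α β : Type*} (f : α → β) :
    Continuous fun U : Ultrafilter α => U.map f :=
  ultrafilterBasis_is_basis.continuous_iff.2 <|
    forall_mem_range.2 fun s => ultrafilter_isOpen_basic (f ⁻¹' s)

theorem ultrafilter_map_mul {M N : Type*} [Semigroup M] [Semigroup N] (f : M →ₙ* N)
    (U V : Ultrafilter M) : (U * V).map f = U.map f * V.map f := by
  refine Ultrafilter.coe_inj.1 (Filter.ext' fun p => ?_)
  simp only [Ultrafilter.coe_map, eventually_map, Ultrafilter.eventually_mul, map_mul]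

section VariableWords

variable {A κ : Type*}

/-- Words over the alphabet `A` with one more letter, the variable `none`. -/
abbrev VariableWord (A : Type*) : Type _ := FreeMonoid (Option A)

/-- Substitution of the letter `a` for the variable. -/
def substitute (a : A) : VariableWord A →* FreeMonoid A := FreeMonoid.map (·.getD a)

theorem substitute_comp_map_some (a : A) : substitute a ∘ FreeMonoid.map some = id := by
  funext w
  exact (FreeMonoid.map_map).trans (DFunLike.congr_fun FreeMonoid.map_id w)

/-- A left variable word: a variable word that starts with the variable. -/
def IsLeftVariable (w : VariableWord A) : Prop := w.toList.head? = some none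

theorem IsLeftVariable.mul {w : VariableWord A} (hw : IsLeftVariable w)
    (v : VariableWord A) : IsLeftVariable (w * v) := by
  rw [IsLeftVariable, FreeMonoid.toList_mul, List.head?_append, hw, Option.some_or]

theorem eventually_isLeftVariable_mul {U : Ultrafilter (VariableWord A)}
    (hU : ∀ᶠ w in (U : Filter (VariableWord A)), IsLeftVariable w)
    (V : Ultrafilter (VariableWord A)) :
    ∀ᶠ w in ((U * V : Ultrafilter (VariableWord A)) : Filter (VariableWord A)),
      IsLeftVariable w :=
  (Ultrafilter.eventually_mul U V _).2 <| hU.mono fun _ hw => .of_forall hw.mul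

theorem exists_ultrafilter_isLeftVariable (A : Type*) :
    ∃ V : Ultrafilter (VariableWord A),
      (∀ᶠ w in (V : Filter (VariableWord A)), IsLeftVariable w) ∧
      ∀ a b, V.map (substitute a) * V.map (substitute b) = V.map (substitute a) := by
  have map_mul (a : A) (U V : Ultrafilter (VariableWord A)) :
      (U * V).map (substitute a) = U.map (substitute a) * V.map (substitute a) :=
    ultrafilter_map_mul (substitute a : VariableWord A →ₙ* FreeMonoid A) U V
  obtain ⟨N, hNclosed, ⟨p, hp⟩, hNmul, hNmin⟩ := exists_minimal_left_ideal
    (M := Ultrafilter (FreeMonoid A)) Ultrafilter.continuous_mul_left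
  let 𝒱 : Set (Ultrafilter (VariableWord A)) :=
    {V | (∀ᶠ w in (V : Filter (VariableWord A)), IsLeftVariable w) ∧
      ∀ a, V.map (substitute a) ∈ N}
  have hcompact : IsCompact 𝒱 := by
    have : IsClosed {V : Ultrafilter (VariableWord A) | ∀ a, V.map (substitute a) ∈ N} := by
      rw [ofPred_forall]
      exact isClosed_iInter fun a => hNclosed.preimage (continuous_ultrafilter_map _)
    exact ((ultrafilter_isClosed_basic _).inter this).isCompact
  have hne : 𝒱.Nonempty := by
    refine ⟨pure (FreeMonoid.of none) * p.map (FreeMonoid.map some),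
      eventually_isLeftVariable_mul (eventually_pure.2 rfl) _, fun a => ?_⟩
    rw [map_mul, Ultrafilter.map_map, substitute_comp_map_some, Ultrafilter.map_id]
    exact hNmul _ _ hp
  have hmul : ∀ V ∈ 𝒱, ∀ W ∈ 𝒱, V * W ∈ 𝒱 := fun V hV W hW =>
    ⟨eventually_isLeftVariable_mul hV.1 W, fun a => map_mul a V W ▸ hNmul _ _ (hW.2 a)⟩
  obtain ⟨V, hV, hidem⟩ := exists_idempotent_in_compact_subsemigroup
    Ultrafilter.continuous_mul_left 𝒱 hne hcompact hmul
  refine ⟨V, hV.1, fun a b => ?_⟩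
  obtain ⟨U, hU⟩ := hNmin _ (hV.2 b) _ (hV.2 a)
  rw [hU, mul_assoc, ← map_mul, hidem]

theorem carlson_simpson [Finite A] [Nonempty A] [Finite κ] (C : FreeMonoid A → κ) :
    ∃ (c : κ) (w : FreeMonoid A) (x : ℕ → VariableWord A),
      (∀ i, IsLeftVariable (x i)) ∧ ∀ (a : ℕ → A) (l : ℕ),
        C (w * ((List.range l).map fun i => substitute (a i) (x i)).prod) = c := by
  obtain ⟨V, hleft, hV⟩ := exists_ultrafilter_isLeftVariable A
  obtain ⟨a₀⟩ := ‹Nonempty A›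
  obtain ⟨c, hc⟩ : ∃ c, ∀ᶠ v in (V : Filter (VariableWord A)), C (substitute a₀ v) = c :=
    Ultrafilter.eventually_exists_iff.1 (.of_forall fun v => ⟨_, rfl⟩)
  have hV' (a b : A) (p : FreeMonoid A → Prop)
      (hp : ∀ᶠ v in (V : Filter (VariableWord A)), p (substitute a v)) :
      ∀ᶠ v in (V : Filter (VariableWord A)), ∀ᶠ v' in (V : Filter (VariableWord A)),
        p (substitute a v * substitute b v') := by
    change ∀ᶠ w in (V.map (substitute a) : Filter (FreeMonoid A)), p w at hp
    rwa [← hV a b] at hp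
  let Good : Set (FreeMonoid A) :=
    {w | C w = c ∧ ∀ a, ∀ᶠ v in (V : Filter (VariableWord A)), C (w * substitute a v) = c}
  have hstart : ∀ᶠ v in (V : Filter (VariableWord A)), substitute a₀ v ∈ Good :=
    hc.and (eventually_all.2 fun b => hV' a₀ b (C · = c) hc)
  have hnext (w) (hw : w ∈ Good) (a : A) :
      ∀ᶠ v in (V : Filter (VariableWord A)), w * substitute a v ∈ Good := by
    refine (hw.2 a).and (eventually_all.2 fun b => ?_)
    simpa only [mul_assoc] using hV' a b (fun v => C (w * v) = c) (hw.2 a)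
  obtain ⟨v₀, hv₀⟩ := hstart.exists
  obtain ⟨F, hF₀, hF⟩ := exists_seq_of_forall_exists
    (X := fun _ => {F : Set (FreeMonoid A) // F.Finite ∧ F ⊆ Good})
    (fun _ F F' => ∃ x, IsLeftVariable x ∧ ∀ w ∈ F.1, ∀ a, w * substitute a x ∈ F'.1)
    ⟨{substitute a₀ v₀}, finite_singleton _, singleton_subset_iff.2 hv₀⟩ fun _ F => by
      obtain ⟨x, hx, hgood⟩ := (hleft.and ((eventually_all_finite F.2.1).2 fun w hw =>
        eventually_all.2 (hnext w (F.2.2 hw)))).exists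
      exact ⟨⟨image2 (fun w a => w * substitute a x) F.1 univ, F.2.1.image2 _ finite_univ,
        image2_subset_iff.2 fun w hw a _ => hgood w hw a⟩, x, hx,
        fun w hw a => mem_image2_of_mem hw (mem_univ a)⟩
  choose x hx hmem using hF
  refine ⟨c, substitute a₀ v₀, x, hx, fun a l => ((F l).2.2 ?_).1⟩
  induction l with
  | zero => simp [hF₀]
  | succ l ih =>
    rw [List.prod_range_succ, ← mul_assoc]
    exact hmem l _ ih (a l)

end VariableWords

end Ultrafilter

namespace RigidSurj

theorem exists_mem_fixing_of_lists {m : ℕ} {G : ℕ → List ℕ} (h₀ : List.range m <+: G 0)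
    (hlt : ∀ l, ∀ y ∈ G l, y < m + l) (hsucc : ∀ l, G l ++ [m + l] <+: G (l + 1)) :
    ∃ h ∈ fixing m, ∀ l, (List.range (h.first (m + l))).map h = G l := by
  have hlen : StrictMono fun l => (G l).length := strictMono_nat_of_lt_succ fun l =>
    Nat.lt_of_succ_le (by simpa using (hsucc l).length_le)
  have hprefix (l : ℕ) : G l <+: G (l + 1) := (List.prefix_append _ _).trans (hsucc l)
  have hagree (l x : ℕ) (hx : x < (G l).length) : (G (l + 1)).getD x 0 = (G l).getD x 0 := by
    obtain ⟨t, ht⟩ := hprefix l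
    rw [← ht, List.getD_append _ _ _ _ hx]
  obtain ⟨F, hF⟩ : ∃ F : ℕ → ℕ, ∀ l, ∀ x < (G l).length, F x = (G l).getD x 0 :=
    AgreeBelow.exists_limit hlen.monotone (fun _ => hlen.le_apply) hagree
  have hbelow (l x : ℕ) (hx : x < (G l).length) : F x < m + l := by
    rw [hF l x hx, List.getD_eq_getElem _ _ hx]
    exact hlt l _ (List.getElem_mem hx)
  have hnew (l : ℕ) : F (G l).length = m + l := by
    obtain ⟨t, ht⟩ := hsucc l
    rw [hF (l + 1) _ (hlen l.lt_succ_self), ← ht]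
    simp
  have hfix (x : ℕ) (hx : x < m) : F x = x := by
    obtain ⟨t, ht⟩ := h₀
    have hxr : x < (List.range m).length := by rwa [List.length_range]
    rw [hF 0 x (hxr.trans_le (by simp [← ht])), ← ht, List.getD_append _ _ _ _ hxr]
    simp [hx]
  have hrigid : IsRigid F := fun y => by
    rcases lt_or_ge y m with hy | hy
    · exact ⟨y, hfix y hy, fun x hx => (hfix x (hx.trans hy)).trans_lt hx⟩
    · obtain ⟨l, rfl⟩ := Nat.exists_eq_add_of_le hy
      exact ⟨_, hnew l, hbelow l⟩
  refine ⟨⟨F, hrigid⟩, hfix, fun l => ?_⟩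
  rw [← eq_first (f := ⟨F, hrigid⟩) (hnew l) (hbelow l)]
  refine List.ext_getElem (by simp) fun x hx hx' => ?_
  simpa [hx'] using hF l x hx'

/-- `u` restricted to `{0, …, p - 1}` extends `v` restricted to `{0, …, m - 1}` without taking new
values. -/
def IsOldExt {α : Type*} (m : ℕ) (v : ℕ → α) (p : ℕ) (u : ℕ → α) : Prop :=
  m ≤ p ∧ AgreeBelow m u v ∧ ∀ x < p, ∃ j < m, v j = u x

/-- Letters of a variable word over the alphabet `Fin m` as natural numbers, the variable being
replaced by `n`. -/
def fillVariable {m : ℕ} (n : ℕ) (o : Option (Fin m)) : ℕ := o.elim n Fin.val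

theorem map_map_fillVariable {α : Type*} {m n : ℕ} {u v : ℕ → α} {j : Fin m}
    (huv : AgreeBelow m u v) (hj : v j = u n) (x : VariableWord (Fin m)) :
    (x.toList.map (fillVariable n)).map u = (substitute j x).toList.map fun i : Fin m => v i := by
  rw [substitute, FreeMonoid.toList_map, List.map_map, List.map_map]
  refine List.map_congr_left fun o _ => ?_
  cases o with
  | none => exact hj.symm
  | some i => exact huv i i.2

/-- The list `0, …, m - 1`, followed by `w`, followed by the words `x 0, …, x (l - 1)` in which the
letters `m, …, m + l - 1` replace the variable. -/
def wordPrefix {m : ℕ} (w : FreeMonoid (Fin m)) (x : ℕ → VariableWord (Fin m)) : ℕ → List ℕ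
  | 0 => List.range m ++ w.toList.map Fin.val
  | l + 1 => wordPrefix w x l ++ (x l).toList.map (fillVariable (m + l))

section WordPrefix

variable {m : ℕ} (w : FreeMonoid (Fin m)) (x : ℕ → VariableWord (Fin m))

theorem lt_of_mem_wordPrefix (l : ℕ) : ∀ y ∈ wordPrefix w x l, y < m + l := by
  induction l with
  | zero => simp [wordPrefix, or_imp]
  | succ l ih =>
    intro y hy
    rcases List.mem_append.1 hy with hy | hy
    · exact (ih y hy).trans (by omega)
    · obtain ⟨o | j, -, rfl⟩ := List.mem_map.1 hy
      · simp [fillVariable]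
      · simp [fillVariable]
        omega

theorem map_wordPrefix {α : Type*} {u v : ℕ → α} (huv : AgreeBelow m u v) {a : ℕ → Fin m} {l : ℕ}
    (ha : ∀ i < l, v (a i) = u (m + i)) :
    (wordPrefix w x l).map u = (List.range m).map v ++
      (w * ((List.range l).map fun i => substitute (a i) (x i)).prod).toList.map
        fun j : Fin m => v j := by
  induction l with
  | zero =>
    have hrange : (List.range m).map u = (List.range m).map v :=
      List.map_congr_left fun i hi => huv i (List.mem_range.1 hi)
    have hw : w.toList.map (fun j : Fin m => u j) = w.toList.map fun j : Fin m => v j :=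
      List.map_congr_left fun j _ => huv j j.2
    simpa [wordPrefix, hrange] using hw
  | succ l ih =>
    rw [wordPrefix, List.map_append, ih fun i hi => ha i (hi.trans l.lt_succ_self),
      map_map_fillVariable huv (ha l l.lt_succ_self), List.prod_range_succ, ← mul_assoc,
      FreeMonoid.toList_mul (w * _), List.map_append, List.append_assoc]

variable {x} in
theorem exists_mem_fixing_map_eq_wordPrefix (hx : ∀ l, IsLeftVariable (x l)) :
    ∃ h ∈ fixing m, ∀ l, (List.range (h.first (m + l))).map h = wordPrefix w x l := by
  refine exists_mem_fixing_of_lists (List.prefix_append _ _) (lt_of_mem_wordPrefix w x) fun l => ?_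
  obtain ⟨t, ht⟩ : ∃ t, (x l).toList = none :: t := List.head?_eq_some_iff.1 (hx l)
  rw [wordPrefix, List.prefix_append_right_inj]
  simp [ht, fillVariable]

end WordPrefix

theorem exists_mem_fixing_forall_isOldExt {α κ : Type*} [Finite κ] {m : ℕ} (hm : 0 < m)
    (v : ℕ → α) (C : List α → κ) :
    ∃ h ∈ fixing m, ∃ c, ∀ p u, IsOldExt m v p u →
      C ((List.range (h.first p)).map fun x => u (h x)) = c := by
  have : Nonempty (Fin m) := ⟨⟨0, hm⟩⟩
  obtain ⟨c, w, x, hx, hC⟩ := carlson_simpson fun w : FreeMonoid (Fin m) =>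
    C ((List.range m).map v ++ w.toList.map fun j : Fin m => v j)
  obtain ⟨h, hh, hfirst⟩ := exists_mem_fixing_map_eq_wordPrefix w hx
  refine ⟨h, hh, c, fun p u ⟨hp, hu, hold⟩ => ?_⟩
  obtain ⟨l, rfl⟩ := Nat.exists_eq_add_of_le hp
  have hletter : ∀ i, ∃ j : Fin m, i < l → v j = u (m + i) := fun i => by
    by_cases hi : i < l
    · obtain ⟨j, hj, he⟩ := hold (m + i) (Nat.add_lt_add_left hi m)
      exact ⟨⟨j, hj⟩, fun _ => he⟩
    · exact ⟨⟨0, hm⟩, fun hi' => absurd hi' hi⟩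
  choose a ha using hletter
  rw [← hC a l, ← map_wordPrefix w x hu ha, ← hfirst l, List.map_map]
  rfl

end RigidSurj

/-! ### Conditions and large sets -/

/-- A condition, coding the Ellentuck cube of the rigid surjections `k * base` such that `k` agrees
with `stem` on `{0, …, len - 1}`. -/
structure Condition where
  base : RigidSurj
  len : ℕ
  stem : RigidSurj

namespace Condition

open RigidSurj

/-- The Ellentuck cube coded by a condition. -/
def cube (p : Condition) : Set RigidSurj :=
  {f | ∃ k : RigidSurj, AgreeBelow p.len k p.stem ∧ k * p.base = f}

/-- The condition obtained by coarsening the base, without changing the stem. -/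
def thin (p : Condition) (h : RigidSurj) : Condition := ⟨h * p.base, p.len, p.stem⟩

/-- A condition is stronger than another if its stem extends the stem of the other and its base
coarsens the base of the other beyond that stem. -/
instance : Preorder Condition where
  le q p := p.len ≤ q.len ∧ AgreeBelow p.len q.stem p.stem ∧
    ∃ h ∈ fixing p.len, q.base = h * p.base
  le_refl p := ⟨le_rfl, .refl _ _, 1, one_mem _, rfl⟩
  le_trans := by
    rintro r q p ⟨hlen, hstem, h, hh, hbase⟩ ⟨hlen', hstem', h', hh', hbase'⟩
    exact ⟨hlen'.trans hlen, (hstem.mono hlen').trans hstem', h * h',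
      mul_mem (fixing_antitone hlen' hh) hh', by rw [hbase, hbase', mul_assoc]⟩

variable {p q : Condition} {g h v v' : RigidSurj} {m n P : ℕ}

theorem thin_le (hh : h ∈ fixing p.len) : p.thin h ≤ p := ⟨le_rfl, .refl _ _, h, hh, rfl⟩

theorem cube_antitone (hqp : q ≤ p) : q.cube ⊆ p.cube := by
  obtain ⟨hlen, hstem, h, hh, hbase⟩ := hqp
  rintro _ ⟨k, hk, rfl⟩
  exact ⟨k * h, (agreeBelow_mul hh k).trans ((hk.mono hlen).trans hstem),
    by rw [hbase, mul_assoc]⟩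

theorem cube_congr (hv : AgreeBelow n v v') : cube ⟨g, n, v⟩ = cube ⟨g, n, v'⟩ :=
  Set.ext fun _ => exists_congr fun _ => and_congr_left fun _ =>
    ⟨fun hk => hk.trans hv, fun hk => hk.trans hv.symm⟩

/-- The set `Y` meets the cube of every condition that thins `p`. -/
def Large (Y : Set RigidSurj) (p : Condition) : Prop :=
  ∀ h ∈ fixing p.len, ((p.thin h).cube ∩ Y).Nonempty

variable {Y : Set RigidSurj}

theorem Large.nonempty (hY : Large Y p) : (p.cube ∩ Y).Nonempty := hY 1 (one_mem _)

theorem Large.thin (hY : Large Y p) (hh : h ∈ fixing p.len) : Large Y (p.thin h) :=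
  fun _ hh' => hY _ (mul_mem hh' hh)

theorem Large.congr (hY : Large Y ⟨g, n, v⟩) (hv : AgreeBelow n v v') : Large Y ⟨g, n, v'⟩ :=
  fun h hh => by simpa only [Condition.thin, cube_congr hv] using hY h hh

theorem cube_merge_subset (i : Fin n) (hv : AgreeBelow n v' v) (hi : v' n = v i) :
    cube ⟨RigidSurj.merge i * g, n, v⟩ ⊆ cube ⟨g, n + 1, v'⟩ := by
  rintro _ ⟨k, hk, rfl⟩
  refine ⟨k * RigidSurj.merge i, fun x hx => ?_, rfl⟩
  rcases (Nat.lt_succ_iff.1 hx).lt_or_eq with hxn | rfl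
  · exact (agreeBelow_mul (merge_mem_fixing i) k x hxn).trans ((hk x hxn).trans (hv x hxn).symm)
  · exact (congrArg k (merge_self i)).trans ((hk i i.2).trans hi.symm)

theorem Large.merge (hY : Large Y ⟨g, n, v⟩) (i : Fin n) (hv : AgreeBelow n v' v)
    (hi : v' n = v i) : Large Y ⟨g, n + 1, v'⟩ := fun h hh =>
  (hY (RigidSurj.merge i * h) (mul_mem (merge_mem_fixing i) (fixing_antitone n.le_succ hh))).mono <|
    inter_subset_inter_left _ (cube_merge_subset (g := h * g) i hv hi)

theorem Large.pull (hY : Large Y ⟨g, P, v * h⟩) (hc : CoversBelow h P m) :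
    Large Y ⟨h * g, m, v⟩ := by
  intro h₂ hh₂
  obtain ⟨h₃, hh₃, hamalg⟩ := exists_shift_mul_eq hc hh₂
  obtain ⟨_, ⟨k, hk, rfl⟩, hmem⟩ := hY h₃ hh₃
  obtain ⟨k', hk', rfl⟩ := exists_eq_mul_shift hc hk
  refine ⟨_, ⟨k', hk', ?_⟩, hmem⟩
  change k' * (h₂ * (h * g)) = k' * shift h hc * (h₃ * g)
  rw [mul_assoc, ← mul_assoc (shift h hc), hamalg, mul_assoc]

/-- The set `Y` is large above every extension of the stem of `p` in which only the last letter
is new. -/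
def LargeAtNewLetter (Y : Set RigidSurj) (p : Condition) : Prop :=
  ∀ P (u : RigidSurj), IsOldExt p.len p.stem P u → (∀ x < P, u x ≠ u P) →
    Large Y ⟨p.base, P + 1, u⟩

theorem LargeAtNewLetter.congr (hY : LargeAtNewLetter Y ⟨g, n, v⟩) (hv : AgreeBelow n v v') :
    LargeAtNewLetter Y ⟨g, n, v'⟩ := fun P u ⟨hP, hu, hold⟩ =>
  hY P u ⟨hP, AgreeBelow.trans hu hv.symm, fun x hx =>
    let ⟨j, hj, he⟩ := hold x hx
    ⟨j, hj, (hv j hj).trans he⟩⟩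

theorem LargeAtNewLetter.thin (hY : LargeAtNewLetter Y p) (hh : h ∈ fixing p.len) :
    LargeAtNewLetter Y (p.thin h) := by
  rintro P u ⟨hP, hu, hold⟩ hnew
  refine (hY (h.first P) (u * h)
    ⟨hP.trans (h.le_first P), (agreeBelow_mul hh u).trans hu, fun x hx => ?_⟩
    fun x hx => ?_).pull (coversBelow_first_succ h P)
  · exact hold _ (apply_lt_of_lt_first hx)
  · simpa using hnew _ (apply_lt_of_lt_first hx)

theorem isDenseOpen_iInter_stem {D : RigidSurj → Set RigidSurj}
    (hcongr : ∀ v v' : RigidSurj, AgreeBelow m v v' → D v ⊆ D v') (hD : ∀ v, IsDenseOpen m (D v)) :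
    IsDenseOpen m (⋂ v, D v) := by
  let stems := range fun v : RigidSurj => v.restrict m
  have hrep (c : stems) : (c.2.choose).restrict m = c := c.2.choose_spec
  have heq : ⋂ v, D v = ⋂ c : stems, D c.2.choose :=
    (subset_iInter fun c => iInter_subset _ _).antisymm <| subset_iInter fun v =>
      (iInter_subset _ ⟨_, mem_range_self v⟩).trans <|
        hcongr _ _ (restrict_eq_restrict_iff.1 (hrep ⟨_, mem_range_self v⟩))
  rw [heq]
  exact IsDenseOpen.iInter fun _ => hD _

theorem exists_forall_decided (Y : Set RigidSurj) (n : ℕ) (g : RigidSurj) :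
    ∃ h ∈ fixing n, ∀ m ≥ n, ∀ v : RigidSurj,
      (cube ⟨h * g, m, v⟩ ∩ Y).Nonempty → Large Y ⟨h * g, m, v⟩ := by
  let B (m : ℕ) (v : RigidSurj) : Set RigidSurj := {g | (cube ⟨g, m, v⟩ ∩ Y).Nonempty}
  have hcongr {m : ℕ} {v v' : RigidSurj} (hv : AgreeBelow m v v') : B m v = B m v' :=
    Set.ext fun _ => by simp only [B, mem_ofPred_eq, cube_congr hv]
  obtain ⟨h, hh, hmem⟩ := exists_mul_mem_of_isDenseOpen (n := n)
    (fun m _ => isDenseOpen_iInter_stem (D := fun v => (B m v)ᶜ ∪ persistent m (B m v))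
      (fun v v' hv => by simp only [hcongr hv]; rfl)
      fun v => isDenseOpen_compl_union_persistent fun g h hh hg =>
        hg.mono (inter_subset_inter_left _ (cube_antitone (thin_le (p := ⟨g, m, v⟩) hh)))) g
  exact ⟨h, hh, fun m hm v hne =>
    (mem_iInter.1 (hmem m hm) v).resolve_left (not_not_intro hne)⟩

theorem exists_isOldExt_new (hk : AgreeBelow m h v) :
    ∃ P, IsOldExt m v P h ∧ ∀ x < P, h x ≠ h P := by
  have hex : ∃ y, ∀ j < m, v j ≠ h y :=
    ⟨h.first m, fun j hj => by rw [apply_first]; exact (apply_lt hj).ne⟩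
  classical
  have hold : ∀ x < Nat.find hex, ∃ j < m, v j = h x := fun x hx => by
    simpa using Nat.find_min hex hx
  refine ⟨Nat.find hex, ⟨not_lt.1 fun hlt => ?_, hk, hold⟩, fun x hx he => ?_⟩
  · exact Nat.find_spec hex _ hlt (hk _ hlt).symm
  · obtain ⟨j, hj, hjx⟩ := hold x hx
    exact Nat.find_spec hex j hj (hjx.trans he)

theorem Large.exists_largeAtNewLetter_of_decided (hY : Large Y p) (hpos : 0 < p.len)
    (hdec : ∀ m ≥ p.len, ∀ v : RigidSurj,
      (cube ⟨p.base, m, v⟩ ∩ Y).Nonempty → Large Y ⟨p.base, m, v⟩) :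
    ∃ h ∈ fixing p.len, LargeAtNewLetter Y (p.thin h) := by
  let avoids (L : List ℕ) : Prop := ∀ u : RigidSurj, (List.range L.length).map u = L →
    (∀ x < L.length, u x ≠ u L.length) → ¬(cube ⟨p.base, L.length + 1, u⟩ ∩ Y).Nonempty
  obtain ⟨h, hh, c, hc⟩ := exists_mem_fixing_forall_isOldExt hpos p.stem avoids
  refine ⟨h, hh, ?_⟩
  have havoids {P : ℕ} {u : RigidSurj} (hu : IsOldExt p.len p.stem P u) :
      c ↔ ∀ u' : RigidSurj, AgreeBelow (h.first P) u' (u * h : RigidSurj) →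
        (∀ x < h.first P, u' x ≠ u' (h.first P)) →
        ¬(cube ⟨p.base, h.first P + 1, u'⟩ ∩ Y).Nonempty := by
    rw [← hc P u hu]
    simp only [avoids, List.length_map, List.length_range, List.map_inj_left, List.mem_range]
    rfl
  have hnew {P : ℕ} {u : RigidSurj} (hu : ∀ x < P, u x ≠ u P) :
      ∀ x < h.first P, (u * h) x ≠ (u * h) (h.first P) := fun x hx => by
    simpa using hu _ (apply_lt_of_lt_first hx)
  have hnc : ¬c := fun hc => by
    obtain ⟨_, ⟨k, hk, rfl⟩, hmem⟩ := hY h hh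
    obtain ⟨P, hP, hkP⟩ := exists_isOldExt_new hk
    exact (havoids hP).1 hc (k * h) (.refl _ _) (hnew hkP) ⟨_, ⟨k * h, .refl _ _, rfl⟩, hmem⟩
  intro P u hu huP
  obtain ⟨u', hagree, hu', hne⟩ : ∃ u' : RigidSurj,
      AgreeBelow (h.first P) u' (u * h : RigidSurj) ∧
        (∀ x < h.first P, u' x ≠ u' (h.first P)) ∧
        (cube ⟨p.base, h.first P + 1, u'⟩ ∩ Y).Nonempty := by
    simpa only [not_forall, not_not, exists_prop] using mt (havoids hu).2 hnc
  have hagree' : AgreeBelow (h.first P + 1) u' (u * h : RigidSurj) := fun x hx => by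
    rcases (Nat.lt_succ_iff.1 hx).lt_or_eq with hlt | rfl
    · exact hagree x hlt
    · exact apply_eq_of_new hagree hu' (hnew huP)
  have hlen : p.len ≤ h.first P + 1 := hu.1.trans ((h.le_first P).trans (Nat.le_succ _))
  exact ((hdec _ hlen u' hne).congr hagree').pull (coversBelow_first_succ h P)

theorem Large.exists_largeAtNewLetter (hY : Large Y p) (hpos : 0 < p.len) :
    ∃ h ∈ fixing p.len, LargeAtNewLetter Y (p.thin h) := by
  obtain ⟨h, hh, hdec⟩ := exists_forall_decided Y p.len p.base
  obtain ⟨h', hh', hnew⟩ := (hY.thin hh).exists_largeAtNewLetter_of_decided hpos hdec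
  exact ⟨h' * h, mul_mem hh' hh, hnew⟩

theorem isDenseOpen_disjoint_or_largeAtNewLetter (hm : 0 < m) (v : RigidSurj) :
    IsDenseOpen m {g | ¬(cube ⟨g, m, v⟩ ∩ Y).Nonempty ∨ LargeAtNewLetter Y ⟨g, m, v⟩} where
  mul_mem g hg h hh := hg.imp
    (mt fun hne => hne.mono (inter_subset_inter_left _
      (cube_antitone (thin_le (p := ⟨g, m, v⟩) hh))))
    fun hnew => hnew.thin hh
  exists_mul_mem g := by
    by_cases hY : Large Y ⟨g, m, v⟩
    · obtain ⟨h, hh, hnew⟩ := hY.exists_largeAtNewLetter hm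
      exact ⟨h, hh, Or.inr hnew⟩
    · obtain ⟨h, hh, hdisj⟩ : ∃ h ∈ fixing m, ¬((thin ⟨g, m, v⟩ h).cube ∩ Y).Nonempty := by
        simpa only [Large, not_forall, exists_prop] using hY
      exact ⟨h, hh, Or.inl hdisj⟩

theorem Large.exists_thin_forall_stem (hY : Large Y p) (hpos : 0 < p.len) :
    ∃ h ∈ fixing p.len, ∀ m ≥ p.len, ∀ v : RigidSurj, AgreeBelow p.len v p.stem →
      Large Y ⟨h * p.base, m, v⟩ := by
  obtain ⟨h, hh, hmem⟩ := exists_mul_mem_of_isDenseOpen (n := p.len)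
    (fun m hm => isDenseOpen_iInter_stem
      (fun v v' hv g => Or.imp (by rw [cube_congr hv]; exact id) fun hnew => hnew.congr hv)
      (isDenseOpen_disjoint_or_largeAtNewLetter (Y := Y) (hpos.trans_le hm))) p.base
  refine ⟨h, hh, fun m hm => ?_⟩
  induction m, hm using Nat.le_induction with
  | base => exact fun v hv => (hY.thin hh).congr hv.symm
  | succ m hm ih =>
    intro v hv
    by_cases hold : ∃ i < m, v m = v i
    · obtain ⟨i, hi, he⟩ := hold
      exact (ih v hv).merge ⟨i, hi⟩ (.refl _ _) he
    · push Not at hold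
      have hnew := (mem_iInter.1 (hmem m hm) v).resolve_left (not_not_intro (ih v hv).nonempty)
      exact hnew m v ⟨le_rfl, .refl _ _, fun x hx => ⟨x, hx, rfl⟩⟩ fun x hx => (hold x hx).symm

theorem Large.exists_thin_forall_le (hY : Large Y p) (hpos : 0 < p.len) :
    ∃ h ∈ fixing p.len, ∀ q ≤ p.thin h, Large Y q := by
  obtain ⟨h, hh, hlarge⟩ := hY.exists_thin_forall_stem hpos
  refine ⟨h, hh, ?_⟩
  rintro ⟨_, m, v⟩ ⟨hlen, hv, h', hh', rfl⟩
  exact (hlarge (h'.first m) (hlen.trans (h'.le_first m)) (v * h')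
    ((agreeBelow_mul hh' v).trans hv)).pull (coversBelow_first h' m)

end Condition

/-! ### Intersections of large analytic sets -/

theorem analyticSet_of_measurableSet {X : Type*} [TopologicalSpace X] [SecondCountableTopology X]
    [MeasurableSpace X] [OpensMeasurableSpace X] [StandardBorelSpace X] {s : Set X}
    (hs : MeasurableSet s) : AnalyticSet s := by
  simpa only [image_id] using hs.analyticSet_image measurable_id

theorem measurableSet_isRigid : MeasurableSet {f | IsRigid f} := by
  simp only [IsRigid, Set.ofPred_forall, Set.ofPred_exists, Set.ofPred_and]
  exact .iInter fun y => .iUnion fun x => .inter (measurableSet_eq_fun (by fun_prop) (by fun_prop))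
    (.iInter fun x' => .iInter fun _ => measurableSet_lt (by fun_prop) (by fun_prop))

instance : SecondCountableTopology RigidSurj :=
  inferInstanceAs (SecondCountableTopology {f | IsRigid f})

instance : StandardBorelSpace RigidSurj := measurableSet_isRigid.standardBorel

namespace Condition

open RigidSurj

theorem mem_cube_iff {p : Condition} {f : RigidSurj} :
    f ∈ p.cube ↔
      (∀ x, f (p.base.first (p.base x)) = f x) ∧ ∀ y < p.len, f (p.base.first y) = p.stem y := by
  constructor
  · rintro ⟨k, hk, rfl⟩
    exact ⟨fun x => by simp, fun y hy => by simpa using hk y hy⟩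
  · rintro ⟨hfactor, hstem⟩
    have hcomp : (f ∘ p.base.first) ∘ p.base = f := funext hfactor
    exact ⟨⟨_, isRigid_of_comp p.base (hcomp ▸ f.2)⟩, hstem, Subtype.ext hcomp⟩

theorem apply_eq_of_mem_cube {p : Condition} {f : RigidSurj} (hf : f ∈ p.cube) {x : ℕ}
    (hx : x < p.len) : f x = p.stem (p.base x) := by
  rw [mem_cube_iff] at hf
  rw [← hf.1, hf.2 _ (apply_lt hx)]

theorem agreeBelow_of_mem_cube {p : Condition} {f f' : RigidSurj} (hf : f ∈ p.cube)
    (hf' : f' ∈ p.cube) : AgreeBelow p.len f f' :=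
  fun _ hx => (apply_eq_of_mem_cube hf hx).trans (apply_eq_of_mem_cube hf' hx).symm

theorem isClosed_cube (p : Condition) : IsClosed p.cube := by
  have happly (x : ℕ) : Continuous fun f : RigidSurj => f x :=
    (continuous_apply x).comp continuous_subtype_val
  have hcube : p.cube = {f : RigidSurj | ∀ x, f (p.base.first (p.base x)) = f x} ∩
      {f : RigidSurj | ∀ y < p.len, f (p.base.first y) = p.stem y} := Set.ext fun _ => mem_cube_iff
  rw [hcube]
  simp only [Set.ofPred_forall]
  exact (isClosed_iInter fun x => isClosed_eq (happly _) (happly x)).inter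
    (isClosed_iInter fun y => isClosed_iInter fun _ => isClosed_eq (happly _) continuous_const)

/-- The condition `q` is a proper strengthening of `p` whose stem takes the value `t`. -/
def IsStep (t : ℕ) (p q : Condition) : Prop :=
  q ≤ p ∧ p.len < q.len ∧ ∃ x < q.len, q.stem x = t

variable {p q r : Condition} {h u : RigidSurj} {l t : ℕ}

theorem IsStep.of_le (hq : IsStep t q r) (hqp : q ≤ p) : IsStep t p r :=
  ⟨hq.1.trans hqp, hqp.1.trans_lt hq.2.1, hq.2.2⟩

theorem IsStep.trans_le (hq : IsStep t p q) (hrq : r ≤ q) : IsStep t p r :=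
  ⟨hrq.trans hq.1, hq.2.1.trans_le hrq.1,
    let ⟨x, hx, he⟩ := hq.2.2
    ⟨x, hx.trans_le hrq.1, (hrq.2.1 x hx).trans he⟩⟩

section Chain

variable {ps : ℕ → Condition}

theorem le_len_of_isStep (hps : ∀ t, IsStep t (ps t) (ps (t + 1))) (t : ℕ) : t ≤ (ps t).len :=
  (strictMono_nat_of_lt_succ fun t => (hps t).2.1).le_apply

theorem exists_forall_mem_cube (hps : ∀ t, IsStep t (ps t) (ps (t + 1))) :
    ∃ f, ∀ t, f ∈ (ps t).cube := by
  have hlen : StrictMono fun t => (ps t).len := strictMono_nat_of_lt_succ fun t => (hps t).2.1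
  obtain ⟨K, hK⟩ := AgreeBelow.exists_limit hlen.monotone (le_len_of_isStep hps)
    (f := fun t => (ps t).stem) fun t => (hps t).1.2.1
  have hrigid : IsRigid K := fun y => by
    obtain ⟨x, hx, he⟩ := (hps y).2.2
    have hfirst : (ps (y + 1)).stem.first y < (ps (y + 1)).len :=
      (first_le_of_le_apply he.ge).trans_lt hx
    exact ⟨_, (hK _ _ hfirst).trans (apply_first _ y), fun x' hx' =>
      (hK _ x' (hx'.trans hfirst)).trans_lt (apply_lt_of_lt_first hx')⟩
  choose h hh hbase using fun t => (hps t).1.2.2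
  obtain ⟨G, hG⟩ := exists_infinite_product hlen hh
  have htail (t : ℕ) : G 0 * (ps 0).base = G t * (ps t).base := by
    induction t with
    | zero => rfl
    | succ t ih => rw [ih, (hG t).2, hbase, mul_assoc]
  exact ⟨⟨K, hrigid⟩ * (G 0 * (ps 0).base), fun t => ⟨⟨K, hrigid⟩ * G t,
    (agreeBelow_mul (hG t).1 ⟨K, hrigid⟩).trans (hK t), by rw [htail t, mul_assoc]⟩⟩

theorem apply_limit_eq {α : (ℕ → ℕ) → RigidSurj} (hα : Continuous α) {y : ℕ → ℕ → ℕ} {Z : ℕ → ℕ}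
    (hy : ∀ t, AgreeBelow t (y t) Z) (hlen : ∀ t, t ≤ (ps t).len) {f : RigidSurj}
    (hf : ∀ t, f ∈ (ps t).cube) (hmem : ∀ t, α (y t) ∈ (ps t).cube) : α Z = f := by
  have hlim : Tendsto (fun t => α (y t)) atTop (𝓝 (α Z)) :=
    (hα.tendsto Z).comp (AgreeBelow.tendsto (fun _ => le_rfl) hy)
  refine Subtype.ext (tendsto_nhds_unique ((continuous_subtype_val.tendsto _).comp hlim) ?_)
  exact AgreeBelow.tendsto hlen fun t => agreeBelow_of_mem_cube (hmem t) (hf t)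

theorem apply_limit_mem_cube {α : (ℕ → ℕ) → RigidSurj} (hα : Continuous α) {y : ℕ → ℕ → ℕ}
    {Z : ℕ → ℕ} (hy : ∀ t, AgreeBelow t (y t) Z) (hps : Antitone ps)
    (hmem : ∀ t, α (y t) ∈ (ps t).cube) (t : ℕ) : α Z ∈ (ps t).cube :=
  (ps t).isClosed_cube.mem_of_tendsto
    ((hα.tendsto Z).comp (AgreeBelow.tendsto (fun _ => le_rfl) hy))
    (eventually_atTop.2 ⟨t, fun s hs => cube_antitone (hps hs) (hmem s)⟩)

end Chain

/-- The condition obtained by replacing the stem. -/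
def withStem (p : Condition) (u : RigidSurj) : Condition := ⟨p.base, p.len, u⟩

/-- For a parametrization `φ` of a binary relation, the points `f` related to some member of the
cube of `p` by a parameter agreeing with `z` on `{0, …, l - 1}`. -/
def shadow (φ : (ℕ → ℕ) → RigidSurj × RigidSurj) (p : Condition) (l : ℕ) (z : ℕ → ℕ) :
    Set RigidSurj :=
  {f | ∃ y, AgreeBelow l y z ∧ (φ y).1 = f ∧ (φ y).2 ∈ p.cube}

/-- However `p` is thinned, the relation parametrized by `φ` contains a pair from the product of its
cube and the cube with stem `u`, with a parameter agreeing with `z` on `{0, …, l - 1}`. -/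
def JointlyLarge (φ : (ℕ → ℕ) → RigidSurj × RigidSurj) (p : Condition) (u : RigidSurj) (l : ℕ)
    (z : ℕ → ℕ) : Prop :=
  ∀ h ∈ fixing p.len, ((p.thin h).cube ∩ shadow φ ((p.withStem u).thin h) l z).Nonempty

variable {φ : (ℕ → ℕ) → RigidSurj × RigidSurj}

theorem shadow_antitone (hqp : q ≤ p) (z : ℕ → ℕ) : shadow φ q l z ⊆ shadow φ p l z :=
  fun _ ⟨y, hy, hf, hmem⟩ => ⟨y, hy, hf, cube_antitone hqp hmem⟩

theorem JointlyLarge.large_shadow {z : ℕ → ℕ} (hφ : JointlyLarge φ p u l z)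
    (hh : h ∈ fixing p.len) : Large (shadow φ ((p.withStem u).thin h) l z) (p.thin h) :=
  fun h' hh' => (hφ (h' * h) (mul_mem hh' hh)).mono <| inter_subset_inter_right _ <|
    shadow_antitone (thin_le (p := (p.withStem u).thin h) hh') z

theorem analyticSet_shadow (hφ : Continuous φ) (p : Condition) (l : ℕ) (z : ℕ → ℕ) :
    AnalyticSet (shadow φ p l z) := by
  have himage : shadow φ p l z =
      (fun y => (φ y).1) '' ({y | AgreeBelow l y z} ∩ (fun y => (φ y).2) ⁻¹' p.cube) := by
    ext f
    simp only [shadow, mem_image, mem_inter_iff, mem_ofPred_eq, mem_preimage]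
    exact exists_congr fun y => by tauto
  have hclosed : IsClosed {y | AgreeBelow l y z} := by
    simp only [AgreeBelow, Set.ofPred_forall]
    exact isClosed_iInter fun x => isClosed_iInter fun _ =>
      isClosed_eq (continuous_apply x) continuous_const
  rw [himage]
  exact (hclosed.inter (p.isClosed_cube.preimage hφ.snd)).analyticSet.image_of_continuous hφ.fst

theorem exists_stable_pattern {κ ι : Type*} [Finite κ] [Finite ι]
    {D : RigidSurj → (κ → RigidSurj) → (ι → ℕ → ℕ) → Prop} {n : ℕ} {g : RigidSurj} (l t : ℕ)
    (hD : ∀ g k y, ∀ h ∈ fixing n, D (h * g) k y → D g (fun i => k i * h) y)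
    (hex : ∀ h ∈ fixing n, ∃ k y, D (h * g) k y) :
    ∃ h ∈ fixing n, ∃ m > n, ∃ k y, D (h * g) k y ∧ (∀ i, ∃ x < m, k i x = t) ∧
      ∀ h' ∈ fixing m, ∃ k' y', D (h' * (h * g)) k' y' ∧
        (∀ i, AgreeBelow m (k' i) (k i)) ∧ ∀ i, AgreeBelow l (y' i) (y i) := by
  let Code (m : ℕ) : Type _ := (κ → Fin m → Fin m) × (ι → Fin l → Fin m)
  let HasCode (m : ℕ) (c : Code m) (k : κ → RigidSurj) (y : ι → ℕ → ℕ) : Prop :=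
    (∀ i, ∀ x : Fin m, k i x = c.1 i x) ∧ ∀ i, ∀ x : Fin l, y i x = c.2 i x
  let B (m : ℕ) (c : Code m) : Set RigidSurj :=
    {g | ∃ k y, D g k y ∧ (∀ i, ∃ x < m, k i x = t) ∧ HasCode m c k y}
  have hB : ∀ m ≥ n, ∀ c g, ∀ h ∈ fixing m, h * g ∈ B m c → g ∈ B m c := by
    rintro m hm c g h hh ⟨k, y, hDk, ht, hck, hcy⟩
    have hmul (i : κ) : AgreeBelow m (k i * h : RigidSurj) (k i) := agreeBelow_mul hh (k i)
    exact ⟨fun i => k i * h, y, hD g k y h (fixing_antitone hm hh) hDk,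
      fun i => let ⟨x, hx, he⟩ := ht i; ⟨x, hx, (hmul i x hx).trans he⟩,
      fun i x => (hmul i x x.2).trans (hck i x), hcy⟩
  obtain ⟨h, hh, m, hm, c, hpers⟩ := exists_mem_persistent hB fun h hh => by
    obtain ⟨k, y, hDk⟩ := hex h hh
    obtain ⟨a, ha⟩ := Finite.bddAbove_range fun i => (k i).first t
    obtain ⟨b, hb⟩ := Finite.bddAbove_range fun ix : ι × Fin l => y ix.1 ix.2
    have hfirst (i) : (k i).first t ≤ a := ha ⟨i, rfl⟩
    have hval (i) (x : Fin l) : y i x ≤ b := hb ⟨(i, x), rfl⟩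
    exact ⟨n + a + b + 1, by omega,
      ⟨fun i x => ⟨k i x, apply_lt x.2⟩, fun i x => ⟨y i x, (hval i x).trans_lt (by omega)⟩⟩, k, y,
      hDk, fun i => ⟨_, (hfirst i).trans_lt (by omega), apply_first (k i) t⟩, fun _ _ => rfl,
      fun _ _ => rfl⟩
  obtain ⟨k, y, hDk, ht, hck, hcy⟩ := hpers 1 (one_mem _)
  refine ⟨h, hh, m, hm, k, y, hDk, ht, fun h' hh' => ?_⟩
  obtain ⟨k', y', hDk', -, hck', hcy'⟩ := hpers h' hh'
  exact ⟨k', y', hDk', fun i x hx => (hck' i ⟨x, hx⟩).trans (hck i ⟨x, hx⟩).symm,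
    fun i x hx => (hcy' i ⟨x, hx⟩).trans (hcy i ⟨x, hx⟩).symm⟩

theorem exists_isStep_of_common {ι : Type*} [Finite ι] {p : Condition} {us : ι → RigidSurj}
    {l : ℕ} {zs : ι → ℕ → ℕ} (t : ℕ)
    (hcommon : ∀ h ∈ fixing p.len,
      ((p.thin h).cube ∩ ⋂ i, shadow φ ((p.withStem (us i)).thin h) l (zs i)).Nonempty) :
    ∃ q, IsStep t p q ∧ ∃ (us' : ι → RigidSurj) (zs' : ι → ℕ → ℕ), ∀ i,
      AgreeBelow p.len (us' i) (us i) ∧ AgreeBelow l (zs' i) (zs i) ∧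
        JointlyLarge φ q (us' i) (l + 1) (zs' i) := by
  let D (g : RigidSurj) (k : Option ι → RigidSurj) (y : ι → ℕ → ℕ) : Prop :=
    AgreeBelow p.len (k none) p.stem ∧ ∀ i, AgreeBelow p.len (k (some i)) (us i) ∧
      AgreeBelow l (y i) (zs i) ∧ φ (y i) = (k none * g, k (some i) * g)
  have hD : ∀ g k y, ∀ h ∈ fixing p.len, D (h * g) k y → D g (fun i => k i * h) y :=
    fun g k y h hh ⟨hstem, hD⟩ => ⟨(agreeBelow_mul hh _).trans hstem, fun i =>
      ⟨(agreeBelow_mul hh _).trans (hD i).1, (hD i).2.1, (hD i).2.2⟩⟩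
  obtain ⟨h, hh, m, hm, k, y, ⟨hstem, hDi⟩, ht, hstable⟩ :=
    exists_stable_pattern (g := p.base) (l + 1) t hD fun h hh => by
      obtain ⟨_, ⟨k, hk, rfl⟩, hmem⟩ := hcommon h hh
      choose y hy hfst k' hk' hsnd using mem_iInter.1 hmem
      exact ⟨fun i => i.elim k k', y, hk, fun i =>
        ⟨hk' i, hy i, Prod.ext (hfst i) (hsnd i).symm⟩⟩
  refine ⟨⟨h * p.base, m, k none⟩, ⟨⟨hm.le, hstem, h, hh, rfl⟩, hm, ht none⟩,
    fun i => k (some i), y, fun i => ⟨(hDi i).1, (hDi i).2.1, fun h' hh' => ?_⟩⟩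
  obtain ⟨k', y', ⟨-, hD'⟩, hk', hy'⟩ := hstable h' hh'
  exact ⟨_, ⟨k' none, hk' none, rfl⟩, y' i, hy' i, congrArg Prod.fst (hD' i).2.2,
    k' (some i), hk' (some i), (congrArg Prod.snd (hD' i).2.2).symm⟩

variable {Y Y' : Set RigidSurj}

theorem Large.exists_isStep {α : (ℕ → ℕ) → RigidSurj} {z : ℕ → ℕ}
    (hα : Large (α '' {y | AgreeBelow l y z}) p) (hY : Large Y p) (hpos : 0 < p.len) (t : ℕ) :
    ∃ q, IsStep t p q ∧ ∃ z', AgreeBelow l z' z ∧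
      Large (α '' {y | AgreeBelow (l + 1) y z'}) q ∧ Large Y q := by
  obtain ⟨h, hh, hle⟩ := hY.exists_thin_forall_le hpos
  obtain ⟨q, hq, us, zs, hnear⟩ := exists_isStep_of_common (φ := fun y => (α y, α y))
    (p := p.thin h) (us := fun _ : Unit => p.stem) (zs := fun _ => z) t fun h' hh' => by
      obtain ⟨_, hcube, y, hy, rfl⟩ := hα.thin hh h' hh'
      exact ⟨α y, hcube, mem_iInter.2 fun _ => ⟨y, hy, rfl, hcube⟩⟩
  refine ⟨q, hq.of_le (thin_le hh), zs (), (hnear ()).2.1, fun h' hh' => ?_, hle q hq.1⟩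
  obtain ⟨f, hf, y, hy, rfl, -⟩ := (hnear ()).2.2 h' hh'
  exact ⟨α y, hf, y, hy, rfl⟩

theorem mem_range_of_chain {α : (ℕ → ℕ) → RigidSurj} (hα : Continuous α) {ps : ℕ → Condition}
    (hlen : ∀ t, t ≤ (ps t).len) {zs : ℕ → ℕ → ℕ} (hzs : ∀ t, AgreeBelow t (zs (t + 1)) (zs t))
    (hne : ∀ t, ((ps t).cube ∩ α '' {y | AgreeBelow t y (zs t)}).Nonempty) {f : RigidSurj}
    (hf : ∀ t, f ∈ (ps t).cube) : f ∈ range α := by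
  obtain ⟨Z, hZ⟩ := AgreeBelow.exists_limit (m := id) monotone_id (fun _ => le_rfl) hzs
  have happrox (t : ℕ) : ∃ y, AgreeBelow t y Z ∧ α y ∈ (ps t).cube := by
    obtain ⟨_, hmem, y, hy, rfl⟩ := hne t
    exact ⟨y, AgreeBelow.trans hy (hZ t).symm, hmem⟩
  choose y hy hmem using happrox
  exact ⟨Z, apply_limit_eq hα hy hlen hf hmem⟩

theorem Large.inter_range_nonempty {α β : (ℕ → ℕ) → RigidSurj} (hα : Continuous α)
    (hβ : Continuous β) (hlα : Large (range α) p) (hlβ : Large (range β) p) (hpos : 0 < p.len) :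
    (p.cube ∩ (range α ∩ range β)).Nonempty := by
  let Stage (t : ℕ) : Type := {x : Condition × (ℕ → ℕ) × (ℕ → ℕ) // 0 < x.1.len ∧
    Large (α '' {y | AgreeBelow t y x.2.1}) x.1 ∧ Large (β '' {y | AgreeBelow t y x.2.2}) x.1}
  have huniv : {y | AgreeBelow 0 y id} = univ := eq_univ_of_forall fun _ _ hx => by omega
  obtain ⟨xs, hx₀, hxs⟩ := exists_seq_of_forall_exists (X := Stage)
    (fun t x x' => IsStep t x.1.1 x'.1.1 ∧ AgreeBelow t x'.1.2.1 x.1.2.1 ∧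
      AgreeBelow t x'.1.2.2 x.1.2.2)
    ⟨(p, id, id), hpos, by simpa only [huniv, image_univ] using ⟨hlα, hlβ⟩⟩ fun t x => by
      obtain ⟨⟨p, z, w⟩, hpos, hz, hw⟩ := x
      obtain ⟨q, hq, z', hz', hqz, hqw⟩ := hz.exists_isStep hw hpos t
      obtain ⟨r, hr, w', hw', hrw, hrz⟩ := hqw.exists_isStep hqz (hpos.trans hq.2.1) t
      exact ⟨⟨(r, z', w'), (hpos.trans hq.2.1).trans hr.2.1, hrz, hrw⟩, hq.trans_le hr.1, hz', hw'⟩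
  have hstep : ∀ t, IsStep t (xs t).1.1 (xs (t + 1)).1.1 := fun t => (hxs t).1
  have hlen := le_len_of_isStep hstep
  obtain ⟨f, hf⟩ := exists_forall_mem_cube hstep
  refine ⟨f, by simpa only [hx₀] using hf 0, ?_, ?_⟩
  · exact mem_range_of_chain hα hlen (fun t => (hxs t).2.1) (fun t => (xs t).2.2.1.nonempty) hf
  · exact mem_range_of_chain hβ hlen (fun t => (hxs t).2.2) (fun t => (xs t).2.2.2.nonempty) hf

theorem Large.inter (hY : Large Y p) (hY' : Large Y' p) (hYan : AnalyticSet Y)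
    (hYan' : AnalyticSet Y') (hpos : 0 < p.len) : Large (Y ∩ Y') p := by
  rw [AnalyticSet] at hYan hYan'
  obtain ⟨α, hα, rfl⟩ := hYan.resolve_left hY.nonempty.right.ne_empty
  obtain ⟨β, hβ, rfl⟩ := hYan'.resolve_left hY'.nonempty.right.ne_empty
  exact fun h hh => (hY.thin hh).inter_range_nonempty hα hβ (hY'.thin hh) hpos

theorem Large.iInter {ι : Type*} [Finite ι] {Ys : ι → Set RigidSurj} (hYs : ∀ i, Large (Ys i) p)
    (han : ∀ i, AnalyticSet (Ys i)) (hpos : 0 < p.len) : Large (⋂ i, Ys i) p := by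
  suffices ∀ s : Set ι, s.Finite → AnalyticSet (⋂ i ∈ s, Ys i) ∧ Large (⋂ i ∈ s, Ys i) p by
    simpa only [mem_univ, iInter_true] using (this univ finite_univ).2
  intro s hs
  induction s, hs using Set.Finite.induction_on with
  | empty =>
    simp only [mem_empty_iff_false, iInter_of_empty, iInter_univ]
    exact ⟨analyticSet_of_measurableSet .univ, fun h _ => ⟨_, ⟨p.stem, .refl _ _, rfl⟩, mem_univ _⟩⟩
  | @insert i s _ _ ih =>
    rw [biInter_insert]
    refine ⟨?_, (hYs i).inter ih.2 (han i) ih.1 hpos⟩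
    rw [inter_eq_iInter]
    exact AnalyticSet.iInter fun b => by cases b; exacts [ih.1, han i]

theorem JointlyLarge.exists_isStep {ι : Type*} [Finite ι] (hφ : Continuous φ) {us : ι → RigidSurj}
    {zs : ι → ℕ → ℕ} (hlarge : ∀ i, JointlyLarge φ p (us i) l (zs i)) (hpos : 0 < p.len) (t : ℕ) :
    ∃ q, IsStep t p q ∧ ∃ (us' : ι → RigidSurj) (zs' : ι → ℕ → ℕ), ∀ i,
      AgreeBelow p.len (us' i) (us i) ∧ AgreeBelow l (zs' i) (zs i) ∧
        JointlyLarge φ q (us' i) (l + 1) (zs' i) :=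
  exists_isStep_of_common t fun _ hh =>
    (Large.iInter (fun i => (hlarge i).large_shadow hh)
      (fun _ => analyticSet_shadow hφ _ l _) hpos).nonempty

end Condition

/-! ### Binary relations with countable sections -/

namespace Condition

open RigidSurj

variable {φ : (ℕ → ℕ) → RigidSurj × RigidSurj} {p : Condition} {u : RigidSurj} {L l : ℕ}

theorem JointlyLarge.merge {g v v' u' : RigidSurj} {n : ℕ} {z : ℕ → ℕ}
    (hlarge : JointlyLarge φ ⟨g, n, v⟩ u l z) (i : Fin n) (hv : AgreeBelow n v' v)
    (hvi : v' n = v i) (hu : AgreeBelow n u' u) (hui : u' n = u i) :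
    JointlyLarge φ ⟨g, n + 1, v'⟩ u' l z := by
  intro h hh
  obtain ⟨f, hf, y, hy, hfst, hsnd⟩ := hlarge (RigidSurj.merge i * h)
    (mul_mem (merge_mem_fixing i) (fixing_antitone n.le_succ hh))
  exact ⟨f, cube_merge_subset (g := h * g) i hv hvi hf, y, hy, hfst,
    cube_merge_subset (g := h * g) i hu hui hsnd⟩

/-- Stage `L` in the construction of a perfect set of second coordinates of pairs in `range φ` that
share their first coordinate: one condition for the first coordinate and, for each `c ∈ 2^L`, a stem
for the second coordinate and a parameter. -/
structure SplittingStage (φ : (ℕ → ℕ) → RigidSurj × RigidSurj) (p : Condition) (u : RigidSurj)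
    (L : ℕ) where
  cond : Condition
  stems : (Fin L → Bool) → RigidSurj
  params : (Fin L → Bool) → ℕ → ℕ
  cond_le : cond ≤ p
  agreeBelow_stems : ∀ c, AgreeBelow p.len (stems c) u
  jointlyLarge : ∀ c, JointlyLarge φ cond (stems c) L (params c)

namespace SplittingStage

/-- The stage `x'` refines `x`, and the letter following the stem of index `c` in `x` becomes
identified with the letter `i (c L)` in `x'`. -/
def IsSuccessor (i : Bool → Fin p.len) (x : SplittingStage φ p u L)
    (x' : SplittingStage φ p u (L + 1)) : Prop :=
  IsStep L x.cond x'.cond ∧ ∀ c : Fin (L + 1) → Bool,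
    AgreeBelow x.cond.len (x'.stems c) (x.stems (Fin.init c)) ∧
      x'.stems c x.cond.len = u (i (c (Fin.last L))) ∧
        AgreeBelow L (x'.params c) (x.params (Fin.init c))

theorem exists_isSuccessor (hφ : Continuous φ) {i : Bool → Fin p.len}
    (hi : ∀ b b', p.stem (i b) = p.stem (i b')) (x : SplittingStage φ p u L) :
    ∃ x', IsSuccessor i x x' := by
  let n := x.cond.len
  let j (b : Bool) : Fin n := Fin.castLE x.cond_le.1 (i b)
  let u₁ (c : Fin (L + 1) → Bool) : RigidSurj :=
    x.stems (Fin.init c) * RigidSurj.merge (j (c (Fin.last L)))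
  have hu₁ (c) : AgreeBelow n (u₁ c) (x.stems (Fin.init c)) := agreeBelow_mul (merge_mem_fixing _) _
  have hu₁n (c) : u₁ c n = x.stems (Fin.init c) (j (c (Fin.last L))) :=
    congrArg _ (merge_self _)
  let v₁ : RigidSurj := x.cond.stem * RigidSurj.merge (j false)
  have hv₁ : AgreeBelow n v₁ x.cond.stem := agreeBelow_mul (merge_mem_fixing _) _
  have hv₁n (b) : v₁ n = x.cond.stem (j b) := by
    have hstem (b) : x.cond.stem (j b) = p.stem (i b) := x.cond_le.2.1 _ (i b).2
    rw [hstem, hi b false, ← hstem]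
    exact congrArg x.cond.stem (merge_self _)
  obtain ⟨q, hq, u', z', hnear⟩ := JointlyLarge.exists_isStep hφ
    (p := ⟨x.cond.base, n + 1, v₁⟩) (us := u₁)
    (fun c => (x.jointlyLarge (Fin.init c)).merge (j (c (Fin.last L))) hv₁ (hv₁n _) (hu₁ c)
      (hu₁n c)) n.succ_pos L
  have hsplit : (⟨x.cond.base, n + 1, v₁⟩ : Condition) ≤ x.cond :=
    ⟨n.le_succ, hv₁, 1, one_mem _, rfl⟩
  have hu' (c) : AgreeBelow n (u' c) (x.stems (Fin.init c)) :=
    ((hnear c).1.mono n.le_succ).trans (hu₁ c)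
  exact ⟨⟨q, u', z', hq.1.trans (hsplit.trans x.cond_le),
    fun c => ((hu' c).mono x.cond_le.1).trans (x.agreeBelow_stems _), fun c => (hnear c).2.2⟩,
    hq.of_le hsplit, fun c => ⟨hu' c, ((hnear c).1 n n.lt_succ_self).trans
      ((hu₁n c).trans (x.agreeBelow_stems _ _ (i _).2)), (hnear c).2.1⟩⟩

variable {xs : ∀ t, SplittingStage φ p u t} {i : Bool → Fin p.len}

theorem exists_branch (hφ : Continuous φ) (hxs : ∀ t, IsSuccessor i (xs t) (xs (t + 1)))
    {f : RigidSurj} (hf : ∀ t, f ∈ (xs t).cond.cube) (w : ℕ → Bool) :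
    ∃ f', (f, f') ∈ range φ ∧
      ∀ t, f' ∈ ((xs t).cond.withStem ((xs t).stems fun k => w k)).cube := by
  have hstep (t : ℕ) : IsStep t (xs t).cond (xs (t + 1)).cond := (hxs t).1
  obtain ⟨Z, hZ⟩ := AgreeBelow.exists_limit (m := id) monotone_id (fun _ => le_rfl)
    (f := fun t => (xs t).params fun k => w k) fun t => ((hxs t).2 fun k => w k).2.2
  have happrox (t : ℕ) : ∃ y, AgreeBelow t y Z ∧ (φ y).1 ∈ (xs t).cond.cube ∧
      (φ y).2 ∈ ((xs t).cond.withStem ((xs t).stems fun k => w k)).cube := by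
    obtain ⟨_, hfst, y, hy, rfl, hsnd⟩ := (xs t).jointlyLarge (fun k => w k) 1 (one_mem _)
    exact ⟨y, AgreeBelow.trans hy (hZ t).symm, hfst, hsnd⟩
  choose y hy hfst hsnd using happrox
  have hanti : Antitone fun t => (xs t).cond.withStem ((xs t).stems fun k => w k) :=
    antitone_nat_of_succ_le fun t =>
      ⟨(hstep t).1.1, ((hxs t).2 fun k => w k).1, (hstep t).1.2.2⟩
  exact ⟨(φ Z).2, ⟨Z, Prod.ext
    (apply_limit_eq (α := fun y => (φ y).1) hφ.fst hy (le_len_of_isStep hstep) hf hfst) rfl⟩,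
    apply_limit_mem_cube (α := fun y => (φ y).2) hφ.snd hy hanti hsnd⟩

end SplittingStage

theorem not_jointlyLarge (hφ : Continuous φ) (hcount : ∀ f, {f' | (f, f') ∈ range φ}.Countable)
    {x x' : ℕ} (hx : x < p.len) (hx' : x' < p.len) (hp : p.stem x = p.stem x') (hu : u x ≠ u x')
    (z : ℕ → ℕ) : ¬JointlyLarge φ p u 0 z := by
  intro hlarge
  let i (b : Bool) : Fin p.len := if b then ⟨x, hx⟩ else ⟨x', hx'⟩
  have hi : ∀ b b', p.stem (i b) = p.stem (i b') := by simp [i, hp]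
  have hui : Function.Injective fun b => u (i b) := by
    simp [Function.Injective, i, hu, hu.symm]
  obtain ⟨xs, -, hxs⟩ := exists_seq_of_forall_exists (X := SplittingStage φ p u)
    (fun _ => SplittingStage.IsSuccessor i)
    ⟨p, fun _ => u, fun _ => z, le_rfl, fun _ => .refl _ _, fun _ => hlarge⟩
    fun _ => SplittingStage.exists_isSuccessor hφ hi
  obtain ⟨f, hf⟩ := exists_forall_mem_cube fun t => (hxs t).1
  choose F hF hcube using SplittingStage.exists_branch hφ hxs hf
  have hFw (w : ℕ → Bool) (t : ℕ) :
      F w ((xs (t + 1)).cond.base.first (xs t).cond.len) = u (i (w t)) :=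
    ((mem_cube_iff.1 (hcube w (t + 1))).2 _ (hxs t).1.2.1).trans ((hxs t).2 fun k => w k).2.1
  have hinj : Function.Injective F := fun w w' hww => funext fun t =>
    hui ((hFw w t).symm.trans (hww ▸ hFw w' t))
  have huniv : F ⁻¹' {f' | (f, f') ∈ range φ} = univ := eq_univ_of_forall hF
  have huncountable : Uncountable (ℕ → Bool) := by
    simpa [← Cardinal.aleph0_lt_mk_iff] using Cardinal.cantor Cardinal.aleph0
  exact huncountable.not_countable (countable_univ_iff.1 (huniv ▸ (hcount f).preimage hinj))

section Separation

variable {R : Set (RigidSurj × RigidSurj)}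

theorem exists_thin_prod_disjoint (hR : AnalyticSet R) (hcount : ∀ f, {f' | (f, f') ∈ R}.Countable)
    {x x' : ℕ} (hx : x < p.len) (hx' : x' < p.len) (hp : p.stem x = p.stem x') (hu : u x ≠ u x') :
    ∃ h ∈ fixing p.len, Disjoint ((p.thin h).cube ×ˢ ((p.withStem u).thin h).cube) R := by
  rw [AnalyticSet] at hR
  rcases hR with rfl | ⟨φ, hφ, rfl⟩
  · exact ⟨1, one_mem _, disjoint_empty _⟩
  · by_contra! hmeet
    refine not_jointlyLarge hφ hcount hx hx' hp hu id fun h hh => ?_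
    obtain ⟨_, ⟨hfst, hsnd⟩, y, rfl⟩ := not_disjoint_iff.1 (hmeet h hh)
    exact ⟨(φ y).1, hfst, y, fun _ hx => absurd hx (Nat.not_lt_zero _), rfl, hsnd⟩

theorem exists_thin_prod_disjoint_of_not_agreeBelow (hR : AnalyticSet R)
    (hright : ∀ f, {f' | (f, f') ∈ R}.Countable) (hleft : ∀ f, {f' | (f', f) ∈ R}.Countable)
    (hu : ¬AgreeBelow p.len p.stem u) :
    ∃ h ∈ fixing p.len, Disjoint ((p.thin h).cube ×ˢ ((p.withStem u).thin h).cube) R := by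
  have hker : ∃ x < p.len, ∃ x' < p.len, ¬(p.stem x = p.stem x' ↔ u x = u x') := by
    contrapose! hu
    exact agreeBelow_of_ker_eq hu
  obtain ⟨x, hx, x', hx', hne⟩ := hker
  by_cases hp : p.stem x = p.stem x'
  · exact exists_thin_prod_disjoint hR hright hx hx' hp fun he => hne (iff_of_true hp he)
  · have hu : u x = u x' := by
      by_contra he
      exact hne (iff_of_false hp he)
    have hswap : AnalyticSet (Prod.swap ⁻¹' R) :=
      image_swap_eq_preimage_swap ▸ hR.image_of_continuous continuous_swap
    obtain ⟨h, hh, hdisj⟩ :=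
      exists_thin_prod_disjoint (p := p.withStem u) (u := p.stem) hswap hleft hx hx' hu hp
    exact ⟨h, hh, disjoint_left.2 fun f hf hfR =>
      (disjoint_left.1 hdisj (show f.swap ∈ _ from ⟨hf.2, hf.1⟩)) hfR⟩

theorem isDenseOpen_prod_disjoint (hR : AnalyticSet R)
    (hright : ∀ f, {f' | (f, f') ∈ R}.Countable) (hleft : ∀ f, {f' | (f', f) ∈ R}.Countable)
    (m : ℕ) (v v' : RigidSurj) :
    IsDenseOpen m {g | AgreeBelow m v v' ∨ Disjoint (cube ⟨g, m, v⟩ ×ˢ cube ⟨g, m, v'⟩) R} where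
  mul_mem g hg h hh := hg.imp_right fun hdisj => hdisj.mono_left <|
    prod_mono (cube_antitone (thin_le (p := ⟨g, m, v⟩) hh))
      (cube_antitone (thin_le (p := ⟨g, m, v'⟩) hh))
  exists_mul_mem g := by
    by_cases hv : AgreeBelow m v v'
    · exact ⟨1, one_mem _, .inl hv⟩
    · obtain ⟨h, hh, hdisj⟩ :=
        exists_thin_prod_disjoint_of_not_agreeBelow (p := ⟨g, m, v⟩) hR hright hleft hv
      exact ⟨h, hh, .inr hdisj⟩

theorem exists_fixing_forall_ne_notMem (hR : AnalyticSet R)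
    (hright : ∀ f, {f' | (f, f') ∈ R}.Countable) (hleft : ∀ f, {f' | (f', f) ∈ R}.Countable)
    (n : ℕ) (g : RigidSurj) :
    ∃ h ∈ fixing n, ∀ k k' : RigidSurj, k ≠ k' → (k * (h * g), k' * (h * g)) ∉ R := by
  let D (m : ℕ) (v v' : RigidSurj) : Set RigidSurj :=
    {g | AgreeBelow m v v' ∨ Disjoint (cube ⟨g, m, v⟩ ×ˢ cube ⟨g, m, v'⟩) R}
  obtain ⟨h, hh, hmem⟩ := exists_mul_mem_of_isDenseOpen (n := n) (D := fun m => ⋂ v, ⋂ v', D m v v')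
    (fun m _ => isDenseOpen_iInter_stem
      (fun v w hvw => iInter_mono fun v' g hg =>
        hg.imp hvw.symm.trans fun hdisj => cube_congr hvw ▸ hdisj)
      fun v => isDenseOpen_iInter_stem
        (fun v' w hvw g hg => hg.imp (fun h => h.trans hvw) fun hdisj => cube_congr hvw ▸ hdisj)
        fun v' => isDenseOpen_prod_disjoint hR hright hleft m v v') g
  refine ⟨h, hh, fun k k' hne hkR => ?_⟩
  obtain ⟨x, hx⟩ : ∃ x, k x ≠ k' x := by
    by_contra! he
    exact hne (RigidSurj.ext he)
  rcases mem_iInter₂.1 (hmem (n + x + 1) (by omega)) k k' with hagree | hdisj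
  · exact hx (hagree x (by omega))
  · exact disjoint_left.1 hdisj ⟨⟨k, .refl _ _, rfl⟩, k', .refl _ _, rfl⟩ hkR

end Separation

end Condition

/-! ### Infinite partitions as rigid surjections -/

namespace Einf

open RigidSurj

variable {A B : Einf} {x y n : ℕ}

theorem infinite_leastRepresentatives (A : Einf) : {k | ∀ m, A.1 m k → k ≤ m}.Infinite := by
  have := A.2
  have hrep (q : Quotient A.1) : ∃ x, Quotient.mk A.1 x = q := q.exists_rep
  refine infinite_of_injective_forall_mem (f := fun q => Nat.find (hrep q)) (fun q q' h => ?_)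
    fun q m hm => Nat.find_min' (hrep q) ((Quotient.sound hm).trans (Nat.find_spec (hrep q)))
  rw [← Nat.find_spec (hrep q), ← Nat.find_spec (hrep q')]
  exact congrArg _ h

theorem mu_le_of_rel (h : A.1 x (A.mu n)) : A.mu n ≤ x :=
  Nat.nth_mem_of_infinite A.infinite_leastRepresentatives n x h

theorem mu_strictMono (A : Einf) : StrictMono A.mu :=
  Nat.nth_strictMono A.infinite_leastRepresentatives

theorem exists_rel_mu (A : Einf) (x : ℕ) : ∃ n, A.1 x (A.mu n) := by
  have hclass : ∃ y, A.1 x y := ⟨x, A.1.refl x⟩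
  have hleast : ∀ m, A.1 m (Nat.find hclass) → Nat.find hclass ≤ m := fun m hm =>
    Nat.find_min' hclass (A.1.trans (Nat.find_spec hclass) (A.1.symm hm))
  refine ⟨Nat.count (fun k => ∀ m, A.1 m k → k ≤ m) (Nat.find hclass), ?_⟩
  rw [mu, Nat.nth_count hleast]
  exact Nat.find_spec hclass

theorem eq_of_rel_mu {n' : ℕ} (h : A.1 x (A.mu n)) (h' : A.1 x (A.mu n')) : n = n' :=
  A.mu_strictMono.injective <| (mu_le_of_rel (A.1.trans (A.1.symm h') h)).antisymm
    (mu_le_of_rel (A.1.trans (A.1.symm h) h'))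

/-- The rigid surjection sending each point to the number of its class, where the classes are
numbered in the order of their least elements. -/
noncomputable def index (A : Einf) : RigidSurj :=
  ⟨fun x => (A.exists_rel_mu x).choose, fun n =>
    ⟨A.mu n, eq_of_rel_mu (A.exists_rel_mu _).choose_spec (A.1.refl _), fun x hx => by
      by_contra! hn
      exact (hx.trans_le (A.mu_strictMono.monotone hn)).not_ge
        (mu_le_of_rel (A.exists_rel_mu x).choose_spec)⟩⟩

theorem rel_mu_index (A : Einf) (x : ℕ) : A.1 x (A.mu (A.index x)) :=
  (A.exists_rel_mu x).choose_spec

theorem rel_mu_iff : A.1 x (A.mu n) ↔ A.index x = n :=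
  ⟨eq_of_rel_mu (A.rel_mu_index x), fun h => h ▸ A.rel_mu_index x⟩

theorem rel_iff_index_eq : A.1 x y ↔ A.index x = A.index y := by
  rw [← rel_mu_iff]
  exact ⟨fun h => A.1.trans h (A.rel_mu_index y),
    fun h => A.1.trans h (A.1.symm (A.rel_mu_index y))⟩

theorem index_injective : Function.Injective index := fun A B h =>
  Subtype.ext (Setoid.ext fun _ _ => by rw [rel_iff_index_eq, rel_iff_index_eq, h])

theorem first_index (A : Einf) (n : ℕ) : A.index.first n = A.mu n :=
  (first_le_of_le_apply (rel_mu_iff.1 (A.1.refl _)).ge).antisymm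
    (mu_le_of_rel (rel_mu_iff.2 (apply_first _ n)))

theorem toCS_eq (A : Einf) (n x : ℕ) : A.toCS n x = decide (A.index x = n) := by
  simp only [toCS, rel_mu_iff]

theorem toCS_injective : Function.Injective toCS := fun A B h =>
  index_injective <| RigidSurj.ext fun x => by
    have hx := congrFun (congrFun h (A.index x)) x
    simpa [toCS_eq, eq_comm] using hx

theorem exists_measurable_injective :
    ∃ F : Einf → (ℕ → Bool), Measurable F ∧ Function.Injective F := by
  obtain ⟨F, hF, hinj⟩ :=
    MeasurableSpace.measurable_injection_nat_bool_of_countablySeparated (ℕ → ℕ → Bool)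
  exact ⟨F ∘ toCS, hF.comp (comap_measurable toCS), hinj.comp toCS_injective⟩

/-- The partition into the fibers of a rigid surjection; this is the inverse of `Einf.index`. -/
def ofRigid (f : RigidSurj) : Einf :=
  ⟨Setoid.ker f, Infinite.of_surjective (Quotient.lift f fun _ _ h => h) fun y =>
    ⟨Quotient.mk _ (f.first y), f.apply_first y⟩⟩

theorem ofRigid_rel {f : RigidSurj} : (ofRigid f).1 x y ↔ f x = f y := Iff.rfl

@[simp]
theorem index_ofRigid (f : RigidSurj) : (ofRigid f).index = f := RigidSurj.ext fun x =>
  agreeBelow_of_ker_eq (n := x + 1)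
    (fun _ _ _ _ => by rw [← rel_iff_index_eq, ofRigid_rel]) x x.lt_succ_self

@[simp]
theorem ofRigid_index (A : Einf) : ofRigid A.index = A := index_injective (index_ofRigid _)

theorem measurable_ofRigid : Measurable ofRigid := by
  refine measurable_comap_iff.2 <|
    measurable_pi_lambda _ fun n => measurable_pi_lambda _ fun x => ?_
  simp only [Function.comp_apply, toCS_eq, index_ofRigid]
  exact (measurable_from_nat (f := fun y => decide (y = n))).comp
    ((measurable_pi_apply x).comp measurable_subtype_coe)

theorem exists_index_eq_mul {C : Einf} {f : RigidSurj} (hC : Coarsen C (ofRigid f)) :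
    ∃ k, C.index = k * f := by
  have hcomp : (C.index ∘ f.first) ∘ f = C.index := funext fun x =>
    rel_iff_index_eq.1 (hC _ _ (ofRigid_rel.2 (f.apply_first _)))
  exact ⟨⟨_, isRigid_of_comp f (hcomp ▸ C.index.2)⟩, Subtype.ext hcomp.symm⟩

theorem rn_eq_of_mu_eq (hmu : B.mu n = A.mu n)
    (hrel : ∀ x < A.mu n, ∀ y < A.mu n, (B.1 x y ↔ A.1 x y)) : B.rn n = A.rn n := by
  rw [rn, rn, hmu]
  congr 1
  exact Setoid.ext fun i j => hrel i i.2 j j.2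

theorem rn_ofRigid_mul_index {h : RigidSurj} (hh : h ∈ fixing (n + 1)) :
    (ofRigid (h * A.index)).rn n = A.rn n := by
  have hindex : ∀ x < A.mu n, (h * A.index) x = A.index x := fun x hx =>
    hh _ ((apply_lt_of_lt_first (hx.trans_eq (A.first_index n).symm)).trans n.lt_succ_self)
  refine rn_eq_of_mu_eq ?_ fun x hx y hy => ?_
  · rw [← first_index, index_ofRigid, first_mul, first_of_mem_fixing hh n.lt_succ_self, first_index]
  · rw [ofRigid_rel, hindex x hx, hindex y hy, rel_iff_index_eq]

theorem ofRigid_mul_index_mem_cube {s : FinApprox} {h : RigidSurj} (hB : Coarsen B A)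
    (hs : B.rn n = s) (hh : h ∈ fixing (n + 1)) : ofRigid (h * B.index) ∈ cube s A :=
  ⟨⟨n, (rn_ofRigid_mul_index hh).trans hs⟩, fun _ _ hxy =>
    congrArg h (rel_iff_index_eq.1 (hB _ _ hxy))⟩

theorem exists_mem_cube_forall_rel_imp_eq {E : Einf → Einf → Prop}
    (hBorel : MeasurableSet {p : Einf × Einf | E p.1 p.2})
    (hright : ∀ A, {A' | E A A'}.Countable) (hleft : ∀ A, {A' | E A' A}.Countable)
    {s : FinApprox} (hne : (cube s A).Nonempty) :
    ∃ B ∈ cube s A, ∀ C C' : Einf, Coarsen C B → Coarsen C' B → E C C' → C = C' := by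
  obtain ⟨B, ⟨n, hs⟩, hBA⟩ := hne
  have hanalytic : AnalyticSet {p : RigidSurj × RigidSurj | E (ofRigid p.1) (ofRigid p.2)} :=
    analyticSet_of_measurableSet (measurable_ofRigid.prodMap measurable_ofRigid hBorel)
  have hinj : Function.Injective ofRigid := Function.LeftInverse.injective index_ofRigid
  obtain ⟨h, hh, hsep⟩ := Condition.exists_fixing_forall_ne_notMem hanalytic
    (fun f => (hright (ofRigid f)).preimage hinj) (fun f => (hleft (ofRigid f)).preimage hinj)
    (n + 1) B.index
  refine ⟨ofRigid (h * B.index), ofRigid_mul_index_mem_cube hBA hs hh, fun C C' hC hC' hE => ?_⟩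
  obtain ⟨k, hk⟩ := exists_index_eq_mul hC
  obtain ⟨k', hk'⟩ := exists_index_eq_mul hC'
  by_cases hkk : k = k'
  · exact index_injective (by rw [hk, hk', hkk])
  · refine absurd ?_ (hsep k k' hkk)
    rw [← hk, ← hk', mem_ofPred_eq, ofRigid_index, ofRigid_index]
    exact hE

end Einf

theorem einf_CBER_equality_below_some_member_of_every_cube_general
    (E : Einf → Einf → Prop) (hRefl : ∀ A, E A A)
    (hBorel : MeasurableSet {p : Einf × Einf | E p.1 p.2})
    (hright : ∀ A, {A' | E A A'}.Countable) (hleft : ∀ A, {A' | E A' A}.Countable)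
    (s : FinApprox) (A : Einf) (hne : (cube s A).Nonempty) :
    ∃ B ∈ cube s A,
      (∀ C C' : Einf, Coarsen C B → Coarsen C' B → (E C C' ↔ C = C')) ∧
      ∃ f : ↥(cube s B) → (ℕ → Bool), Measurable f ∧
        ∀ C C' : ↥(cube s B), (E C.1 C'.1 ↔ f C = f C') := by
  obtain ⟨B, hB, hEB⟩ := exists_mem_cube_forall_rel_imp_eq hBorel hright hleft hne
  have hiff (C C' : Einf) (hC : Coarsen C B) (hC' : Coarsen C' B) : E C C' ↔ C = C' :=
    ⟨hEB C C' hC hC', fun h => h ▸ hRefl C⟩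
  obtain ⟨F, hF, hinj⟩ := exists_measurable_injective
  exact ⟨B, hB, hiff, fun C => F C, hF.comp measurable_subtype_coe, fun C C' =>
    (hiff C C' C.2.2 C'.2.2).trans hinj.eq_iff.symm⟩

/-- For a CBER `E` on `𝓔_∞` and every nonempty cube `[s,A]`, there is `B ∈ [s,A]` below which
`E` is equality; in particular `E` restricted to `[s,B]` Borel reduces to equality on `2^ℕ`. -/
theorem einf_CBER_equality_below_some_member_of_every_cube
    (E : Einf → Einf → Prop) (hEquiv : Equivalence E)
    (hBorel : MeasurableSet {p : Einf × Einf | E p.1 p.2})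
    (hCount : ∀ A : Einf, {A' : Einf | E A A'}.Countable)
    (s : FinApprox) (A : Einf) (hne : (cube s A).Nonempty) :
    ∃ B ∈ cube s A,
      (∀ C C' : Einf, Coarsen C B → Coarsen C' B → (E C C' ↔ C = C')) ∧
      ∃ f : ↥(cube s B) → (ℕ → Bool), Measurable f ∧
        ∀ C C' : ↥(cube s B), (E C.1 C'.1 ↔ f C = f C') :=
  einf_CBER_equality_below_some_member_of_every_cube_general E hEquiv.refl hBorel hCount
    (fun A => (hCount A).mono fun _ => hEquiv.symm) s A hne
end
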